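/- arXiv:1606.05811 — 10 statements merged into one kernel-verified Lean document; each statement's English description precedes it below -/
import Mathlib

section
/- For every rational polyhedron Q ⊆ ℝⁿ there exists a natural number t such that the t-th iterated split closure of Q equals the integer hull of Q, i.e. SC^t(Q) = conv(Q ∩ ℤⁿ). (Equivalently, every rational polyhedron has finite split rank.) -/
open Set


/-- A rational polyhedron in `ℝⁿ`: the solution set of a finite system of linear
inequalities with rational data. -/
def IsRationalPolyhedron {n : ℕ} (Q : Set (Fin n → ℝ)) : Prop :=
  ∃ (m : ℕ) (A : Matrix (Fin m) (Fin n) ℚ) (b : Fin m → ℚ),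
    Q = {x | ∀ i, ∑ j, (A i j : ℝ) * x j ≤ (b i : ℝ)}

/-- The split closure of a set `Q ⊆ ℝⁿ`. -/
def splitClosure {n : ℕ} (Q : Set (Fin n → ℝ)) : Set (Fin n → ℝ) :=
  ⋂ c : Fin n → ℤ,
    convexHull ℝ {x ∈ Q | ∃ z : ℤ, ∑ i, (c i : ℝ) * x i = (z : ℝ)}

/-- The integer hull of a set `Q ⊆ ℝⁿ`: the convex hull of its integral points. -/
def integerHull {n : ℕ} (Q : Set (Fin n → ℝ)) : Set (Fin n → ℝ) :=
  convexHull ℝ {x ∈ Q | ∀ i, ∃ z : ℤ, x i = (z : ℝ)}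


namespace SplitRank

theorem exists_between_fin {K : Type*} [Field K] [LinearOrder K] [IsStrictOrderedRing K]
    {α β : Type} [Fintype α] [Fintype β] (u : α → K) (v : β → K)
    (h : ∀ a b, u a ≤ v b) : ∃ c, (∀ a, u a ≤ c) ∧ ∀ b, c ≤ v b := by
  classical
  rcases isEmpty_or_nonempty α with hα | hα
  · rcases isEmpty_or_nonempty β with hβ | hβ
    · exact ⟨0, fun a => (hα.false a).elim, fun b => (hβ.false b).elim⟩
    · obtain ⟨b, -, hb⟩ := Finset.exists_min_image (Finset.univ : Finset β) v Finset.univ_nonempty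
      exact ⟨v b, fun a => (hα.false a).elim, fun b' => hb b' (Finset.mem_univ _)⟩
  · obtain ⟨a, -, ha⟩ := Finset.exists_max_image (Finset.univ : Finset α) u Finset.univ_nonempty
    exact ⟨u a, fun a' => ha a' (Finset.mem_univ _), fun b => h a b⟩

/-- One step of Fourier–Motzkin elimination. -/
theorem fm_step (ι : Type) [Fintype ι] (α : ι → ℚ) :
    ∃ (κ : Type) (_ : Fintype κ) (z : κ → ι → ℚ),
      (∀ c i, 0 ≤ z c i) ∧ (∀ c, ∑ i, z c i * α i = 0) ∧
      ∀ (K : Type) [Field K] [LinearOrder K] [IsStrictOrderedRing K] (s : ι → K),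
        (∀ c, 0 ≤ ∑ i, (z c i : K) * s i) → ∃ t : K, ∀ i, (α i : K) * t ≤ s i := by
  classical
  refine ⟨{i // α i = 0} ⊕ ({i // 0 < α i} × {j // α j < 0}), inferInstance,
    Sum.elim (fun i => Pi.single i.1 1)
      (fun p => Pi.single p.1.1 (α p.1.1)⁻¹ + Pi.single p.2.1 (-(α p.2.1)⁻¹)), ?_, ?_, ?_⟩
  · rintro (⟨i, hi⟩ | ⟨⟨i, hi⟩, ⟨j, hj⟩⟩) k
    · simp only [Sum.elim_inl, Pi.single_apply]
      split_ifs <;> norm_num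
    · simp only [Sum.elim_inr, Pi.add_apply, Pi.single_apply]
      have h1 : 0 ≤ (α i)⁻¹ := inv_nonneg.2 hi.le
      have h2 : 0 ≤ -(α j)⁻¹ := by have := inv_nonpos.2 hj.le; linarith
      split_ifs <;> linarith
  · rintro (⟨i, hi⟩ | ⟨⟨i, hi⟩, ⟨j, hj⟩⟩)
    · simp [Pi.single_apply, hi]
    · simp [Pi.single_apply, add_mul, Finset.sum_add_distrib, hi.ne', hj.ne]
  · intro K _ _ _ s hs
    have h0 : ∀ i, α i = 0 → 0 ≤ s i := by
      intro i hi
      have := hs (Sum.inl ⟨i, hi⟩)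
      simpa [Pi.single_apply, apply_ite (Rat.cast : ℚ → K)] using this
    have h1 : ∀ (j : {j // α j < 0}) (i : {i // 0 < α i}),
        s j.1 / (α j.1 : K) ≤ s i.1 / (α i.1 : K) := by
      rintro ⟨j, hj⟩ ⟨i, hi⟩
      have := hs (Sum.inr ⟨⟨i, hi⟩, ⟨j, hj⟩⟩)
      simp [Pi.single_apply, add_mul, Finset.sum_add_distrib,
        apply_ite (Rat.cast : ℚ → K)] at this
      simp only [div_eq_inv_mul]
      linarith
    obtain ⟨t, ht1, ht2⟩ := exists_between_fin _ _ h1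
    refine ⟨t, fun i => ?_⟩
    rcases lt_trichotomy (α i) 0 with h | h | h
    · have hK : (α i : K) < 0 := by exact_mod_cast h
      have := ht1 ⟨i, h⟩
      rw [div_le_iff_of_neg hK] at this
      linarith
    · simpa [h] using h0 i h
    · have hK : (0 : K) < (α i : K) := by exact_mod_cast h
      have := ht2 ⟨i, h⟩
      rw [le_div_iff₀ hK] at this
      linarith

/-- Uniform Farkas lemma. -/
theorem uf_fin : ∀ (k : ℕ) (ι : Type) [Fintype ι] (M : ι → Fin k → ℚ),
    ∃ (κ : Type) (_ : Fintype κ) (y : κ → ι → ℚ),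
      (∀ c i, 0 ≤ y c i) ∧ (∀ c j, ∑ i, y c i * M i j = 0) ∧
      ∀ (K : Type) [Field K] [LinearOrder K] [IsStrictOrderedRing K] (r : ι → K),
        (∀ c, 0 ≤ ∑ i, (y c i : K) * r i) →
          ∃ l : Fin k → K, ∀ i, ∑ j, (M i j : K) * l j ≤ r i := by
  classical
  intro k
  induction k with
  | zero =>
    intro ι _ M
    refine ⟨ι, inferInstance, fun i => Pi.single i 1, ?_, ?_, ?_⟩
    · intro c i
      simp only [Pi.single_apply]
      split_ifs <;> norm_num
    · intro c j
      exact j.elim0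
    · intro K _ _ _ r hr
      refine ⟨0, fun i => ?_⟩
      have := hr i
      simpa [Pi.single_apply, apply_ite (Rat.cast : ℚ → K)] using this
  | succ k ih =>
    intro ι _ M
    obtain ⟨Z, _, z, hz0, hzα, hz⟩ := fm_step ι (fun i => M i 0)
    obtain ⟨κ, _, y, hy0, hyM, hy⟩ := ih Z (fun c l => ∑ i, z c i * M i l.succ)
    refine ⟨κ, inferInstance, fun c i => ∑ e, y c e * z e i, ?_, ?_, ?_⟩
    · intro c i
      exact Finset.sum_nonneg fun e _ => mul_nonneg (hy0 c e) (hz0 e i)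
    · have key : ∀ c j, ∑ i, (∑ e, y c e * z e i) * M i j
          = ∑ e, y c e * ∑ i, z e i * M i j := by
        intro c j
        simp only [Finset.sum_mul, Finset.mul_sum]
        rw [Finset.sum_comm]
        simp only [mul_assoc]
      intro c j
      rw [key]
      refine Fin.cases ?_ (fun l => ?_) j
      · simp [hzα]
      · exact hyM c l
    · intro K _ _ _ r hr
      obtain ⟨μ, hμ⟩ := hy K (fun e => ∑ i, (z e i : K) * r i) (by
        intro c
        have := hr c
        push_cast at this
        simp only [Finset.sum_mul] at this
        rw [Finset.sum_comm] at this
        simpa only [Finset.mul_sum, mul_assoc] using this)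
      obtain ⟨t, ht⟩ := hz K (fun i => r i - ∑ l, (M i (Fin.succ l) : K) * μ l) (by
        intro e
        have := hμ e
        push_cast at this
        simp only [Finset.sum_mul] at this
        rw [Finset.sum_comm] at this
        simp only [mul_sub, Finset.sum_sub_distrib, Finset.mul_sum]
        simp only [mul_assoc] at this
        linarith)
      refine ⟨Fin.cons t μ, fun i => ?_⟩
      rw [Fin.sum_univ_succ]
      simp only [Fin.cons_zero, Fin.cons_succ]
      have := ht i
      linarith

theorem uf (τ ι : Type) [Fintype τ] [Fintype ι] (M : ι → τ → ℚ) :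
    ∃ (κ : Type) (_ : Fintype κ) (y : κ → ι → ℚ),
      (∀ c i, 0 ≤ y c i) ∧ (∀ c j, ∑ i, y c i * M i j = 0) ∧
      ∀ (K : Type) [Field K] [LinearOrder K] [IsStrictOrderedRing K] (r : ι → K),
        (∀ c, 0 ≤ ∑ i, (y c i : K) * r i) →
          ∃ l : τ → K, ∀ i, ∑ j, (M i j : K) * l j ≤ r i := by
  let e := Fintype.equivFin τ
  obtain ⟨κ, hκ, y, h1, h2, h3⟩ := uf_fin _ ι (fun i j => M i (e.symm j))
  refine ⟨κ, hκ, y, h1, fun c j => by simpa using h2 c (e j), ?_⟩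
  intro K _ _ _ r hr
  obtain ⟨l, hl⟩ := h3 K r hr
  refine ⟨fun j => l (e j), fun i => ?_⟩
  rw [← Equiv.sum_comp e.symm]
  simpa using hl i

/-- Weyl: a finitely generated rational cone is given by finitely many rational inequalities. -/
theorem weyl {τ ι : Type} [Fintype τ] [Fintype ι] (g : ι → τ → ℚ) :
    ∃ (κ : Type) (_ : Fintype κ) (h : κ → τ → ℚ),
      (∀ c i, ∑ j, h c j * g i j ≤ 0) ∧
      ∀ x : τ → ℝ, (∀ c, ∑ j, (h c j : ℝ) * x j ≤ 0) →
        ∃ l : ι → ℝ, (∀ i, 0 ≤ l i) ∧ ∀ j, x j = ∑ i, l i * (g i j : ℝ) := by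
  classical
  obtain ⟨κ, hκ, y, h1, h2, h3⟩ := uf ι (ι ⊕ (τ ⊕ τ))
    (Sum.elim (fun i => -Pi.single i 1) (Sum.elim (fun j i => g i j) (fun j i => - g i j)))
  refine ⟨κ, hκ, fun c j => y c (.inr (.inr j)) - y c (.inr (.inl j)), ?_, ?_⟩
  · intro c i
    have := h2 c i
    simp [Fintype.sum_sum_type, Pi.single_apply] at this
    have h4 := h1 c (.inl i)
    simp only [sub_mul, Finset.sum_sub_distrib]
    linarith
  · intro x hx
    obtain ⟨l, hl⟩ := h3 ℝ (Sum.elim (fun _ => 0) (Sum.elim x (fun j => - x j))) (by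
      intro c
      have := hx c
      simp only [Rat.cast_sub, sub_mul, Finset.sum_sub_distrib] at this
      simp [Fintype.sum_sum_type]
      linarith)
    refine ⟨l, fun i => ?_, fun j => ?_⟩
    · have := hl (.inl i)
      simpa [Pi.single_apply, apply_ite (Rat.cast : ℚ → ℝ)] using this
    · have e1 := hl (.inr (.inl j))
      have e2 := hl (.inr (.inr j))
      simp at e1 e2
      simp only [mul_comm (l _)]
      linarith

theorem exists_scale {τ : Type} [Fintype τ] (h : τ → ℚ) :
    ∃ (N : ℕ) (H : τ → ℤ), 0 < N ∧ ∀ j, (H j : ℚ) = N * h j := by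
  classical
  refine ⟨∏ j, (h j).den, fun j => (∏ i ∈ Finset.univ.erase j, (h i).den : ℕ) * (h j).num,
    Finset.prod_pos fun j _ => (h j).den_pos, fun j => ?_⟩
  rw [← Finset.mul_prod_erase _ _ (Finset.mem_univ j)]
  have := Rat.den_mul_eq_num (h j)
  push_cast
  rw [← this]
  ring

/-- Minkowski: a rational polyhedral cone is generated by finitely many integral vectors. -/
theorem minkowski {τ ι : Type} [Fintype τ] [Fintype ι] (A : ι → τ → ℤ) :
    ∃ (κ : Type) (_ : Fintype κ) (h : κ → τ → ℤ),
      (∀ c i, ∑ j, A i j * h c j ≤ 0) ∧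
      ∀ x : τ → ℝ, (∀ i, ∑ j, (A i j : ℝ) * x j ≤ 0) →
        ∃ l : κ → ℝ, (∀ c, 0 ≤ l c) ∧ ∀ j, x j = ∑ c, l c * (h c j : ℝ) := by
  obtain ⟨κ, hκ, h, h1, h2⟩ := weyl (fun i j => (A i j : ℚ))
  obtain ⟨κ', hκ', g, g1, g2⟩ := weyl h
  choose N H hN hH using fun c => exists_scale (h c)
  refine ⟨κ, hκ, H, ?_, ?_⟩
  · intro c i
    have : ((∑ j, A i j * H c j : ℤ) : ℚ) ≤ 0 := by
      push_cast
      have e : ∑ j, (A i j : ℚ) * H c j = N c * ∑ j, h c j * A i j := by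
        rw [Finset.mul_sum]
        refine Finset.sum_congr rfl fun j _ => ?_
        rw [hH]; ring
      rw [e]
      exact mul_nonpos_of_nonneg_of_nonpos (Nat.cast_nonneg _) (h1 c i)
    exact_mod_cast this
  · intro x hx
    obtain ⟨l, l0, hl⟩ := g2 x (by
      intro c
      obtain ⟨l, l0, hl⟩ := h2 (fun j => (g c j : ℝ)) (by
        intro c'
        have := g1 c c'
        simp only [mul_comm (g _ _)] at this
        exact_mod_cast this)
      have e : ∑ j, (g c j : ℝ) * x j = ∑ i, l i * ∑ j, (A i j : ℝ) * x j := by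
        simp only [hl, Finset.sum_mul, Finset.mul_sum]
        rw [Finset.sum_comm]
        simp [mul_assoc]
      rw [e]
      exact Finset.sum_nonpos fun i _ => mul_nonpos_of_nonneg_of_nonpos (l0 i) (hx i))
    refine ⟨fun c => l c / N c, fun c => div_nonneg (l0 c) (Nat.cast_nonneg _), fun j => ?_⟩
    rw [hl j]
    refine Finset.sum_congr rfl fun c _ => ?_
    have hHr : (H c j : ℝ) = N c * h c j := by exact_mod_cast hH c j
    have : (N c : ℝ) ≠ 0 := by exact_mod_cast (hN c).ne'
    rw [hHr]
    field_simp

/-- Integer Farkas lemma. -/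
theorem int_farkas {τ ι : Type} [Fintype τ] [Fintype ι] (E : ι → τ → ℤ) (f : ι → ℤ)
    (hno : ¬ ∃ x : τ → ℤ, ∀ i, ∑ j, E i j * x j = f i) :
    ∃ (y : ι → ℚ) (c : τ → ℤ), (∀ j, ∑ i, y i * E i j = c j) ∧
      ¬ ∃ z : ℤ, ∑ i, y i * f i = z := by
  classical
  let L : Submodule ℤ (ι → ℚ) := Submodule.span ℤ (Set.range fun j : τ => fun i => (E i j : ℚ))
  let F : ι → ℚ := fun i => f i
  have hF : F ∉ L := by
    intro hF
    obtain ⟨x, hx⟩ := (Submodule.mem_span_range_iff_exists_fun ℤ).1 hF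
    refine hno ⟨x, fun i => ?_⟩
    have := congrFun hx i
    simp [F] at this
    simp only [mul_comm (E _ _)]
    exact_mod_cast this
  let L' : Submodule ℤ (ι → ℚ) := L ⊔ Submodule.span ℤ {F}
  have hfg : L'.FG := (Submodule.fg_span (Set.finite_range _)).sup
    (Submodule.fg_span (Set.finite_singleton _))
  have : Module.Finite ℤ L' := Module.Finite.iff_fg.2 hfg
  have hFL' : F ∈ L' := Submodule.mem_sup_right (Submodule.mem_span_singleton_self F)
  let N : Submodule ℤ L' := L.comap L'.subtype
  have hne : N.mkQ ⟨F, hFL'⟩ ≠ 0 := by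
    intro h
    rw [Submodule.mkQ_apply, Submodule.Quotient.mk_eq_zero] at h
    exact hF h
  obtain ⟨φ, hφ⟩ := CharacterModule.exists_character_apply_ne_zero_of_ne_zero hne
  let π : ℚ →ₗ[ℤ] AddCircle (1 : ℚ) :=
    (QuotientAddGroup.mk' (AddSubgroup.zmultiples (1 : ℚ))).toIntLinearMap
  have hπ : Function.Surjective π := QuotientAddGroup.mk'_surjective _
  let ψ : L' →ₗ[ℤ] AddCircle (1 : ℚ) := AddMonoidHom.toIntLinearMap
    (AddMonoidHom.comp (show (L' ⧸ N) →+ AddCircle (1 : ℚ) from φ) N.mkQ.toAddMonoidHom)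
  obtain ⟨g, hg⟩ := Module.projective_lifting_property π ψ hπ
  obtain ⟨G, hG⟩ := (Module.Baer.of_divisible ℚ).extension_property L'.subtype
    L'.injective_subtype g
  have hGL : ∀ v (hv : v ∈ L'), ((G v : ℚ) : AddCircle (1 : ℚ)) = φ (N.mkQ ⟨v, hv⟩) := by
    intro v hv
    have e1 : G v = g ⟨v, hv⟩ := LinearMap.congr_fun hG ⟨v, hv⟩
    have e2 : π (g ⟨v, hv⟩) = ψ ⟨v, hv⟩ := LinearMap.congr_fun hg ⟨v, hv⟩
    rw [e1]
    exact e2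
  have hGE : ∀ v, G v = ∑ i, G (Pi.single i 1) * v i := by
    intro v
    have e : v = ∑ i, v i • (Pi.single i (1 : ℚ) : ι → ℚ) := by
      ext i
      simp [Finset.sum_apply, Pi.single_apply]
    conv_lhs => rw [e]
    rw [map_sum]
    refine Finset.sum_congr rfl fun i _ => ?_
    have := map_rat_smul G.toAddMonoidHom (v i) (Pi.single i (1 : ℚ) : ι → ℚ)
    simp at this
    rw [this, mul_comm]
  have hint : ∀ q : ℚ, ((q : ℚ) : AddCircle (1 : ℚ)) = 0 ↔ ∃ z : ℤ, q = z := by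
    intro q
    rw [AddCircle.coe_eq_zero_iff]
    simp [eq_comm]
  have hc : ∀ j, ∃ z : ℤ, ∑ i, G (Pi.single i 1) * (E i j : ℚ) = z := by
    intro j
    have hm : (fun i => (E i j : ℚ)) ∈ L := Submodule.subset_span ⟨j, rfl⟩
    rw [← hGE (fun i => (E i j : ℚ)), ← hint, hGL _ (Submodule.mem_sup_left hm)]
    have : N.mkQ ⟨_, Submodule.mem_sup_left hm⟩ = 0 := by
      rw [Submodule.mkQ_apply, Submodule.Quotient.mk_eq_zero]
      exact hm
    rw [this]
    exact map_zero (show (L' ⧸ N) →+ AddCircle (1 : ℚ) from φ)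
  choose c hc using hc
  refine ⟨fun i => G (Pi.single i 1), c, hc, ?_⟩
  rw [← hGE F, ← hint, hGL F hFL']
  exact hφ

theorem dickson {α ι : Type} [Finite ι] (S : Set α) (s : α → ι → ℕ) :
    ∃ F : Set α, F.Finite ∧ F ⊆ S ∧ ∀ x ∈ S, ∃ f ∈ F, s f ≤ s x := by
  have hfin : {t | Minimal (· ∈ Set.image s S) t}.Finite :=
    WellQuasiOrderedLE.finite_of_isAntichain (setOfPred_minimal_antichain _)
  have : Finite {t // Minimal (· ∈ Set.image s S) t} := hfin.to_subtype
  choose f hf using fun t : {t // Minimal (· ∈ Set.image s S) t} => t.2.prop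
  refine ⟨Set.range f, Set.finite_range f, ?_, ?_⟩
  · rintro _ ⟨t, rfl⟩
    exact (hf t).1
  · intro x hx
    obtain ⟨t, ht, hm⟩ := exists_minimal_le_of_wellFoundedLT (· ∈ Set.image s S) (s x) ⟨x, hx, rfl⟩
    exact ⟨f ⟨t, hm⟩, ⟨_, rfl⟩, by rw [(hf ⟨t, hm⟩).2]; exact ht⟩

/-! ### Split closure basics -/

/-- Evaluation of an integral linear functional. -/
def ev {n : ℕ} (a : Fin n → ℤ) (x : Fin n → ℝ) : ℝ := ∑ i, (a i : ℝ) * x i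

theorem ev_add {n : ℕ} (a : Fin n → ℤ) (x y : Fin n → ℝ) : ev a (x + y) = ev a x + ev a y := by
  simp [ev, mul_add, Finset.sum_add_distrib]

theorem ev_smul {n : ℕ} (a : Fin n → ℤ) (p : ℝ) (x : Fin n → ℝ) : ev a (p • x) = p * ev a x := by
  simp only [ev, Pi.smul_apply, smul_eq_mul, Finset.mul_sum]
  exact Finset.sum_congr rfl fun _ _ => by ring

theorem ev_int {n : ℕ} (a : Fin n → ℤ) (x : Fin n → ℤ) :
    ev a (fun j => (x j : ℝ)) = ((∑ j, a j * x j : ℤ) : ℝ) := by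
  simp [ev]

theorem convex_ev_le {n : ℕ} (a : Fin n → ℤ) (k : ℝ) : Convex ℝ {x | ev a x ≤ k} := by
  intro x hx y hy p q hp hq hpq
  simp only [mem_ofPred_eq, ev_add, ev_smul] at *
  have : p * k + q * k = k := by rw [← add_mul, hpq, one_mul]
  nlinarith [mul_le_mul_of_nonneg_left hx hp, mul_le_mul_of_nonneg_left hy hq]

theorem convex_ev_eq {n : ℕ} (a : Fin n → ℤ) (k : ℝ) : Convex ℝ {x | ev a x = k} := by
  intro x hx y hy p q hp hq hpq
  simp only [mem_ofPred_eq, ev_add, ev_smul] at *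
  rw [hx, hy, ← add_mul, hpq, one_mul]

theorem sc_mono {n : ℕ} : Monotone (splitClosure (n := n)) := by
  intro R R' h
  exact iInter_mono fun c => convexHull_mono fun x hx => ⟨h hx.1, hx.2⟩

theorem sc_convex {n : ℕ} (R : Set (Fin n → ℝ)) : Convex ℝ (splitClosure R) :=
  convex_iInter fun _ => convex_convexHull _ _

theorem sc_subset {n : ℕ} {R U : Set (Fin n → ℝ)} (hU : Convex ℝ U) (h : R ⊆ U) :
    splitClosure R ⊆ U := by
  intro x hx
  have := mem_iInter.1 hx 0
  exact convexHull_min (fun y hy => h hy.1) hU this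

theorem sc_iter_subset {n : ℕ} {R U : Set (Fin n → ℝ)} (hU : Convex ℝ U) (h : R ⊆ U) (t : ℕ) :
    splitClosure^[t] R ⊆ U := by
  induction t with
  | zero => exact h
  | succ t ih =>
    rw [Function.iterate_succ_apply']
    exact sc_subset hU ih

theorem sc_empty {n : ℕ} : splitClosure (∅ : Set (Fin n → ℝ)) = ∅ :=
  subset_empty_iff.1 (sc_subset convex_empty (subset_refl _))

theorem sc_face {n : ℕ} {R : Set (Fin n → ℝ)} (a : Fin n → ℤ) (k : ℝ)
    (h : R ⊆ {x | ev a x ≤ k}) :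
    splitClosure R ∩ {x | ev a x = k} ⊆ splitClosure (R ∩ {x | ev a x = k}) := by
  rintro x ⟨hx, hxk⟩
  refine mem_iInter.2 fun c => ?_
  have hx := mem_iInter.1 hx c
  set T := {x ∈ R ∩ {x | ev a x = k} | ∃ z : ℤ, ∑ i, (c i : ℝ) * x i = (z : ℝ)} with hT
  have hU : Convex ℝ {x | ev a x ≤ k ∧ (ev a x = k → x ∈ convexHull ℝ T)} := by
    intro x hx y hy p q hp hq hpq
    refine ⟨convex_ev_le a k hx.1 hy.1 hp hq hpq, fun he => ?_⟩
    rcases hp.eq_or_lt with rfl | hp'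
    · obtain rfl : q = 1 := by linarith
      simp only [zero_smul, zero_add, one_smul] at he ⊢
      exact hy.2 he
    rcases hq.eq_or_lt with rfl | hq'
    · obtain rfl : p = 1 := by linarith
      simp only [zero_smul, add_zero, one_smul] at he ⊢
      exact hx.2 he
    have h1 := hx.1
    have h2 := hy.1
    rw [ev_add, ev_smul, ev_smul] at he
    have hk : p * k + q * k = k := by rw [← add_mul, hpq, one_mul]
    have a1 := mul_le_mul_of_nonneg_left h1 hp
    have a2 := mul_le_mul_of_nonneg_left h2 hq
    have e1 : ev a x = k := mul_left_cancel₀ hp'.ne' (by linarith)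
    have e2 : ev a y = k := mul_left_cancel₀ hq'.ne' (by linarith)
    exact convex_convexHull ℝ T (hx.2 e1) (hy.2 e2) hp hq hpq
  have hs : {x ∈ R | ∃ z : ℤ, ∑ i, (c i : ℝ) * x i = (z : ℝ)} ⊆
      {x | ev a x ≤ k ∧ (ev a x = k → x ∈ convexHull ℝ T)} := fun y hy =>
    ⟨h hy.1, fun he => subset_convexHull ℝ T ⟨⟨hy.1, he⟩, hy.2⟩⟩
  exact (convexHull_min hs hU hx).2 hxk

theorem sc_iter_face {n : ℕ} {R : Set (Fin n → ℝ)} (a : Fin n → ℤ) (k : ℝ)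
    (h : R ⊆ {x | ev a x ≤ k}) (t : ℕ) :
    splitClosure^[t] R ∩ {x | ev a x = k} ⊆ splitClosure^[t] (R ∩ {x | ev a x = k}) := by
  induction t with
  | zero => exact subset_refl _
  | succ t ih =>
    rw [Function.iterate_succ_apply', Function.iterate_succ_apply']
    exact (sc_face a k (sc_iter_subset (convex_ev_le a k) h t)).trans (sc_mono ih)

theorem peel_step {n : ℕ} {Q R : Set (Fin n → ℝ)} (a : Fin n → ℤ) (k : ℤ) (hRQ : R ⊆ Q)
    (hR : R ⊆ {x | ev a x ≤ k}) (t : ℕ)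
    (ht : splitClosure^[t] (Q ∩ {x | ev a x = k}) = ∅) :
    splitClosure^[t + 1] R ⊆ {x | ev a x ≤ (k - 1 : ℤ)} := by
  have h1 : splitClosure^[t] R ∩ {x | ev a x = k} ⊆ ∅ := by
    rw [← ht]
    exact (sc_iter_face a k hR t).trans (sc_mono.iterate t (inter_subset_inter_left _ hRQ))
  have h2 := sc_iter_subset (convex_ev_le a k) hR t
  rw [Function.iterate_succ_apply']
  intro x hx
  have hx := mem_iInter.1 hx a
  refine convexHull_min ?_ (convex_ev_le a _) hx
  rintro y ⟨hy, z, hz⟩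
  have hy1 : ev a y ≤ k := h2 hy
  have hy2 : ev a y ≠ k := fun e => h1 ⟨hy, e⟩
  have hyz : ev a y = z := hz
  rw [hyz] at hy1 hy2
  simp only [mem_ofPred_eq, hyz]
  have b1 : z ≤ k := by exact_mod_cast hy1
  have b2 : z ≠ k := by exact_mod_cast hy2
  have : z ≤ k - 1 := by omega
  exact_mod_cast this

theorem peel {n : ℕ} {Q : Set (Fin n → ℝ)} (hQ : Convex ℝ Q) (a : Fin n → ℤ) (β δ : ℤ)
    (hR : Q ⊆ {x | ev a x ≤ β})
    (ht : ∀ k : ℤ, δ < k → ∃ t, splitClosure^[t] (Q ∩ {x | ev a x = k}) = ∅) :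
    ∃ t, splitClosure^[t] Q ⊆ {x | ev a x ≤ δ} := by
  have key : ∀ m : ℕ, ∃ t, splitClosure^[t] Q ⊆ {x | ev a x ≤ (max δ (β - m) : ℤ)} := by
    intro m
    induction m with
    | zero =>
      refine ⟨0, fun x hx => ?_⟩
      have := hR hx
      simp only [mem_ofPred_eq] at this ⊢
      refine this.trans ?_
      exact_mod_cast (by simp : β ≤ max δ (β - (0 : ℕ)))
    | succ m ih =>
      obtain ⟨t, h⟩ := ih
      by_cases hm : β - m ≤ δ
      · refine ⟨t, h.trans fun x hx => ?_⟩
        have e : max δ (β - m) = max δ (β - (m + 1 : ℕ)) := by push_cast; omega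
        rw [← e]; exact hx
      · obtain ⟨t', h'⟩ := ht (β - m) (by omega)
        have e : max δ (β - m) = β - m := by omega
        rw [e] at h
        refine ⟨t' + 1 + t, ?_⟩
        rw [Function.iterate_add_apply]
        refine (peel_step a (β - m) (sc_iter_subset hQ (subset_refl _) t) h t' h').trans ?_
        intro x hx
        simp only [mem_ofPred_eq] at hx ⊢
        refine hx.trans ?_
        have : β - m - 1 ≤ max δ (β - (m + 1 : ℕ)) := by push_cast; omega
        exact_mod_cast this
  obtain ⟨t, h⟩ := key (β - δ).toNat
  have e : max δ (β - (β - δ).toNat) = δ := by omega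
  rw [e] at h
  exact ⟨t, h⟩

theorem sc_iter_antitone {n : ℕ} {Q : Set (Fin n → ℝ)} (hQ : Convex ℝ Q) {s t : ℕ} (h : s ≤ t) :
    splitClosure^[t] Q ⊆ splitClosure^[s] Q := by
  obtain ⟨d, rfl⟩ := Nat.exists_eq_add_of_le h
  rw [Function.iterate_add_apply]
  exact sc_mono.iterate s (sc_iter_subset hQ (subset_refl _) d)

/-- Polyhedra given by integral systems, with the rows in `J` being equalities. -/
def poly {n : ℕ} {ι : Type} (A : ι → Fin n → ℤ) (b : ι → ℤ) (J : Finset ι) :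
    Set (Fin n → ℝ) :=
  {x | (∀ i ∈ J, ev (A i) x = b i) ∧ ∀ i, i ∉ J → ev (A i) x ≤ b i}

theorem convex_poly {n : ℕ} {ι : Type} (A : ι → Fin n → ℤ) (b : ι → ℤ) (J : Finset ι) :
    Convex ℝ (poly A b J) := by
  intro x hx y hy p q hp hq hpq
  exact ⟨fun i hi => convex_ev_eq (A i) (b i) (hx.1 i hi) (hy.1 i hi) hp hq hpq,
    fun i hi => convex_ev_le (A i) (b i) (hx.2 i hi) (hy.2 i hi) hp hq hpq⟩

theorem sum_ev {n : ℕ} {ι : Type} [Fintype ι] (A : ι → Fin n → ℤ) (y : ι → ℝ) (x : Fin n → ℝ) :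
    ∑ i, y i * ev (A i) x = ∑ j, (∑ i, y i * (A i j : ℝ)) * x j := by
  simp only [ev, Finset.mul_sum, Finset.sum_mul]
  rw [Finset.sum_comm]
  simp only [mul_assoc]

/-- Either there is a rational direction going strictly inside all inequalities, or some
inequality row is bounded below. -/
theorem motzkin {n : ℕ} {ι : Type} [Fintype ι] (A : ι → Fin n → ℤ) (b : ι → ℤ) (J : Finset ι) :
    (∃ d : Fin n → ℤ, (∀ i ∈ J, ∑ j, A i j * d j = 0) ∧ ∀ i, i ∉ J → ∑ j, A i j * d j ≤ -1) ∨
    ∃ i, i ∉ J ∧ ∃ β : ℤ, ∀ x ∈ poly A b J, (β : ℝ) < ev (A i) x := by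
  classical
  obtain ⟨κ, hκ, y, h1, h2, h3⟩ := uf (Fin n) (ι ⊕ ι)
    (Sum.elim (fun i j => (A i j : ℚ)) (fun i j => if i ∈ J then -(A i j : ℚ) else 0))
  by_cases hy : ∀ c, 0 ≤ ∑ i, y c i * (Sum.elim (fun i => if i ∈ J then 0 else -1)
      (fun _ => 0) : ι ⊕ ι → ℚ) i
  · left
    obtain ⟨l, hl⟩ := h3 ℚ _ hy
    obtain ⟨N, d, hN, hd⟩ := exists_scale l
    have hs : ∀ i, ((∑ j, A i j * d j : ℤ) : ℚ) = N * ∑ j, (A i j : ℚ) * l j := by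
      intro i
      push_cast
      rw [Finset.mul_sum]
      refine Finset.sum_congr rfl fun j _ => ?_
      rw [hd]; ring
    refine ⟨d, fun i hi => ?_, fun i hi => ?_⟩
    · have e1 := hl (.inl i)
      have e2 := hl (.inr i)
      simp [hi] at e1 e2
      have : ((∑ j, A i j * d j : ℤ) : ℚ) = 0 := by
        rw [hs, le_antisymm e1 e2, mul_zero]
      exact_mod_cast this
    · have e1 := hl (.inl i)
      simp [hi] at e1
      have hN' : (1 : ℚ) ≤ N := by exact_mod_cast hN
      have : ((∑ j, A i j * d j : ℤ) : ℚ) ≤ -1 := by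
        rw [hs]
        nlinarith
      exact_mod_cast this
  · right
    push Not at hy
    obtain ⟨c, hc⟩ := hy
    simp only [Fintype.sum_sum_type, Sum.elim_inl, Sum.elim_inr, mul_zero, Finset.sum_const_zero,
      add_zero] at hc
    obtain ⟨i, -, hi⟩ := Finset.exists_lt_of_sum_lt
      (hc.trans_le (Finset.sum_const_zero (s := (Finset.univ : Finset ι)) (M := ℚ)).ge)
    have hiJ : i ∉ J := by
      intro h
      simp [h] at hi
    simp [hiJ] at hi
    refine ⟨i, hiJ, ?_⟩
    -- coefficient of each row
    let w : ι → ℝ := fun k => (y c (.inl k) : ℝ) - if k ∈ J then (y c (.inr k) : ℝ) else 0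
    have hw : ∀ x, ∑ k, w k * ev (A k) x = 0 := by
      intro x
      rw [sum_ev]
      refine Finset.sum_eq_zero fun j _ => ?_
      have := h2 c j
      simp only [Fintype.sum_sum_type, Sum.elim_inl, Sum.elim_inr] at this
      have hr : ∑ k, w k * (A k j : ℝ) = ((∑ k, y c (.inl k) * (A k j : ℚ) +
          ∑ k, y c (.inr k) * (if k ∈ J then -(A k j : ℚ) else 0) : ℚ) : ℝ) := by
        push_cast
        rw [← Finset.sum_add_distrib]
        refine Finset.sum_congr rfl fun k _ => ?_
        simp only [w]
        split_ifs <;> push_cast <;> ring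
      rw [hr, this]
      simp
    have hwi : 0 < w i := by
      simp only [w, hiJ, if_false, sub_zero]
      exact_mod_cast hi
    obtain ⟨β, hβ⟩ := exists_int_lt (-(∑ k ∈ Finset.univ.erase i, w k * b k) / w i)
    refine ⟨β, fun x hx => hβ.trans_le ?_⟩
    rw [div_le_iff₀ hwi]
    have h0 := hw x
    rw [← Finset.add_sum_erase _ _ (Finset.mem_univ i)] at h0
    have h4 : ∑ k ∈ Finset.univ.erase i, w k * ev (A k) x ≤
        ∑ k ∈ Finset.univ.erase i, w k * b k := by
      refine Finset.sum_le_sum fun k _ => ?_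
      by_cases hk : k ∈ J
      · rw [hx.1 k hk]
      · refine mul_le_mul_of_nonneg_left (hx.2 k hk) ?_
        simp only [w, hk, if_false, sub_zero]
        exact_mod_cast h1 c _
    linarith

/-- Inductive step: a system without integral solutions, given the claim for all systems with
one more equality. -/
theorem empty_aux {n : ℕ} {ι : Type} [Fintype ι] [DecidableEq ι] (A : ι → Fin n → ℤ)
    (J : Finset ι) (b : ι → ℤ)
    (hno : ∀ x : Fin n → ℤ, (fun j => (x j : ℝ)) ∉ poly A b J)
    (ih : ∀ i, i ∉ J → ∀ k : ℤ,
      (∀ x : Fin n → ℤ, (fun j => (x j : ℝ)) ∉ poly A (Function.update b i k) (insert i J)) →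
      ∃ t, splitClosure^[t] (poly A (Function.update b i k) (insert i J)) = ∅) :
    ∃ t, splitClosure^[t] (poly A b J) = ∅ := by
  by_cases hE : ∃ x : Fin n → ℤ, ∀ i : J, ∑ j, A i j * x j = b i
  · obtain ⟨x0, hx0⟩ := hE
    rcases motzkin A b J with ⟨d, hd1, hd2⟩ | ⟨i, hi, β, hβ⟩
    · exfalso
      let N : ℤ := ∑ i, |∑ j, A i j * x0 j - b i|
      have hs : ∀ i, ∑ j, A i j * (x0 j + N * d j)
          = ∑ j, A i j * x0 j + N * ∑ j, A i j * d j := by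
        intro i
        rw [Finset.mul_sum, ← Finset.sum_add_distrib]
        exact Finset.sum_congr rfl fun j _ => by ring
      refine hno (fun j => x0 j + N * d j) ⟨fun i hi => ?_, fun i hi => ?_⟩
      · rw [ev_int, hs, hd1 i hi, hx0 ⟨i, hi⟩]
        simp
      · rw [ev_int, hs]
        have h1 : |∑ j, A i j * x0 j - b i| ≤ N :=
          Finset.single_le_sum (f := fun i => |∑ j, A i j * x0 j - b i|)
            (fun k _ => abs_nonneg _) (Finset.mem_univ i)
        have h0 : 0 ≤ N := (abs_nonneg _).trans h1
        have h2 := le_abs_self (∑ j, A i j * x0 j - b i)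
        have h3 := hd2 i hi
        have : ∑ j, A i j * x0 j + N * ∑ j, A i j * d j ≤ b i := by nlinarith
        exact_mod_cast this
    · obtain ⟨t, ht⟩ := peel (convex_poly A b J) (A i) (b i) β (fun x hx => hx.2 i hi) (by
        intro k _
        by_cases hk : k ≤ b i
        · obtain ⟨t, ht⟩ := ih i hi k (by
            intro x hx
            refine hno x ⟨fun j hj => ?_, fun j hj => ?_⟩
            · have hji : j ≠ i := fun e => hi (e ▸ hj)
              have := hx.1 j (Finset.mem_insert_of_mem hj)
              rwa [Function.update_of_ne hji] at this
            · by_cases hji : j = i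
              · subst hji
                have := hx.1 j (Finset.mem_insert_self _ _)
                rw [Function.update_self] at this
                rw [this]
                exact_mod_cast hk
              · have := hx.2 j (by simp [hji, hj])
                rwa [Function.update_of_ne hji] at this)
          refine ⟨t, subset_empty_iff.1 (ht ▸ sc_mono.iterate t ?_)⟩
          rintro x ⟨hx, hxk⟩
          refine ⟨fun j hj => ?_, fun j hj => ?_⟩
          · by_cases hji : j = i
            · subst hji
              rw [Function.update_self]
              exact hxk
            · rw [Function.update_of_ne hji]
              exact hx.1 j ((Finset.mem_insert.1 hj).resolve_left hji)
          · rw [Finset.mem_insert, not_or] at hj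
            rw [Function.update_of_ne hj.1]
            exact hx.2 j hj.2
        · refine ⟨0, subset_empty_iff.1 ?_⟩
          rintro x ⟨hx, hxk⟩
          have h1 := hx.2 i hi
          have hxk : ev (A i) x = k := hxk
          rw [hxk] at h1
          exact hk (by exact_mod_cast h1))
      refine ⟨t, subset_empty_iff.1 fun x hx => ?_⟩
      have h1 : ev (A i) x ≤ β := ht hx
      have h2 := hβ x (sc_iter_subset (convex_poly A b J) (subset_refl _) t hx)
      exact absurd h1 (not_le.2 h2)
  · obtain ⟨y, c, hc, hz⟩ := int_farkas (fun i : J => A i) (fun i : J => b i) hE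
    refine ⟨1, subset_empty_iff.1 fun x hx => ?_⟩
    have hx := mem_iInter.1 hx c
    refine convexHull_min ?_ convex_empty hx
    rintro x ⟨hxQ, z, hxz⟩
    refine hz ⟨z, ?_⟩
    have e : ∑ i : J, (y i : ℝ) * ev (A i) x = ∑ j, (c j : ℝ) * x j := by
      rw [sum_ev (fun i : J => A i) (fun i => (y i : ℝ))]
      refine Finset.sum_congr rfl fun j _ => ?_
      congr 1
      exact_mod_cast hc j
    have e2 : ∑ i : J, (y i : ℝ) * ev (A i) x = ∑ i : J, (y i : ℝ) * (b i : ℝ) :=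
      Finset.sum_congr rfl fun i _ => by rw [hxQ.1 i i.2]
    have e3 : ∑ i : J, (y i : ℝ) * (b i : ℝ) = z := by rw [← e2, e, hxz]
    exact_mod_cast e3

/-- Integral systems without integral solutions have empty iterated split closure. -/
theorem empty_rank {n : ℕ} {ι : Type} [Fintype ι] (A : ι → Fin n → ℤ) :
    ∀ (m : ℕ) (J : Finset ι) (b : ι → ℤ), Fintype.card ι ≤ J.card + m →
      (∀ x : Fin n → ℤ, (fun j => (x j : ℝ)) ∉ poly A b J) →
      ∃ t, splitClosure^[t] (poly A b J) = ∅ := by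
  classical
  intro m
  induction m with
  | zero =>
    intro J b hm hno
    exact empty_aux A J b hno (fun i hi => by
      exfalso
      have : J = Finset.univ := Finset.eq_univ_of_card J
        (le_antisymm (Finset.card_le_univ _) hm)
      exact hi (this ▸ Finset.mem_univ i))
  | succ m ih =>
    intro J b hm hno
    refine empty_aux A J b hno (fun i hi k h => ?_)
    exact ih _ _ (by rw [Finset.card_insert_of_notMem hi]; omega) h

theorem integral_system {m n : ℕ} (A : Matrix (Fin m) (Fin n) ℚ) (b : Fin m → ℚ) :
    ∃ (A' : Fin m → Fin n → ℤ) (b' : Fin m → ℤ),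
      {x : Fin n → ℝ | ∀ i, ∑ j, (A i j : ℝ) * x j ≤ (b i : ℝ)} =
        {x | ∀ i, ev (A' i) x ≤ b' i} := by
  choose N H hN hH using fun i => exists_scale (fun o : Option (Fin n) => o.elim (b i) (A i))
  refine ⟨fun i j => H i (some j), fun i => H i none, ?_⟩
  ext x
  refine forall_congr' fun i => ?_
  have e1 : ∀ j, (H i (some j) : ℝ) = N i * A i j := fun j => by exact_mod_cast hH i (some j)
  have e2 : (H i none : ℝ) = N i * b i := by exact_mod_cast hH i none
  have e3 : ev (fun j => H i (some j)) x = N i * ∑ j, (A i j : ℝ) * x j := by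
    simp only [ev, e1, Finset.mul_sum, mul_assoc]
  have hNi : (0 : ℝ) < N i := by exact_mod_cast hN i
  rw [e3, e2]
  exact (mul_le_mul_iff_right₀ hNi).symm

theorem hull_subset {n : ℕ} {Q : Set (Fin n → ℝ)} (hQ : Convex ℝ Q) (t : ℕ) :
    integerHull Q ⊆ splitClosure^[t] Q := by
  have hc : Convex ℝ (splitClosure^[t] Q) := by
    cases t with
    | zero => exact hQ
    | succ t => rw [Function.iterate_succ_apply']; exact sc_convex _
  refine convexHull_min ?_ hc
  clear hc
  induction t with
  | zero => exact fun x hx => hx.1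
  | succ t ih =>
    rw [Function.iterate_succ_apply']
    intro x hx
    refine mem_iInter.2 fun c => subset_convexHull ℝ _ ⟨ih hx, ?_⟩
    choose z hz using hx.2
    refine ⟨∑ i, c i * z i, ?_⟩
    push_cast
    simp only [hz]

theorem hull_add {n : ℕ} {ι : Type} (A : ι → Fin n → ℤ) (b : ι → ℤ) (h : Fin n → ℤ)
    (hh : ∀ i, ∑ j, A i j * h j ≤ 0) (μ : ℝ) (hμ : 0 ≤ μ) (x : Fin n → ℝ)
    (hx : x ∈ integerHull {x | ∀ i, ev (A i) x ≤ b i}) :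
    x + μ • (fun j => (h j : ℝ)) ∈ integerHull {x | ∀ i, ev (A i) x ≤ b i} := by
  set H := integerHull {x | ∀ i, ev (A i) x ≤ b i} with hH
  have hHc : Convex ℝ H := convex_convexHull _ _
  set v : Fin n → ℝ := fun j => (h j : ℝ) with hv
  have hU : Convex ℝ {x | x + μ • v ∈ H} := by
    intro x hx y hy p q hp hq hpq
    have := hHc hx hy hp hq hpq
    have e : p • x + q • y + μ • v = p • (x + μ • v) + q • (y + μ • v) := by
      rw [smul_add, smul_add, add_add_add_comm, ← add_smul, hpq, one_smul]
    simp only [mem_ofPred_eq]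
    rw [e]
    exact this
  refine convexHull_min ?_ hU hx
  intro s hs
  obtain ⟨N, hN⟩ := exists_nat_gt μ
  have hN0 : (0 : ℝ) < N := lt_of_le_of_lt hμ hN
  have hsH : s ∈ H := subset_convexHull ℝ _ hs
  have hsN : s + (N : ℝ) • v ∈ H := by
    refine subset_convexHull ℝ _ ⟨fun i => ?_, fun j => ?_⟩
    · rw [ev_add, ev_smul, ev_int]
      have h1 : ((∑ j, A i j * h j : ℤ) : ℝ) ≤ 0 := by exact_mod_cast hh i
      have := hs.1 i
      nlinarith
    · obtain ⟨z, hz⟩ := hs.2 j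
      refine ⟨z + N * h j, ?_⟩
      simp [hz, hv]
  have := hHc hsH hsN (a := 1 - μ / N) (b := μ / N)
    (by rw [sub_nonneg, div_le_one hN0]; exact hN.le) (by positivity) (by ring)
  have e : (1 - μ / N) • s + (μ / N) • (s + (N : ℝ) • v) = s + μ • v := by
    ext j
    simp only [Pi.add_apply, Pi.smul_apply, smul_eq_mul]
    field_simp
    ring
  rw [e] at this
  exact this

theorem main_int {n : ℕ} {ι : Type} [Fintype ι] (A : ι → Fin n → ℤ) (b : ι → ℤ) :
    ∃ t, splitClosure^[t] {x | ∀ i, ev (A i) x ≤ b i} ⊆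
      integerHull {x | ∀ i, ev (A i) x ≤ b i} := by
  classical
  set Q : Set (Fin n → ℝ) := {x | ∀ i, ev (A i) x ≤ b i} with hQdef
  have hQ : Convex ℝ Q := by
    intro x hx y hy p q hp hq hpq i
    exact convex_ev_le (A i) (b i) (hx i) (hy i) hp hq hpq
  obtain ⟨F, hFfin, hFS, hF⟩ := dickson {x : Fin n → ℤ | ∀ i, ∑ j, A i j * x j ≤ b i}
    (fun x i => (b i - ∑ j, A i j * x j).toNat)
  have hF' : ∀ x : Fin n → ℤ, (∀ i, ∑ j, A i j * x j ≤ b i) →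
      ∃ f : F, ∀ i, ∑ j, A i j * x j ≤ ∑ j, A i j * f.1 j := by
    intro x hx
    obtain ⟨f, hf, hle⟩ := hF x hx
    refine ⟨⟨f, hf⟩, fun i => ?_⟩
    have h1 := hle i
    have h2 := hx i
    have h3 := hFS hf i
    simp only at h1 ⊢
    omega
  have : Fintype F := hFfin.fintype
  obtain ⟨κ, hκ, y, y0, yM, hy⟩ := uf F (F ⊕ (Unit ⊕ (Unit ⊕ ι)))
    (Sum.elim (fun f => -Pi.single f 1) (Sum.elim (fun _ _ => 1) (Sum.elim (fun _ _ => -1)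
      (fun i f => ((-∑ j, A i j * f.1 j : ℤ) : ℚ)))))
  let p : κ → ι → ℚ := fun c i => y c (.inr (.inr (.inr i)))
  let δ : κ → ℚ := fun c => y c (.inr (.inl ())) - y c (.inr (.inr (.inl ())))
  have hp0 : ∀ c i, 0 ≤ p c i := fun c i => y0 c _
  have hcol : ∀ c (f : F), ∑ i, p c i * ((∑ j, A i j * f.1 j : ℤ) : ℚ) ≤ δ c := by
    intro c f
    have h1 := yM c f
    have h2 := y0 c (.inl f)
    simp only [Fintype.sum_sum_type, Sum.elim_inl, Sum.elim_inr, Int.cast_neg, mul_neg,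
      Finset.sum_neg_distrib, Pi.neg_apply, Pi.single_apply, Finset.univ_unique,
      Finset.sum_singleton, mul_ite, mul_one, mul_zero, Finset.sum_ite_eq,
      Finset.mem_univ, if_true] at h1
    simp only [p, δ]
    change _ ≤ y c (.inr (.inl default)) - y c (.inr (.inr (.inl default)))
    linarith
  have hval : ∀ c (x : Fin n → ℤ), (∀ i, ∑ j, A i j * x j ≤ b i) →
      ∑ i, p c i * ((∑ j, A i j * x j : ℤ) : ℚ) ≤ δ c := by
    intro c x hx
    obtain ⟨f, hf⟩ := hF' x hx
    refine le_trans (Finset.sum_le_sum fun i _ => ?_) (hcol c f)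
    exact mul_le_mul_of_nonneg_left (by exact_mod_cast hf i) (hp0 c i)
  -- each inequality is eventually valid
  have hcut : ∀ c, ∃ t, ∀ x ∈ splitClosure^[t] Q, ∑ i, (p c i : ℝ) * ev (A i) x ≤ δ c := by
    intro c
    obtain ⟨N, P, hN, hP⟩ := exists_scale (p c)
    have hN' : (0 : ℚ) < N := by exact_mod_cast hN
    have hP0 : ∀ i, 0 ≤ P i := by
      intro i
      have : (0 : ℚ) ≤ P i := by rw [hP]; exact mul_nonneg hN'.le (hp0 c i)
      exact_mod_cast this
    let a : Fin n → ℤ := fun j => ∑ i, P i * A i j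
    have ha : ∀ x, ev a x = ∑ i, (P i : ℝ) * ev (A i) x := by
      intro x
      rw [sum_ev]
      simp [ev, a]
    have hPr : ∀ i, (P i : ℝ) = N * p c i := fun i => by exact_mod_cast hP i
    have ha' : ∀ x, ev a x = N * ∑ i, (p c i : ℝ) * ev (A i) x := by
      intro x
      rw [ha, Finset.mul_sum]
      simp only [hPr, mul_assoc]
    obtain ⟨t, ht⟩ := peel hQ a (∑ i, P i * b i) ⌊N * δ c⌋ (by
      intro x hx
      simp only [mem_ofPred_eq]
      rw [ha]
      push_cast
      exact Finset.sum_le_sum fun i _ =>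
        mul_le_mul_of_nonneg_left (hx i) (by exact_mod_cast hP0 i)) (by
      intro k hk
      let A' : Option ι → Fin n → ℤ := fun o => o.elim a A
      let b' : Option ι → ℤ := fun o => o.elim k b
      have hsub : Q ∩ {x | ev a x = k} ⊆ poly A' b' {none} := by
        rintro x ⟨hx, hxk⟩
        refine ⟨fun i hi => ?_, fun i hi => ?_⟩
        · obtain rfl := Finset.mem_singleton.1 hi
          exact hxk
        · cases i with
          | none => simp at hi
          | some i => exact hx i
      obtain ⟨t, ht⟩ := empty_rank A' (Fintype.card (Option ι)) {none} b' (by omega) (by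
        intro x hx
        have h1 : ev a (fun j => (x j : ℝ)) = k := hx.1 none (Finset.mem_singleton_self _)
        have h2 : ∀ i, ∑ j, A i j * x j ≤ b i := by
          intro i
          have : ev (A i) (fun j => (x j : ℝ)) ≤ b i := hx.2 (some i) (by simp)
          rw [ev_int] at this
          exact_mod_cast this
        have h3 := hval c x h2
        rw [ha'] at h1
        simp only [ev_int] at h1
        have h4 : (N : ℚ) * ∑ i, p c i * ((∑ j, A i j * x j : ℤ) : ℚ) = k := by exact_mod_cast h1
        have h5 : k ≤ ⌊N * δ c⌋ := by
          rw [Int.le_floor, ← h4]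
          exact mul_le_mul_of_nonneg_left h3 hN'.le
        omega)
      exact ⟨t, subset_empty_iff.1 (ht ▸ sc_mono.iterate t hsub)⟩)
    refine ⟨t, fun x hx => ?_⟩
    have h1 : ev a x ≤ (⌊N * δ c⌋ : ℤ) := ht hx
    have h2 : ((⌊N * δ c⌋ : ℤ) : ℝ) ≤ N * δ c := by
      have := Int.floor_le (N * δ c)
      exact_mod_cast this
    rw [ha'] at h1
    have hN'' : (0 : ℝ) < N := by exact_mod_cast hN
    exact le_of_mul_le_mul_left (h1.trans h2) hN''
  choose t ht using hcut
  refine ⟨Finset.univ.sup t, fun x hx => ?_⟩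
  have hx' : ∀ c, ∑ i, (p c i : ℝ) * ev (A i) x ≤ δ c := fun c =>
    ht c x (sc_iter_antitone hQ (Finset.le_sup (Finset.mem_univ c)) hx)
  obtain ⟨l, hl⟩ := hy ℝ (Sum.elim (fun _ => 0) (Sum.elim (fun _ => 1) (Sum.elim (fun _ => -1)
    (fun i => -ev (A i) x)))) (by
      intro c
      have := hx' c
      simp only [p, δ, Rat.cast_sub] at this
      simp only [Fintype.sum_sum_type, Sum.elim_inl, Sum.elim_inr, mul_neg,
        Finset.sum_neg_distrib, Finset.univ_unique, Finset.sum_singleton, mul_one, mul_zero,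
        Finset.sum_const_zero]
      change 0 ≤ 0 + ((y c (.inr (.inl ())) : ℝ) + (-(y c (.inr (.inr (.inl ()))) : ℝ) + _))
      linarith)
  have l0 : ∀ f, 0 ≤ l f := by
    intro f
    have := hl (.inl f)
    simpa [Pi.single_apply, apply_ite (Rat.cast : ℚ → ℝ)] using this
  have l1 : ∑ f, l f = 1 := by
    have e1 := hl (.inr (.inl ()))
    have e2 := hl (.inr (.inr (.inl ())))
    simp at e1 e2
    linarith
  have l2 : ∀ i, ev (A i) x ≤ ∑ f, l f * ev (A i) (fun j => (f.1 j : ℝ)) := by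
    intro i
    have := hl (.inr (.inr (.inr i)))
    simp only [Sum.elim_inr, Int.cast_neg, Rat.cast_neg, neg_mul, Finset.sum_neg_distrib,
      neg_le_neg_iff, Rat.cast_intCast] at this
    simpa only [ev_int, mul_comm (l _)] using this
  set z : Fin n → ℝ := ∑ f : F, l f • (fun j => (f.1 j : ℝ)) with hz
  have hzH : z ∈ integerHull Q := by
    refine (convex_convexHull ℝ _).sum_mem (fun f _ => l0 f) l1 (fun f _ => ?_)
    refine subset_convexHull ℝ _ ⟨fun i => ?_, fun j => ⟨f.1 j, rfl⟩⟩
    rw [ev_int]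
    exact_mod_cast hFS f.2 i
  have hevz : ∀ i, ev (A i) z = ∑ f, l f * ev (A i) (fun j => (f.1 j : ℝ)) := by
    intro i
    let φ : (Fin n → ℝ) →ₗ[ℝ] ℝ := ⟨⟨ev (A i), ev_add _⟩, ev_smul _⟩
    have : φ z = ∑ f, l f * φ (fun j => (f.1 j : ℝ)) := by
      rw [hz, map_sum]
      simp
    exact this
  obtain ⟨η, hη, h, hA, hgen⟩ := minkowski A
  obtain ⟨μ, μ0, hμ⟩ := hgen (x - z) (by
    intro i
    have e : ev (A i) ((x - z) + z) = ev (A i) (x - z) + ev (A i) z := ev_add _ _ _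
    rw [sub_add_cancel] at e
    change ev (A i) (x - z) ≤ 0
    have := l2 i
    have := hevz i
    linarith)
  have hfin : ∀ s : Finset η, z + ∑ c ∈ s, μ c • (fun j => (h c j : ℝ)) ∈ integerHull Q := by
    intro s
    induction s using Finset.induction_on with
    | empty => simpa using hzH
    | insert c s hc ih =>
      rw [Finset.sum_insert hc, add_comm (μ c • _), ← add_assoc]
      exact hull_add A b (h c) (hA c) (μ c) (μ0 c) _ ih
  have e : x = z + ∑ c, μ c • (fun j => (h c j : ℝ)) := by
    ext j
    have := hμ j
    simp only [Pi.sub_apply] at this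
    simp only [Pi.add_apply, Finset.sum_apply, Pi.smul_apply, smul_eq_mul]
    linarith
  rw [e]
  exact hfin _

end SplitRank

/-- Every rational polyhedron has finite split rank: some iterated split closure
equals the integer hull. -/
theorem every_rational_polyhedron_has_finite_split_rank
    {n : ℕ} (Q : Set (Fin n → ℝ)) (hQ : IsRationalPolyhedron Q) :
    ∃ t : ℕ, splitClosure^[t] Q = integerHull Q := by
  obtain ⟨m, A, b, rfl⟩ := hQ
  obtain ⟨A', b', h⟩ := SplitRank.integral_system A b
  rw [h]
  obtain ⟨t, ht⟩ := SplitRank.main_int A' b'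
  refine ⟨t, subset_antisymm ht (SplitRank.hull_subset ?_ t)⟩
  intro x hx y hy p q hp hq hpq i
  exact SplitRank.convex_ev_le (A' i) (b' i) (hx i) (hy i) hp hq hpq
end

section
/- For every convex set Q ⊆ ℝⁿ, the split closure of Q satisfies SC(Q) = ⋂_{c ∈ ℤⁿ} ⋂_{δ ∈ ℤ} conv( (Q ∩ {x ∈ ℝⁿ : c·x ≤ δ}) ∪ (Q ∩ {x ∈ ℝⁿ : c·x ≥ δ + 1}) ). -/
open Set

/-- The key step for one linear functional `f`. -/
lemma split_key {n : ℕ} (Q : Set (Fin n → ℝ)) (hQ : Convex ℝ Q)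
    (f : (Fin n → ℝ) →ₗ[ℝ] ℝ) (x : Fin n → ℝ)
    (h : ∀ δ : ℤ, x ∈ convexHull ℝ ((Q ∩ {x | f x ≤ (δ : ℝ)}) ∪ (Q ∩ {x | (δ : ℝ) + 1 ≤ f x}))) :
    x ∈ convexHull ℝ {x ∈ Q | ∃ z : ℤ, f x = (z : ℝ)} := by
  have hxQ : x ∈ Q := by
    refine convexHull_min ?_ hQ (h 0)
    rintro y (hy | hy)
    exacts [hy.1, hy.1]
  by_cases hz : ∃ z : ℤ, f x = (z : ℝ)
  · exact subset_convexHull ℝ _ ⟨hxQ, hz⟩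
  have hd := h ⌊f x⌋
  have h1 : (⌊f x⌋ : ℝ) ≤ f x := Int.floor_le _
  have h2 : f x < ⌊f x⌋ + 1 := Int.lt_floor_add_one _
  have h1' : (⌊f x⌋ : ℝ) < f x := lt_of_le_of_ne h1 (fun e => hz ⟨_, e.symm⟩)
  have hfz : (((⌊f x⌋ + 1 : ℤ)) : ℝ) = ⌊f x⌋ + 1 := by push_cast; rfl
  have hff : ((⌊f x⌋ : ℤ) : ℝ) = ⌊f x⌋ := rfl
  generalize hδ : ⌊f x⌋ = δ at *
  have cA : Convex ℝ (Q ∩ {x | f x ≤ (δ : ℝ)}) := hQ.inter (convex_halfSpace_le f.isLinear _)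
  have cB : Convex ℝ (Q ∩ {x | (δ : ℝ) + 1 ≤ f x}) := hQ.inter (convex_halfSpace_ge f.isLinear _)
  rcases (Q ∩ {x | f x ≤ (δ : ℝ)}).eq_empty_or_nonempty with hA | hA
  · rw [hA, empty_union, cB.convexHull_eq] at hd
    exact absurd hd.2 (not_le.2 h2)
  rcases (Q ∩ {x | (δ : ℝ) + 1 ≤ f x}).eq_empty_or_nonempty with hB | hB
  · rw [hB, union_empty, cA.convexHull_eq] at hd
    exact absurd hd.2 (not_le.2 h1')
  rw [convexHull_union hA hB, cA.convexHull_eq, cB.convexHull_eq, mem_convexJoin] at hd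
  obtain ⟨y, ⟨hyQ, hy⟩, z, ⟨hzQ, hz'⟩, a, b, ha, hb, hab, rfl⟩ := hd
  simp only [mem_setOf_eq] at hy hz'
  have hD : 0 < f z - f y := by linarith
  have hp : ∀ k : ℤ, f y ≤ k → (k : ℝ) ≤ f z →
      (1 - (k - f y) / (f z - f y)) • y + ((k - f y) / (f z - f y)) • z ∈
        {x ∈ Q | ∃ z : ℤ, f x = (z : ℝ)} := by
    intro k hk1 hk2
    refine ⟨hQ hyQ hzQ ?_ ?_ (by ring), k, ?_⟩
    · rw [sub_nonneg, div_le_one hD]; linarith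
    · exact div_nonneg (by linarith) hD.le
    · simp only [map_add, map_smul, smul_eq_mul]
      field_simp
      ring
  have P := subset_convexHull ℝ _ (hp δ hy (by linarith))
  have R := subset_convexHull ℝ _ (hp (δ + 1) (by push_cast; linarith) (by push_cast; linarith))
  have S := (convex_convexHull ℝ {x ∈ Q | ∃ z : ℤ, f x = (z : ℝ)}) P R
    (a := δ + 1 - f (a • y + b • z)) (b := f (a • y + b • z) - δ)
    (by linarith) (by linarith) (by ring)
  convert S using 1
  obtain rfl : a = 1 - b := by linarith
  ext i
  simp only [map_add, map_smul, smul_eq_mul, Pi.add_apply, Pi.smul_apply]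
  push_cast
  field_simp
  ring

/-- For a convex set `Q`, the split closure coincides with the intersection of all
split disjunctions `conv((Q ∩ {c·x ≤ δ}) ∪ (Q ∩ {c·x ≥ δ + 1}))`. -/
theorem splitClosure_eq_iInter_splits
    {n : ℕ} (Q : Set (Fin n → ℝ)) (hQ : Convex ℝ Q) :
    splitClosure Q =
      ⋂ (c : Fin n → ℤ) (δ : ℤ),
        convexHull ℝ
          ((Q ∩ {x | ∑ i, (c i : ℝ) * x i ≤ (δ : ℝ)}) ∪
           (Q ∩ {x | (δ : ℝ) + 1 ≤ ∑ i, (c i : ℝ) * x i})) := by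
  apply Subset.antisymm
  · refine iInter_mono fun c => subset_iInter fun δ => convexHull_mono ?_
    rintro x ⟨hx, z, hz⟩
    rcases le_or_gt z δ with h | h
    · left
      refine ⟨hx, ?_⟩
      simp only [mem_setOf_eq, hz]
      exact_mod_cast h
    · right
      refine ⟨hx, ?_⟩
      simp only [mem_setOf_eq, hz]
      exact_mod_cast h
  · refine iInter_mono fun c => ?_
    intro x hx
    rw [mem_iInter] at hx
    let f : (Fin n → ℝ) →ₗ[ℝ] ℝ :=
      { toFun := fun x => ∑ i, (c i : ℝ) * x i
        map_add' := fun x y => by simp [mul_add, Finset.sum_add_distrib]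
        map_smul' := fun r x => by
          simp only [Pi.smul_apply, smul_eq_mul, RingHom.id_apply, Finset.mul_sum]
          exact Finset.sum_congr rfl fun i _ => by ring }
    exact split_key Q hQ f x hx
end

section
/- Let Q ⊆ ℝⁿ be a convex set, c ∈ ℝⁿ and x̄ ∈ ℝⁿ. Then x̄ ∈ conv({x ∈ Q : c·x ∈ ℤ}) if and only if x̄ ∈ conv({x ∈ Q : c·x = ⌊c·x̄⌋ or c·x = ⌈c·x̄⌉}). -/
open Set

theorem slices_aux {E : Type*} [AddCommGroup E] [Module ℝ E] (Q : Set E) (hQ : Convex ℝ Q)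
    (L : E →ₗ[ℝ] ℝ) (xbar : E) (h : xbar ∈ convexHull ℝ {x ∈ Q | ∃ z : ℤ, L x = (z : ℝ)}) :
    xbar ∈ convexHull ℝ {x ∈ Q | L x = (⌊L xbar⌋ : ℝ) ∨ L x = (⌈L xbar⌉ : ℝ)} := by
  have hxQ : xbar ∈ Q := convexHull_min (fun x hx => hx.1) hQ h
  by_cases hint : L xbar = (⌊L xbar⌋ : ℝ)
  · exact subset_convexHull ℝ _ ⟨hxQ, Or.inl hint⟩
  have hlt : (⌊L xbar⌋ : ℝ) < L xbar := lt_of_le_of_ne (Int.floor_le _) (Ne.symm hint)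
  have hlt' : L xbar < (⌊L xbar⌋ : ℝ) + 1 := Int.lt_floor_add_one _
  have hceil : (⌈L xbar⌉ : ℝ) = (⌊L xbar⌋ : ℝ) + 1 := by
    have : ⌈L xbar⌉ = ⌊L xbar⌋ + 1 := by
      rw [Int.ceil_eq_iff]
      push_cast
      constructor <;> linarith
    rw [this]
    push_cast
    rfl
  rw [hceil]
  generalize ⌊L xbar⌋ = f at *
  have hcA : Convex ℝ {x | x ∈ Q ∧ L x ≤ (f : ℝ)} := hQ.inter (convex_halfSpace_le L.isLinear _)
  have hcB : Convex ℝ {x | x ∈ Q ∧ (f : ℝ) + 1 ≤ L x} :=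
    hQ.inter (convex_halfSpace_ge L.isLinear _)
  have hsub : {x ∈ Q | ∃ z : ℤ, L x = (z : ℝ)} ⊆
      {x | x ∈ Q ∧ L x ≤ (f : ℝ)} ∪ {x | x ∈ Q ∧ (f : ℝ) + 1 ≤ L x} := by
    rintro x ⟨hx, z, hz⟩
    rcases le_or_gt z f with hzf | hzf
    · left
      refine ⟨hx, ?_⟩
      rw [hz]
      exact_mod_cast hzf
    · right
      refine ⟨hx, ?_⟩
      rw [hz]
      exact_mod_cast hzf
  have h2 := convexHull_mono hsub h
  rcases eq_empty_or_nonempty {x | x ∈ Q ∧ L x ≤ (f : ℝ)} with hA | hA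
  · rw [hA, empty_union, hcB.convexHull_eq] at h2
    have := h2.2
    linarith
  rcases eq_empty_or_nonempty {x | x ∈ Q ∧ (f : ℝ) + 1 ≤ L x} with hB | hB
  · rw [hB, union_empty, hcA.convexHull_eq] at h2
    have := h2.2
    linarith
  rw [hcA.convexHull_union hcB hA hB, mem_convexJoin] at h2
  obtain ⟨a, ⟨haQ, ha⟩, b, ⟨hbQ, hb⟩, hseg⟩ := h2
  rw [segment_eq_image'] at hseg
  obtain ⟨t, -, rfl⟩ := hseg
  simp only [map_add, map_smul, map_sub, smul_eq_mul] at *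
  have hd : 0 < L b - L a := by linarith
  have key : ∀ r : ℝ, L a ≤ r → r ≤ L b →
      a + ((r - L a) / (L b - L a)) • (b - a) ∈ Q ∧
      L (a + ((r - L a) / (L b - L a)) • (b - a)) = r := by
    intro r h1 h2
    constructor
    · apply hQ.add_smul_sub_mem haQ hbQ
      exact ⟨div_nonneg (by linarith) hd.le, (div_le_one hd).2 (by linarith)⟩
    · simp only [map_add, map_smul, map_sub, smul_eq_mul]
      field_simp
      ring
  have k1 := key f ha (by linarith)
  have k2 := key (f + 1) (by linarith) hb
  have m := (convex_convexHull ℝ {x ∈ Q | L x = (f : ℝ) ∨ L x = (f : ℝ) + 1})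
    (subset_convexHull ℝ _ ⟨k1.1, Or.inl k1.2⟩) (subset_convexHull ℝ _ ⟨k2.1, Or.inr k2.2⟩)
    (a := f + 1 - (L a + t * (L b - L a))) (b := L a + t * (L b - L a) - f)
    (by linarith) (by linarith) (by ring)
  convert m using 1
  match_scalars <;> field_simp <;> ring

/-- For a convex set `Q ⊆ ℝⁿ`, `c ∈ ℝⁿ` and `x̄ ∈ ℝⁿ`, the point `x̄` lies in
`conv({x ∈ Q : c·x ∈ ℤ})` iff it lies in
`conv({x ∈ Q : c·x = ⌊c·x̄⌋ or c·x = ⌈c·x̄⌉})`. -/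
theorem mem_convexHull_int_slices_iff_mem_convexHull_floor_ceil
    {n : ℕ} (Q : Set (Fin n → ℝ)) (hQ : Convex ℝ Q) (c xbar : Fin n → ℝ) :
    xbar ∈ convexHull ℝ {x ∈ Q | ∃ z : ℤ, ∑ i, c i * x i = (z : ℝ)} ↔
    xbar ∈ convexHull ℝ
      {x ∈ Q | ∑ i, c i * x i = (⌊∑ i, c i * xbar i⌋ : ℝ) ∨
               ∑ i, c i * x i = (⌈∑ i, c i * xbar i⌉ : ℝ)} := by
  constructor
  · intro h
    exact slices_aux Q hQ (dotProductBilin ℝ ℝ c) xbar h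
  · intro h
    refine convexHull_mono ?_ h
    rintro x ⟨hx, hz | hz⟩
    · exact ⟨hx, _, hz⟩
    · exact ⟨hx, _, hz⟩
end

section
/- If Q ⊆ ℝⁿ is a rational polyhedron with conv(Q ∩ ℤⁿ) ⊊ Q, then SC(Q) ⊊ Q, i.e. the split closure of Q is strictly contained in Q. -/
open Set

namespace SplitAux

/-- The real linear functional with rational coefficients `a`. -/
noncomputable def L {n : ℕ} (a : Fin n → ℚ) : (Fin n → ℝ) →ₗ[ℝ] ℝ where
  toFun x := ∑ j, (a j : ℝ) * x j
  map_add' x y := by simp [mul_add, Finset.sum_add_distrib]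
  map_smul' r x := by
    simp only [Pi.smul_apply, smul_eq_mul, RingHom.id_apply, Finset.mul_sum]
    exact Finset.sum_congr rfl fun j _ => by ring

/-- Cast of an integer vector. -/
def cz {n : ℕ} (z : Fin n → ℤ) : Fin n → ℝ := fun j => (z j : ℝ)

lemma clear_den {n : ℕ} (r : Fin n → ℚ) :
    ∃ N : ℕ, N ≠ 0 ∧ ∃ z : Fin n → ℤ, ∀ j, (N : ℚ) * r j = z j := by
  refine ⟨∏ j, (r j).den, Finset.prod_ne_zero_iff.2 fun j _ => (r j).den_nz, ?_⟩
  have : ∀ j, ∃ z : ℤ, ((∏ j, (r j).den : ℕ) : ℚ) * r j = z := by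
    intro j
    obtain ⟨k, hk⟩ := Finset.dvd_prod_of_mem (fun j => (r j).den) (Finset.mem_univ j)
    refine ⟨k * (r j).num, ?_⟩
    rw [hk]
    push_cast
    have := Rat.mul_den_eq_num (r j)
    rw [← this]; ring
  choose z hz using this
  exact ⟨z, hz⟩

/-- The real kernel of a rational matrix is spanned by its integral vectors. -/
lemma kernel_span {m n : ℕ} (A : Fin m → Fin n → ℚ) (v : Fin n → ℝ)
    (hv : ∀ i, L (A i) v = 0) :
    v ∈ Submodule.span ℝ {r | ∃ z : Fin n → ℤ, r = cz z ∧ ∀ i, L (A i) r = 0} := by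
  classical
  let B := Module.Basis.ofVectorSpace ℚ ℝ
  let S : Finset _ := Finset.univ.biUnion fun j => (B.repr (v j)).support
  have hvj : ∀ j, v j = ∑ k ∈ S, ((B.repr (v j) k : ℚ) : ℝ) * B k := by
    intro j
    conv_lhs => rw [← B.linearCombination_repr (v j)]
    rw [Finsupp.linearCombination_apply, Finsupp.sum_of_support_subset (s := S)]
    · exact Finset.sum_congr rfl fun k _ => by rw [Rat.smul_def]
    · exact Finset.subset_biUnion_of_mem (fun j => (B.repr (v j)).support) (Finset.mem_univ j)
    · simp
  have hker : ∀ i k, ∑ j, A i j * B.repr (v j) k = 0 := by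
    intro i k
    have h1 : ∑ j, A i j • v j = 0 := by
      have := hv i
      simpa [L, Rat.smul_def] using this
    have h2 := congrArg (fun w => B.repr w k) h1
    simpa using h2
  have hvs : v = ∑ k ∈ S, (B k : ℝ) • (fun j => ((B.repr (v j) k : ℚ) : ℝ)) := by
    ext j
    rw [Finset.sum_apply]
    conv_lhs => rw [hvj j]
    exact Finset.sum_congr rfl fun k _ => by simp [mul_comm]
  rw [hvs]
  refine Submodule.sum_mem _ fun k _ => Submodule.smul_mem _ _ ?_
  obtain ⟨N, hN, z, hz⟩ := clear_den (fun j => B.repr (v j) k)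
  have hzr : ∀ j, (N : ℝ) * ((B.repr (v j) k : ℚ) : ℝ) = z j := fun j => by
    exact_mod_cast hz j
  have hN' : (N : ℝ) ≠ 0 := by exact_mod_cast hN
  have e : (fun j => ((B.repr (v j) k : ℚ) : ℝ)) = (N : ℝ)⁻¹ • cz z := by
    ext j
    simp only [Pi.smul_apply, cz, smul_eq_mul, ← hzr j]
    field_simp
  have e2 : cz z = (N : ℝ) • (fun j => ((B.repr (v j) k : ℚ) : ℝ)) := by
    rw [e, smul_smul, mul_inv_cancel₀ hN', one_smul]
  rw [e]
  refine Submodule.smul_mem _ _ (Submodule.subset_span ⟨z, rfl, fun i => ?_⟩)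
  rw [e2, map_smul]
  have : L (A i) (fun j => ((B.repr (v j) k : ℚ) : ℝ)) = 0 := by
    have := hker i k
    simp only [L, LinearMap.coe_mk, AddHom.coe_mk]
    exact_mod_cast this
  rw [this, smul_zero]

/-- Integral Farkas lemma (Kronecker). -/
lemma int_farkas {m n : ℕ} (A : Fin m → Fin n → ℚ) (b : Fin m → ℚ)
    (h : ¬ ∃ z : Fin n → ℤ, ∀ i, ∑ j, A i j * (z j : ℚ) = b i) :
    ∃ y : Fin m → ℚ, ∃ c : Fin n → ℤ, (∀ j, ∑ i, y i * A i j = c j) ∧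
      ∀ k : ℤ, ∑ i, y i * b i ≠ k := by
  classical
  let col : Fin n → (Fin m → ℚ) := fun j i => A i j
  let Λ : Submodule ℤ (Fin m → ℚ) := Submodule.span ℤ (Set.range col)
  let M : Submodule ℤ (Fin m → ℚ) := Submodule.span ℤ (insert b (Set.range col))
  have hΛM : Λ ≤ M := Submodule.span_mono (Set.subset_insert _ _)
  have hbM : b ∈ M := Submodule.subset_span (Set.mem_insert _ _)
  have hcM : ∀ j, col j ∈ M := fun j =>
    Submodule.subset_span (Set.mem_insert_of_mem _ ⟨j, rfl⟩)
  have hb : b ∉ Λ := by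
    intro hb
    obtain ⟨z, hz⟩ := (Submodule.mem_span_range_iff_exists_fun ℤ).1 hb
    refine h ⟨z, fun i => ?_⟩
    rw [← hz, Finset.sum_apply]
    exact Finset.sum_congr rfl fun j _ => by simp [col, mul_comm]
  have : Module.Finite ℤ M := Module.Finite.iff_fg.2
    (Submodule.fg_span ((Set.finite_range col).insert b))
  have : Module.IsTorsionFree ℤ M := inferInstance
  let N : Submodule ℤ M := Λ.comap M.subtype
  let b' : M ⧸ N := N.mkQ ⟨b, hbM⟩
  have hb' : b' ≠ 0 := by
    intro h0
    have := (Submodule.Quotient.mk_eq_zero N).1 h0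
    exact hb this
  obtain ⟨χ, hχ⟩ := CharacterModule.exists_character_apply_ne_zero_of_ne_zero hb'
  let B := Module.finBasis ℤ M
  -- lift each value
  have hsurj : ∀ t : AddCircle (1 : ℚ), ∃ q : ℚ, (q : AddCircle (1 : ℚ)) = t :=
    fun t => QuotientAddGroup.mk_surjective t
  choose lft hlft using hsurj
  let f : M →ₗ[ℤ] ℚ := B.constr ℤ fun k => lft (χ (N.mkQ (B k)))
  have hf : ∀ w : M, ((f w : ℚ) : AddCircle (1 : ℚ)) = χ (N.mkQ w) := by
    intro w
    let g1 : M →+ AddCircle (1 : ℚ) := (QuotientAddGroup.mk' _).comp f.toAddMonoidHom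
    let g2 : M →+ AddCircle (1 : ℚ) :=
      AddMonoidHom.comp (χ : (M ⧸ N) →+ AddCircle (1 : ℚ)) N.mkQ.toAddMonoidHom
    have : g1.toIntLinearMap = g2.toIntLinearMap := by
      refine B.ext fun k => ?_
      change ((f (B k) : ℚ) : AddCircle (1 : ℚ)) = χ (N.mkQ (B k))
      simp only [f, Module.Basis.constr_basis, hlft]
    exact congrArg (fun g => g w) this
  -- extend `f` to a rational functional
  have hli : LinearIndependent ℚ (fun k => ((B k : M) : Fin m → ℚ)) := by
    rw [← LinearIndependent.iff_fractionRing (R := ℤ)]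
    exact B.linearIndependent.map' M.subtype (Submodule.ker_subtype M)
  obtain ⟨F, hF⟩ : ∃ F : (Fin m → ℚ) →ₗ[ℚ] ℚ, ∀ k, F (B k : M) = f (B k) := by
    obtain ⟨F, hF⟩ := ((Module.Basis.span hli).constr ℚ fun k => f (B k)).exists_extend
    refine ⟨F, fun k => ?_⟩
    have h1 := congrArg (fun G => G (Module.Basis.span hli k)) hF
    have h2 := (Module.Basis.span hli).constr_basis ℚ (fun k => f (B k)) k
    have h3 : ((Module.Basis.span hli k : _) : Fin m → ℚ) = (B k : M) :=
      congrArg Subtype.val (Module.Basis.span_apply hli k)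
    rw [← h3]
    exact h1.trans h2
  have hFf : ∀ w : M, F (w : Fin m → ℚ) = f w := by
    intro w
    have : (F.restrictScalars ℤ).comp M.subtype = f := B.ext fun k => by simpa using hF k
    exact congrArg (fun g => g w) this
  have hFy : ∀ w, F w = ∑ i, F (Pi.single i 1) * w i := by
    intro w
    conv_lhs => rw [pi_eq_sum_univ' w, map_sum]
    refine Finset.sum_congr rfl fun i _ => ?_
    rw [map_smul, smul_eq_mul, mul_comm]
  have hint : ∀ q : ℚ, (q : AddCircle (1 : ℚ)) = 0 ↔ ∃ k : ℤ, (k : ℚ) = q := by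
    intro q
    rw [AddCircle.coe_eq_zero_iff]
    simp
  have hcol : ∀ j, ∃ k : ℤ, (k : ℚ) = F (col j) := by
    intro j
    rw [← hint, show F (col j) = f ⟨col j, hcM j⟩ from hFf ⟨col j, hcM j⟩, hf]
    have : N.mkQ ⟨col j, hcM j⟩ = 0 := by
      rw [Submodule.mkQ_apply, Submodule.Quotient.mk_eq_zero]
      exact Submodule.subset_span (s := Set.range col) ⟨j, rfl⟩
    rw [this, map_zero]
  choose c hc using hcol
  refine ⟨fun i => F (Pi.single i 1), c, fun j => ?_, fun k hk => ?_⟩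
  · rw [hc, hFy]
  · rw [← hFy] at hk
    apply hχ
    rw [← hf, hint]
    exact ⟨k, by rw [← hFf]; exact hk.symm⟩

/-- The polyhedron. -/
def P {m n : ℕ} (A : Fin m → Fin n → ℚ) (b : Fin m → ℚ) : Set (Fin n → ℝ) :=
  {x | ∀ i, L (A i) x ≤ (b i : ℝ)}

lemma recession {m n : ℕ} (A : Fin m → Fin n → ℚ) (b : Fin m → ℚ) (d : Fin n → ℤ)
    (hd : ∀ i, L (A i) (cz d) ≤ 0) (y : Fin n → ℝ) (hy : y ∈ integerHull (P A b))
    (t : ℝ) (ht : 0 ≤ t) : y + t • cz d ∈ integerHull (P A b) := by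
  have hconv : Convex ℝ (integerHull (P A b)) := convex_convexHull _ _
  have key : ∀ N : ℕ, y + (N : ℝ) • cz d ∈ integerHull (P A b) := by
    intro N
    have hc := hconv.translate_preimage_left ((N : ℝ) • cz d)
    refine (convexHull_min ?_ hc) hy
    rintro p ⟨hp, hpz⟩
    refine subset_convexHull ℝ _ ⟨fun i => ?_, fun i => ?_⟩
    · rw [map_add, map_smul]
      have := hp i
      have h2 : (N : ℝ) • L (A i) (cz d) ≤ 0 :=
        mul_nonpos_of_nonneg_of_nonpos (Nat.cast_nonneg N) (hd i)
      linarith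
    · obtain ⟨z, hz⟩ := hpz i
      exact ⟨z + N * d i, by simp [hz, cz]⟩
  obtain ⟨N, hN⟩ := exists_nat_gt t
  have hN0 : (0 : ℝ) < N := lt_of_le_of_lt ht hN
  have := hconv.add_smul_sub_mem hy (key N) (t := t / N)
    ⟨by positivity, by rw [div_le_one hN0]; exact hN.le⟩
  convert this using 2
  rw [add_sub_cancel_left, smul_smul, div_mul_cancel₀ _ hN0.ne']

open Classical in
/-- The number of non-tight constraints. -/
noncomputable def slack {m n : ℕ} (A : Fin m → Fin n → ℚ) (b : Fin m → ℚ) (x : Fin n → ℝ) : ℕ :=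
  (Finset.univ.filter fun i => L (A i) x ≠ (b i : ℝ)).card

lemma hit {m n : ℕ} (A : Fin m → Fin n → ℚ) (b : Fin m → ℚ) (x d : Fin n → ℝ)
    (hx : x ∈ P A b) (hT : ∀ i, L (A i) x = b i → L (A i) d = 0)
    (hd : ∃ i, 0 < L (A i) d) :
    ∃ t : ℝ, 0 < t ∧ x + t • d ∈ P A b ∧ slack A b (x + t • d) < slack A b x := by
  classical
  let S := Finset.univ.filter fun i => 0 < L (A i) d
  have hS : S.Nonempty := by
    obtain ⟨i, hi⟩ := hd
    exact ⟨i, by simp [S, hi]⟩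
  obtain ⟨i, hiS, hmin⟩ := S.exists_min_image (fun i => ((b i : ℝ) - L (A i) x) / L (A i) d) hS
  have hi : 0 < L (A i) d := by simpa [S] using hiS
  have hlt : L (A i) x < b i := lt_of_le_of_ne (hx i) fun h => hi.ne' (hT i h)
  have ht : 0 < ((b i : ℝ) - L (A i) x) / L (A i) d := div_pos (by linarith) hi
  refine ⟨_, ht, fun k => ?_, ?_⟩
  · rw [map_add, map_smul, smul_eq_mul]
    by_cases hk : 0 < L (A k) d
    · have := hmin k (by simp [S, hk])
      rw [le_div_iff₀ hk] at this
      linarith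
    · have := mul_nonpos_of_nonneg_of_nonpos ht.le (not_lt.1 hk)
      have := hx k
      linarith
  · refine Finset.card_lt_card ⟨?_, fun hsub => ?_⟩
    · intro k hk
      simp only [Finset.mem_filter, Finset.mem_univ, true_and] at hk ⊢
      intro hk2
      apply hk
      rw [map_add, map_smul, hT k hk2, smul_zero, add_zero, hk2]
    · have := @hsub i (by simpa using hlt.ne)
      simp only [Finset.mem_filter, Finset.mem_univ, true_and] at this
      apply this
      rw [map_add, map_smul, smul_eq_mul, div_mul_cancel₀ _ hi.ne']
      ring

lemma cz_neg {n : ℕ} (d : Fin n → ℤ) : cz (-d) = -cz d := by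
  ext j; simp [cz]

/-- A minimal face on which the split closure is everything has an integral point. -/
lemma face_int {m n : ℕ} (A : Fin m → Fin n → ℚ) (b : Fin m → ℚ) (x : Fin n → ℝ)
    (hx : x ∈ P A b) (hs : x ∈ splitClosure (P A b)) :
    ∃ z : Fin n → ℤ, ∀ i, L (A i) x = b i → L (A i) (cz z) = b i := by
  classical
  by_contra hno
  let A' : Fin m → Fin n → ℚ := fun i j => if L (A i) x = b i then A i j else 0
  let b' : Fin m → ℚ := fun i => if L (A i) x = b i then b i else 0
  obtain ⟨y, c, hc, hyb⟩ := int_farkas A' b' (by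
    rintro ⟨z, hz⟩
    refine hno ⟨z, fun i hi => ?_⟩
    have := hz i
    simp only [A', b', hi, if_true] at this
    simp only [L, LinearMap.coe_mk, AddHom.coe_mk, cz]
    exact_mod_cast this)
  have hxc := Set.mem_iInter.1 hs c
  let T := Finset.univ.filter fun i => L (A i) x = b i
  let g : (Fin n → ℝ) →ₗ[ℝ] ℝ := ∑ i ∈ T, L (A i)
  have hg : ∀ p, g p = ∑ i ∈ T, L (A i) p := fun p => by simp [g]
  have hgx : g x = ∑ i ∈ T, (b i : ℝ) := by
    rw [hg]; exact Finset.sum_congr rfl fun i hi => by simpa [T] using hi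
  obtain ⟨p, ⟨hpP, k, hk⟩, hp⟩ : ∃ p ∈ {x ∈ P A b | ∃ z : ℤ, ∑ i, (c i : ℝ) * x i = (z : ℝ)},
      g x ≤ g p := by
    by_contra! hcon
    have : x ∈ {w | g w < g x} :=
      convexHull_min (fun p hp => hcon p hp) (convex_halfSpace_lt g.isLinear (g x)) hxc
    exact lt_irrefl (g x) this
  have hpT : ∀ i ∈ T, L (A i) p = b i := by
    refine (Finset.sum_eq_sum_iff_of_le fun i _ => hpP i).1 ?_
    refine le_antisymm (Finset.sum_le_sum fun i _ => hpP i) ?_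
    rw [← hgx, ← hg]; exact hp
  have hp' : ∀ i, L (A' i) p = b' i := by
    intro i
    by_cases hi : L (A i) x = b i
    · have h1 : A' i = A i := by ext j; simp [A', hi]
      have h2 : b' i = b i := by simp [b', hi]
      rw [h1, h2]
      exact hpT i (by simp [T, hi])
    · have h1 : A' i = 0 := by ext j; simp [A', hi]
      have h2 : b' i = 0 := by simp [b', hi]
      rw [h1, h2]
      simp [L]
  apply hyb k
  have : ((∑ i, y i * b' i : ℚ) : ℝ) = k := by
    rw [← hk]
    push_cast
    simp_rw [← hp']
    simp only [L, LinearMap.coe_mk, AddHom.coe_mk, Finset.mul_sum]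
    rw [Finset.sum_comm]
    refine Finset.sum_congr rfl fun j _ => ?_
    have h1 : ((∑ i, y i * A' i j : ℚ) : ℝ) = c j := by rw [hc j]; simp
    rw [← h1]
    push_cast
    rw [Finset.sum_mul]
    exact Finset.sum_congr rfl fun i _ => by ring
  exact_mod_cast this

lemma mem_hull_of_mem {m n : ℕ} (A : Fin m → Fin n → ℚ) (b : Fin m → ℚ)
    (hs : P A b ⊆ splitClosure (P A b)) :
    ∀ (N : ℕ) (x : Fin n → ℝ), x ∈ P A b → slack A b x = N → x ∈ integerHull (P A b) := by
  classical
  intro N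
  induction N using Nat.strong_induction_on with
  | _ N ih =>
  intro x hx hN
  have hconv : Convex ℝ (integerHull (P A b)) := convex_convexHull _ _
  have step : ∀ d : Fin n → ℤ, (∀ i, L (A i) x = b i → L (A i) (cz d) = 0) →
      (∃ i, 0 < L (A i) (cz d)) → ∃ t : ℝ, 0 < t ∧ x + t • cz d ∈ integerHull (P A b) := by
    intro d hT hd
    obtain ⟨t, ht, h1, h2⟩ := hit A b x (cz d) hx hT hd
    exact ⟨t, ht, ih _ (hN ▸ h2) _ h1 rfl⟩
  have case1 : ∀ d : Fin n → ℤ, (∀ i, L (A i) x = b i → L (A i) (cz d) = 0) →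
      (∃ i, 0 < L (A i) (cz d)) → x ∈ integerHull (P A b) := by
    intro d hT hd
    obtain ⟨t, ht, h1⟩ := step d hT hd
    by_cases hneg : ∃ i, 0 < L (A i) (cz (-d))
    · obtain ⟨s, hs0, h2⟩ := step (-d) (fun i hi => by rw [cz_neg, map_neg, hT i hi, neg_zero]) hneg
      have hst : 0 < s + t := by linarith
      have := hconv h1 h2 (a := s / (s + t)) (b := t / (s + t)) (by positivity) (by positivity)
        (by field_simp)
      convert this using 1
      ext j
      simp only [cz_neg, Pi.add_apply, Pi.smul_apply, Pi.neg_apply, smul_eq_mul]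
      field_simp
      ring
    · push Not at hneg
      have := recession A b (-d) hneg _ h1 t ht.le
      convert this using 1
      rw [cz_neg]; simp
  by_cases hex : ∃ d : Fin n → ℤ, (∀ i, L (A i) x = b i → L (A i) (cz d) = 0) ∧
      ∃ i, L (A i) (cz d) ≠ 0
  · obtain ⟨d, hT, i, hi⟩ := hex
    rcases lt_or_gt_of_ne hi with h | h
    · refine case1 (-d) (fun i hi => by rw [cz_neg, map_neg, hT i hi, neg_zero]) ⟨i, ?_⟩
      rw [cz_neg, map_neg]; linarith
    · exact case1 d hT ⟨i, h⟩
  · push Not at hex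
    obtain ⟨z, hz⟩ := face_int A b x hx (hs hx)
    let A' : Fin m → Fin n → ℚ := fun i j => if L (A i) x = b i then A i j else 0
    have hAtight : ∀ i, L (A i) x = b i → A' i = A i := fun i hi => by ext j; simp [A', hi]
    have hspan := kernel_span A' (x - cz z) (by
      intro i
      by_cases hi : L (A i) x = b i
      · rw [hAtight i hi, map_sub, hz i hi, hi, sub_self]
      · have h1 : A' i = 0 := by ext j; simp [A', hi]
        rw [h1]
        simp [L])
    have hgen : ∀ d : Fin n → ℤ, (∀ i, L (A' i) (cz d) = 0) → ∀ i, L (A i) (cz d) = 0 :=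
      fun d hd => hex d fun i hi => by rw [← hAtight i hi]; exact hd i
    have hprop : ∀ v ∈ Submodule.span ℝ
        {r | ∃ z : Fin n → ℤ, r = cz z ∧ ∀ i, L (A' i) r = 0},
        (∀ i, L (A i) v = 0) ∧
        ∀ s : ℝ, ∀ p ∈ integerHull (P A b), p + s • v ∈ integerHull (P A b) := by
      intro v hv
      induction hv using Submodule.span_induction with
      | mem v hv =>
        obtain ⟨d, rfl, hd⟩ := hv
        have h0 := hgen d hd
        refine ⟨h0, fun s p hp => ?_⟩
        rcases le_total 0 s with h | h
        · exact recession A b d (fun i => (h0 i).le) p hp s h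
        · have := recession A b (-d) (fun i => by rw [cz_neg, map_neg, h0 i, neg_zero]) p hp (-s)
            (by linarith)
          rwa [cz_neg, neg_smul_neg] at this
      | zero => exact ⟨by simp, by simp⟩
      | add v w _ _ h1 h2 =>
        refine ⟨fun i => by rw [map_add, h1.1, h2.1, add_zero], fun s p hp => ?_⟩
        rw [smul_add, ← add_assoc]
        exact h2.2 s _ (h1.2 s p hp)
      | smul a v _ h1 =>
        refine ⟨fun i => by rw [map_smul, h1.1, smul_zero], fun s p hp => ?_⟩
        rw [smul_smul]
        exact h1.2 _ p hp
    obtain ⟨h1, h2⟩ := hprop _ hspan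
    have hzP : cz z ∈ integerHull (P A b) := by
      refine subset_convexHull ℝ _ ⟨fun i => ?_, fun i => ⟨z i, rfl⟩⟩
      have := h1 i
      rw [map_sub] at this
      have := hx i
      linarith
    have := h2 1 _ hzP
    simpa using this

lemma convex_P {m n : ℕ} (A : Fin m → Fin n → ℚ) (b : Fin m → ℚ) : Convex ℝ (P A b) := by
  have : P A b = ⋂ i, {x | L (A i) x ≤ b i} := by ext; simp [P]
  rw [this]
  exact convex_iInter fun i => convex_halfSpace_le (L (A i)).isLinear _

end SplitAux

/-- If `Q` is a rational polyhedron with `conv(Q ∩ ℤⁿ) ⊊ Q`, then `SC(Q) ⊊ Q`. -/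
theorem splitClosure_ssubset_of_integerHull_ssubset
    {n : ℕ} (Q : Set (Fin n → ℝ)) (hQ : IsRationalPolyhedron Q)
    (h : integerHull Q ⊂ Q) :
    splitClosure Q ⊂ Q := by
  obtain ⟨m, A, b, hAb⟩ := hQ
  have hP : Q = SplitAux.P A b := hAb
  subst hP
  refine ⟨?_, fun hs => h.2 fun x hx => SplitAux.mem_hull_of_mem A b hs _ x hx rfl⟩
  intro x hx
  have := Set.mem_iInter.1 hx 0
  exact convexHull_min (fun p hp => hp.1) (SplitAux.convex_P A b) this
end

section
/- Let Q ⊆ ℝⁿ be a nonempty rational polyhedron and P := conv(Q ∩ ℤⁿ). Then there exist a natural number m, vectors c_1,…,c_m ∈ ℤⁿ, integers a_1,…,a_m, and reals b_1,…,b_m with b_i ≥ a_i for all i, such that P = {x ∈ ℝⁿ : c_i·x ≤ a_i for i = 1,…,m} and Q ⊆ {x ∈ ℝⁿ : c_i·x ≤ b_i for i = 1,…,m}. -/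
open Set

/-- One-variable Fourier–Motzkin elimination. -/
lemma fm_one {ι : Type} [Fintype ι] (d r : ι → ℝ) :
    (∃ y, ∀ i, d i * y ≤ r i) ↔
      (∀ i, d i = 0 → 0 ≤ r i) ∧
        ∀ i j, 0 < d i → d j < 0 → 0 ≤ (-d j) * r i + d i * r j := by
  classical
  constructor
  · rintro ⟨y, hy⟩
    refine ⟨fun i hi => ?_, fun i j hi hj => ?_⟩
    · have := hy i
      simpa [hi] using this
    · nlinarith [hy i, hy j, mul_le_mul_of_nonneg_left (hy i) (neg_pos.2 hj).le,
        mul_le_mul_of_nonneg_left (hy j) hi.le]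
  · rintro ⟨h0, h1⟩
    have key : ∀ i j, 0 < d i → d j < 0 → r j / d j ≤ r i / d i := by
      intro i j hi hj
      rw [div_le_iff_of_neg hj, div_mul_eq_mul_div, div_le_iff₀ hi]
      nlinarith [h1 i j hi hj]
    obtain ⟨y, hy1, hy2⟩ : ∃ y, (∀ j, d j < 0 → r j / d j ≤ y) ∧
        (∀ i, 0 < d i → y ≤ r i / d i) := by
      by_cases hL : (Finset.univ.filter (fun j => d j < 0)).Nonempty
      · refine ⟨(Finset.univ.filter (fun j => d j < 0)).sup' hL (fun j => r j / d j), ?_, ?_⟩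
        · intro j hj
          exact Finset.le_sup' (fun j => r j / d j) (by simpa using hj)
        · intro i hi
          refine Finset.sup'_le _ _ (fun j hj => key i j hi (by simpa using hj))
      · have hL' : ∀ j, ¬ d j < 0 := fun j hj => hL ⟨j, by simpa using hj⟩
        by_cases hU : (Finset.univ.filter (fun j => 0 < d j)).Nonempty
        · refine ⟨(Finset.univ.filter (fun j => 0 < d j)).inf' hU (fun j => r j / d j), ?_, ?_⟩
          · intro j hj
            exact absurd hj (hL' j)
          · intro i hi
            exact Finset.inf'_le (fun j => r j / d j) (by simpa using hi)
        · exact ⟨0, fun j hj => absurd hj (hL' j),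
            fun i hi => absurd ⟨i, by simpa using hi⟩ hU⟩
    refine ⟨y, fun i => ?_⟩
    rcases lt_trichotomy (d i) 0 with h | h | h
    · have := hy1 i h
      rw [div_le_iff_of_neg h] at this
      linarith
    · rw [h]; simpa using h0 i h
    · have := hy2 i h
      rw [le_div_iff₀ h] at this
      linarith

/-- Fourier–Motzkin elimination for integral systems. -/
lemma fm_fin (n k : ℕ) : ∀ {ι : Type} [Fintype ι] (c : ι → Fin n → ℤ) (d : ι → Fin k → ℤ)
    (a : ι → ℤ), ∃ (m : ℕ) (c' : Fin m → Fin n → ℤ) (a' : Fin m → ℤ), ∀ x : Fin n → ℝ,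
      (∃ y : Fin k → ℝ, ∀ i, ∑ j, (c i j : ℝ) * x j + ∑ l, (d i l : ℝ) * y l ≤ a i) ↔
        ∀ i, ∑ j, (c' i j : ℝ) * x j ≤ (a' i : ℝ) := by
  classical
  induction k with
  | zero =>
    intro ι _ c d a
    refine ⟨Fintype.card ι, fun i => c ((Fintype.equivFin ι).symm i),
      fun i => a ((Fintype.equivFin ι).symm i), fun x => ?_⟩
    simp only [Finset.univ_eq_empty, Finset.sum_empty, add_zero, exists_const]
    constructor
    · intro h i
      exact h _
    · intro h i
      simpa using h (Fintype.equivFin ι i)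
  | succ k ih =>
    intro ι _ c d a
    let κ := {i : ι // d i 0 = 0} ⊕ ({i : ι // 0 < d i 0} × {j : ι // d j 0 < 0})
    let mk : (ι → ℤ) → κ → ℤ := fun f => Sum.elim (fun i => f i.1)
      (fun p => (-d p.2.1 0) * f p.1.1 + d p.1.1 0 * f p.2.1)
    obtain ⟨m, c', a', h⟩ := ih (ι := κ) (fun e j => mk (fun i => c i j) e)
      (fun e l => mk (fun i => d i l.succ) e) (mk a)
    refine ⟨m, c', a', fun x => ?_⟩
    rw [← h x]
    have h1 : (∃ y : Fin (k+1) → ℝ, ∀ i, ∑ j, (c i j : ℝ) * x j + ∑ l, (d i l : ℝ) * y l ≤ a i)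
        ↔ ∃ y : Fin k → ℝ, ∃ y0 : ℝ, ∀ i, (d i 0 : ℝ) * y0 ≤
          a i - ∑ j, (c i j : ℝ) * x j - ∑ l : Fin k, (d i l.succ : ℝ) * y l := by
      constructor
      · rintro ⟨y, hy⟩
        refine ⟨fun l => y l.succ, y 0, fun i => ?_⟩
        have := hy i
        rw [Fin.sum_univ_succ] at this
        linarith
      · rintro ⟨y, y0, hy⟩
        refine ⟨Fin.cons y0 y, fun i => ?_⟩
        have := hy i
        rw [Fin.sum_univ_succ]
        simp only [Fin.cons_zero, Fin.cons_succ]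
        linarith
    rw [h1]
    refine exists_congr fun y => ?_
    rw [fm_one]
    have e2 : ∀ p q : ι, (-(d q 0 : ℝ)) * (a p - ∑ j, (c p j : ℝ) * x j - ∑ l : Fin k, (d p l.succ : ℝ) * y l)
        + d p 0 * (a q - ∑ j, (c q j : ℝ) * x j - ∑ l : Fin k, (d q l.succ : ℝ) * y l)
        = ((-(d q 0) * a p + d p 0 * a q : ℤ) : ℝ)
          - (∑ j, ((-(d q 0) * c p j + d p 0 * c q j : ℤ) : ℝ) * x j
            + ∑ l : Fin k, ((-(d q 0) * d p l.succ + d p 0 * d q l.succ : ℤ) : ℝ) * y l) := by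
      intro p q
      push_cast
      simp only [add_mul, Finset.sum_add_distrib, mul_sub, Finset.mul_sum, mul_assoc]
      ring
    constructor
    · rintro ⟨hz, hp⟩ (⟨i, hi⟩ | ⟨⟨p, hp'⟩, ⟨q, hq'⟩⟩)
      · have := hz i (by exact_mod_cast hi)
        simp only [mk, Sum.elim_inl]
        linarith
      · have := hp p q (by exact_mod_cast hp') (by exact_mod_cast hq')
        rw [e2] at this
        simp only [mk, Sum.elim_inr]
        linarith
    · intro hh
      refine ⟨fun i hi => ?_, fun p q hp hq => ?_⟩
      · have := hh (Sum.inl ⟨i, by exact_mod_cast hi⟩)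
        simp only [mk, Sum.elim_inl] at this
        linarith
      · have := hh (Sum.inr (⟨p, by exact_mod_cast hp⟩, ⟨q, by exact_mod_cast hq⟩))
        simp only [mk, Sum.elim_inr] at this
        rw [e2]
        linarith

lemma fm_proj {n : ℕ} {ι κ : Type} [Fintype ι] [Fintype κ] (c : ι → Fin n → ℤ) (d : ι → κ → ℤ)
    (a : ι → ℤ) : ∃ (m : ℕ) (c' : Fin m → Fin n → ℤ) (a' : Fin m → ℤ), ∀ x : Fin n → ℝ,
      (∃ y : κ → ℝ, ∀ i, ∑ j, (c i j : ℝ) * x j + ∑ l, (d i l : ℝ) * y l ≤ a i) ↔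
        ∀ i, ∑ j, (c' i j : ℝ) * x j ≤ (a' i : ℝ) := by
  let e := Fintype.equivFin κ
  obtain ⟨m, c', a', h⟩ := fm_fin n (Fintype.card κ) c (fun i l => d i (e.symm l)) a
  refine ⟨m, c', a', fun x => ?_⟩
  rw [← h x]
  constructor
  · rintro ⟨y, hy⟩
    refine ⟨fun l => y (e.symm l), fun i => ?_⟩
    rw [Equiv.sum_comp e.symm (fun l => (d i l : ℝ) * y l)]
    exact hy i
  · rintro ⟨y, hy⟩
    refine ⟨fun l => y (e l), fun i => ?_⟩
    rw [← Equiv.sum_comp e.symm (fun l => (d i l : ℝ) * y (e l))]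
    simpa using hy i

/-- Farkas lemma for integral data. -/
lemma farkas_int {n m : ℕ} (A : Fin m → Fin n → ℤ) (c : Fin n → ℤ)
    (h : ∀ x : Fin n → ℝ, (∀ i, ∑ j, (A i j : ℝ) * x j ≤ 0) → ∑ j, (c j : ℝ) * x j ≤ 0) :
    ∃ y : Fin m → ℝ, (∀ i, 0 ≤ y i) ∧ ∀ j, (c j : ℝ) = ∑ i, y i * A i j := by
  classical
  obtain ⟨M, g, e, hg⟩ := fm_proj (n := n) (ι := Fin m ⊕ Fin n ⊕ Fin n) (κ := Fin m)
    (Sum.elim (fun _ _ => 0) (Sum.elim (fun i j => if i = j then 1 else 0)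
      (fun i j => if i = j then -1 else 0)))
    (Sum.elim (fun i l => if i = l then -1 else 0) (Sum.elim (fun i l => - A l i)
      (fun i l => A l i)))
    (fun _ => 0)
  have hg' : ∀ x : Fin n → ℝ, (∃ y : Fin m → ℝ, (∀ i, 0 ≤ y i) ∧ ∀ j, x j = ∑ i, y i * A i j) ↔
        ∀ i, ∑ j, (g i j : ℝ) * x j ≤ (e i : ℝ) := by
    intro x
    rw [← hg x]
    refine exists_congr fun y => ?_
    simp only [Sum.forall, Sum.elim_inl, Sum.elim_inr]
    simp [ite_mul, Finset.sum_ite_eq, apply_ite (Int.cast : ℤ → ℝ)]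
    intro _
    rw [← forall_and]
    refine forall_congr' fun j => ?_
    simp only [mul_comm (y _)]
    constructor
    · intro h; constructor <;> linarith
    · rintro ⟨h1, h2⟩; linarith
  apply (hg' (fun j => (c j : ℝ))).2
  intro i
  have h0 : (0:ℝ) ≤ e i := by
    have := (hg' 0).1 ⟨0, by simp, by simp⟩ i
    simpa using this
  have hr : ∀ k, ∑ j, (A k j : ℝ) * g i j ≤ 0 := by
    intro k
    by_contra hpos
    push Not at hpos
    obtain ⟨N, hN⟩ := Archimedean.arch ((e i : ℝ) + 1) hpos
    have := (hg' (fun j => N * (A k j : ℝ))).1 ⟨fun l => if l = k then N else 0,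
      fun l => by dsimp only; split_ifs <;> simp, fun j => by simp⟩ i
    have e1 : ∑ j, (g i j : ℝ) * (N * (A k j : ℝ)) = N • ∑ j, (A k j : ℝ) * g i j := by
      rw [nsmul_eq_mul, Finset.mul_sum]
      exact Finset.sum_congr rfl fun j _ => by ring
    rw [e1] at this
    linarith
  have := h (fun j => (g i j : ℝ)) hr
  calc ∑ j, (g i j : ℝ) * (c j : ℝ) = ∑ j, (c j : ℝ) * (g i j : ℝ) :=
        Finset.sum_congr rfl fun j _ => by ring
    _ ≤ e i := this.trans h0

/-- Common denominators for finite families of rationals. -/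
lemma common_denom {κ : Type} [Fintype κ] (v : κ → ℚ) :
    ∃ (N : ℕ) (z : κ → ℤ), 0 < N ∧ ∀ k, (z k : ℝ) = N * (v k : ℝ) := by
  classical
  refine ⟨∏ k, (v k).den, fun k => (v k).num * ∏ l ∈ Finset.univ.erase k, ((v l).den : ℤ),
    Finset.prod_pos fun k _ => (v k).den_pos, fun k => ?_⟩
  have h1 : (∏ k, (v k).den) = (v k).den * ∏ l ∈ Finset.univ.erase k, (v l).den :=
    (Finset.mul_prod_erase _ _ (Finset.mem_univ k)).symm
  have h2 : ((v k).num : ℝ) = (v k).den * (v k : ℝ) := by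
    have := Rat.den_mul_eq_num (v k)
    exact_mod_cast this.symm
  rw [h1]
  push_cast
  rw [h2]
  ring

/-- A cone with integral inequalities is the convex hull of its integral points. -/
lemma cone_hull {n m : ℕ} (A : Fin m → Fin n → ℤ) (x : Fin n → ℝ)
    (hx : ∀ i, ∑ j, (A i j : ℝ) * x j ≤ 0) :
    x ∈ convexHull ℝ {z : Fin n → ℝ | (∀ i, ∑ j, (A i j : ℝ) * z j ≤ 0) ∧
      ∀ j, ∃ k : ℤ, z j = k} := by
  classical
  set M := {z : Fin n → ℝ | (∀ i, ∑ j, (A i j : ℝ) * z j ≤ 0) ∧ ∀ j, ∃ k : ℤ, z j = k} with hM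
  let V := Submodule.span ℚ (range x)
  have : FiniteDimensional ℚ V := FiniteDimensional.span_of_finite ℚ (finite_range x)
  let bs := Module.finBasis ℚ V
  let t : Fin (Module.finrank ℚ V) → ℝ := fun k => (bs k : ℝ)
  let q : Fin n → Fin (Module.finrank ℚ V) → ℚ :=
    fun j k => bs.repr ⟨x j, Submodule.subset_span ⟨j, rfl⟩⟩ k
  have hq : ∀ j, x j = ∑ k, (q j k : ℝ) * t k := by
    intro j
    have := congrArg (Subtype.val) (bs.sum_repr ⟨x j, Submodule.subset_span ⟨j, rfl⟩⟩)
    simp only [AddSubmonoidClass.coe_finsetSum, Submodule.coe_smul, Rat.smul_def] at this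
    exact this.symm
  have hli : ∀ r : Fin (Module.finrank ℚ V) → ℚ, ∑ k, (r k : ℝ) * t k = 0 → ∀ k, r k = 0 := by
    intro r hr
    have h1 := bs.linearIndependent
    rw [Fintype.linearIndependent_iff] at h1
    apply h1 r
    apply Subtype.ext
    simp only [AddSubmonoidClass.coe_finsetSum, Submodule.coe_smul, Rat.smul_def]
    exact hr
  let L : (Fin (Module.finrank ℚ V) → ℝ) →ₗ[ℝ] (Fin n → ℝ) :=
    Matrix.toLin' (Matrix.of fun j k => (q j k : ℝ))
  have hL : ∀ s j, L s j = ∑ k, (q j k : ℝ) * s k := by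
    intro s j
    simp [L, Matrix.mulVec, dotProduct]
  have hLt : L t = x := by
    funext j; rw [hL, hq]
  have hAL : ∀ i s, ∑ j, (A i j : ℝ) * L s j = ∑ k, ((∑ j, (A i j : ℚ) * q j k : ℚ) : ℝ) * s k := by
    intro i s
    simp only [hL]
    push_cast
    simp only [Finset.mul_sum, Finset.sum_mul]
    rw [Finset.sum_comm]
    simp only [mul_assoc]
  have hzero : ∀ i, ∑ j, (A i j : ℝ) * x j = 0 → ∀ s, ∑ j, (A i j : ℝ) * L s j = 0 := by
    intro i hi s
    rw [← hLt, hAL] at hi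
    have := hli _ hi
    rw [hAL]
    simp [this]
  let U := {s | ∀ i, ∑ j, (A i j : ℝ) * x j < 0 → ∑ j, (A i j : ℝ) * L s j < 0}
  have hLc : Continuous L := L.continuous_of_finiteDimensional
  have hU : IsOpen U := by
    have : U = ⋂ i, {s | ∑ j, (A i j : ℝ) * x j < 0 → ∑ j, (A i j : ℝ) * L s j < 0} := by
      ext s; simp [U]
    rw [this]
    refine isOpen_iInter_of_finite fun i => ?_
    by_cases h : ∑ j, (A i j : ℝ) * x j < 0
    · simp only [h, true_imp_iff]
      refine isOpen_lt ?_ continuous_const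
      refine continuous_finsetSum _ fun j _ => ?_
      exact continuous_const.mul ((continuous_apply j).comp hLc)
    · simp [h]
  have htU : t ∈ U := by
    intro i hi
    rwa [hLt]
  obtain ⟨ε, hε, hball⟩ := Metric.isOpen_iff.1 hU t htU
  let B : Set (Fin (Module.finrank ℚ V) → ℝ) :=
    Set.univ.pi fun k => {r : ℝ | (∃ p : ℚ, r = p) ∧ |r - t k| < ε}
  have htB : t ∈ convexHull ℝ B := by
    refine mem_convexHull_pi fun k _ => ?_
    obtain ⟨p1, hp1, hp1'⟩ := exists_rat_btwn (show t k - ε < t k by linarith)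
    obtain ⟨p2, hp2, hp2'⟩ := exists_rat_btwn (show t k < t k + ε by linarith)
    have m1 : (p1 : ℝ) ∈ {r : ℝ | (∃ p : ℚ, r = p) ∧ |r - t k| < ε} :=
      ⟨⟨p1, rfl⟩, by rw [abs_lt]; constructor <;> linarith⟩
    have m2 : (p2 : ℝ) ∈ {r : ℝ | (∃ p : ℚ, r = p) ∧ |r - t k| < ε} :=
      ⟨⟨p2, rfl⟩, by rw [abs_lt]; constructor <;> linarith⟩
    refine segment_subset_convexHull m1 m2 ?_
    rw [segment_eq_Icc (by linarith)]
    exact ⟨hp1'.le, hp2.le⟩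
  have hx' : x ∈ L '' convexHull ℝ B := ⟨t, htB, hLt⟩
  rw [LinearMap.image_convexHull] at hx'
  refine convexHull_min ?_ (convex_convexHull ℝ M) hx'
  rintro _ ⟨s, hs, rfl⟩
  have hsU : s ∈ U := by
    apply hball
    rw [Metric.mem_ball, dist_pi_lt_iff hε]
    intro k
    rw [Real.dist_eq]
    exact (hs k trivial).2
  have hsC : ∀ i, ∑ j, (A i j : ℝ) * L s j ≤ 0 := by
    intro i
    rcases (hx i).lt_or_eq with h | h
    · exact (hsU i h).le
    · exact (hzero i h s).le
  choose p hp using fun k => (hs k trivial).1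
  obtain ⟨N, z, hN, hz⟩ := common_denom (fun j => ∑ k, q j k * p k)
  have hz' : ∀ j, (z j : ℝ) = N * L s j := by
    intro j
    rw [hz, hL]
    push_cast
    simp only [hp]
  have hN' : (0:ℝ) < N := by exact_mod_cast hN
  have hN1 : (1:ℝ) ≤ N := by exact_mod_cast hN
  have m0 : (0 : Fin n → ℝ) ∈ M := ⟨by simp, fun j => ⟨0, by simp⟩⟩
  have m1 : (N : ℝ) • L s ∈ M := by
    refine ⟨fun i => ?_, fun j => ⟨z j, by simp [hz']⟩⟩
    have : ∑ j, (A i j : ℝ) * ((N : ℝ) • L s) j = N * ∑ j, (A i j : ℝ) * L s j := by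
      rw [Finset.mul_sum]
      exact Finset.sum_congr rfl fun j _ => by simp only [Pi.smul_apply, smul_eq_mul]; ring
    rw [this]
    exact mul_nonpos_of_nonneg_of_nonpos hN'.le (hsC i)
  refine segment_subset_convexHull m0 m1 ⟨1 - (N:ℝ)⁻¹, (N:ℝ)⁻¹, ?_, by positivity, by ring, ?_⟩
  · have := inv_le_one_of_one_le₀ hN1
    linarith
  · rw [smul_zero, zero_add, smul_smul, inv_mul_cancel₀ hN'.ne', one_smul]

/-- Dickson lemma: integral points of a polyhedron, modulo its recession cone. -/
lemma dickson_points {n m : ℕ} (A : Fin m → Fin n → ℤ) (b : Fin m → ℤ) :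
    ∃ F : Finset (Fin n → ℤ), (∀ f ∈ F, ∀ i, ∑ j, A i j * f j ≤ b i) ∧
      ∀ z : Fin n → ℤ, (∀ i, ∑ j, A i j * z j ≤ b i) →
        ∃ f ∈ F, ∀ i, ∑ j, A i j * (z j - f j) ≤ 0 := by
  classical
  let S : Set (Fin n → ℤ) := {z | ∀ i, ∑ j, A i j * z j ≤ b i}
  let φ : (Fin n → ℤ) → (Fin m → ℕ) := fun z i => (b i - ∑ j, A i j * z j).toNat
  let I : Set (Fin m → ℕ) := {w | Minimal (fun w => w ∈ φ '' S) w}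
  have hI : I.Finite :=
    WellQuasiOrderedLE.finite_of_isAntichain (setOfPred_minimal_antichain _)
  have hIS : ∀ w ∈ I, ∃ z ∈ S, φ z = w := fun w hw => hw.1
  choose! g hg1 hg2 using hIS
  refine ⟨hI.toFinset.image g, ?_, ?_⟩
  · intro f hf
    obtain ⟨w, hw, rfl⟩ := Finset.mem_image.1 hf
    exact hg1 w (hI.mem_toFinset.1 hw)
  · intro z hz
    obtain ⟨w, hw, hmin⟩ := exists_minimal_le_of_wellFoundedLT (fun w => w ∈ φ '' S) (φ z)
      ⟨z, hz, rfl⟩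
    refine ⟨g w, Finset.mem_image.2 ⟨w, hI.mem_toFinset.2 hmin, rfl⟩, fun i => ?_⟩
    have h1 := hw i
    rw [← hg2 w hmin] at h1
    have h2 := hg1 w hmin i
    have h3 := hz i
    simp only [φ] at h1
    simp only [mul_sub, Finset.sum_sub_distrib]
    omega

open scoped Pointwise

/-- For a nonempty rational polyhedron `Q` there is an integral system `Cx ≤ a`
defining the integer hull `P = conv(Q ∩ ℤⁿ)` together with right-hand sides `b ≥ a`
such that `Q ⊆ {x : Cx ≤ b}`. -/
theorem exists_integral_system_for_integer_hull
    {n : ℕ} (Q : Set (Fin n → ℝ)) (hQ : IsRationalPolyhedron Q) (hne : Q.Nonempty) :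
    ∃ (m : ℕ) (c : Fin m → Fin n → ℤ) (a : Fin m → ℤ) (b : Fin m → ℝ),
      (∀ i, (a i : ℝ) ≤ b i) ∧
      integerHull Q = {x | ∀ i, ∑ j, (c i j : ℝ) * x j ≤ (a i : ℝ)} ∧
      Q ⊆ {x | ∀ i, ∑ j, (c i j : ℝ) * x j ≤ b i} := by
  classical
  -- integral description of `Q`
  obtain ⟨m, A, b, hAb⟩ : ∃ (m : ℕ) (A : Fin m → Fin n → ℤ) (b : Fin m → ℤ),
      Q = {x | ∀ i, ∑ j, (A i j : ℝ) * x j ≤ (b i : ℝ)} := by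
    obtain ⟨m, A, b, h⟩ := hQ
    choose N z hN hz using fun i => common_denom (fun o : Option (Fin n) => o.elim (b i) (A i))
    refine ⟨m, fun i j => z i (some j), fun i => z i none, ?_⟩
    rw [h]
    ext x
    refine forall_congr' fun i => ?_
    have hN' : (0:ℝ) < N i := by exact_mod_cast hN i
    have : ∑ j, (z i (some j) : ℝ) * x j = N i * ∑ j, (A i j : ℝ) * x j := by
      simp only [hz, Option.elim, Finset.mul_sum, mul_assoc]
    rw [this, hz]
    simp only [Option.elim]
    exact (mul_le_mul_iff_right₀ hN').symm
  obtain ⟨F, hF1, hF2⟩ := dickson_points A b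
  let M : Set (Fin n → ℝ) := {z : Fin n → ℝ | (∀ i, ∑ j, (A i j : ℝ) * z j ≤ 0) ∧
      ∀ j, ∃ k : ℤ, z j = k}
  let C : Set (Fin n → ℝ) := {z : Fin n → ℝ | (∀ i, ∑ j, (A i j : ℝ) * z j ≤ 0)}
  let v : F → (Fin n → ℝ) := fun f j => ((f.1 j : ℤ) : ℝ)
  have hconv : Convex ℝ C := by
    intro x hx y hy s t hs ht _ i
    have : ∑ j, (A i j : ℝ) * (s • x + t • y) j
        = s * ∑ j, (A i j : ℝ) * x j + t * ∑ j, (A i j : ℝ) * y j := by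
      simp only [Finset.mul_sum, ← Finset.sum_add_distrib, Pi.add_apply, Pi.smul_apply,
        smul_eq_mul]
      exact Finset.sum_congr rfl fun j _ => by ring
    rw [this]
    have h1 := mul_nonpos_of_nonneg_of_nonpos hs (hx i)
    have h2 := mul_nonpos_of_nonneg_of_nonpos ht (hy i)
    linarith
  have hMC : convexHull ℝ M = C := by
    apply Subset.antisymm
    · exact convexHull_min (fun z hz => hz.1) hconv
    · exact fun x hx => cone_hull A x hx
  have hQZ : {x ∈ Q | ∀ i, ∃ z : ℤ, x i = (z : ℝ)} = range v + M := by
    ext x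
    constructor
    · rintro ⟨hxQ, hxZ⟩
      choose z hz using hxZ
      rw [hAb] at hxQ
      obtain ⟨f, hf, hzf⟩ := hF2 z (fun i => by
        have := hxQ i
        simp only [hz] at this
        exact_mod_cast this)
      refine ⟨v ⟨f, hf⟩, ⟨_, rfl⟩, fun j => ((z j - f j : ℤ) : ℝ), ⟨fun i => ?_, fun j => ⟨_, rfl⟩⟩, ?_⟩
      · have := hzf i
        dsimp only
        exact_mod_cast this
      · funext j
        simp [v, hz]
    · rintro ⟨_, ⟨⟨f, hf⟩, rfl⟩, y, ⟨hy1, hy2⟩, rfl⟩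
      refine ⟨?_, fun j => ?_⟩
      · rw [hAb]
        intro i
        have h1 : ∑ j, (A i j : ℝ) * (f j : ℝ) ≤ b i := by exact_mod_cast hF1 f hf i
        have h2 := hy1 i
        simp only [v, Pi.add_apply, mul_add, Finset.sum_add_distrib]
        linarith
      · obtain ⟨k, hk⟩ := hy2 j
        exact ⟨f j + k, by simp [v, hk]⟩
  have hP : integerHull Q = convexHull ℝ (range v) + C := by
    rw [integerHull, hQZ, convexHull_add, hMC]
  by_cases hFe : F = ∅
  · refine ⟨1, fun _ _ => 0, fun _ => -1, fun _ => 0, by simp, ?_, by simp⟩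
    have : IsEmpty F := by rw [hFe]; infer_instance
    rw [hP, range_eq_empty]
    ext x
    simp
  obtain ⟨f0, hf0⟩ := Finset.nonempty_iff_ne_empty.2 hFe
  -- Polyhedral description of the hull
  obtain ⟨K, c, a, hca⟩ := fm_proj (n := n) (ι := F ⊕ Fin m ⊕ Bool) (κ := F)
    (Sum.elim (fun _ _ => 0) (Sum.elim (fun i => A i) (fun _ _ => 0)))
    (Sum.elim (fun f l => if f = l then -1 else 0)
      (Sum.elim (fun i l => - ∑ j, A i j * l.1 j) (fun s _ => if s then 1 else -1)))
    (Sum.elim (fun _ => 0) (Sum.elim (fun _ => 0) (fun s => if s then 1 else -1)))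
  have hPP : integerHull Q = {x | ∀ i, ∑ j, (c i j : ℝ) * x j ≤ (a i : ℝ)} := by
    ext x
    rw [mem_ofPred_eq, ← hca x, hP]
    have h1 : x ∈ convexHull ℝ (range v) + C ↔ ∃ w : F → ℝ, (∀ f, 0 ≤ w f) ∧ ∑ f, w f = 1 ∧
        x - ∑ f, w f • v f ∈ C := by
      constructor
      · rintro ⟨u, hu, y, hy, rfl⟩
        rw [convexHull_range_eq_exists_affineCombination] at hu
        obtain ⟨s, w, hw0, hw1, rfl⟩ := hu
        have hs : F.attach ∩ s = s := by ext; simp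
        refine ⟨fun f => if f ∈ s then w f else 0, fun f => ?_, ?_, ?_⟩
        · dsimp only
          split_ifs with h
          · exact hw0 f h
          · exact le_rfl
        · simpa [hs] using hw1
        · rw [Finset.affineCombination_eq_linear_combination s v w hw1]
          simpa [ite_smul, hs] using hy
      · rintro ⟨w, hw0, hw1, hw⟩
        refine ⟨∑ f, w f • v f, ?_, _, hw, by simp⟩
        exact (convex_convexHull ℝ _).sum_mem (fun f _ => hw0 f) hw1
          (fun f _ => subset_convexHull ℝ _ ⟨f, rfl⟩)
    rw [h1]
    refine exists_congr fun w => ?_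
    have h2 : ∀ i, ∑ j, (A i j : ℝ) * (x - ∑ f, w f • v f) j = ∑ j, (A i j : ℝ) * x j +
        ∑ l : F, ((- ∑ j, A i j * l.1 j : ℤ) : ℝ) * w l := by
      intro i
      push_cast
      simp only [Pi.sub_apply, mul_sub, Finset.sum_sub_distrib, Finset.sum_apply, Pi.smul_apply,
        smul_eq_mul, Finset.mul_sum, neg_mul, Finset.sum_neg_distrib, Finset.sum_mul, v]
      rw [Finset.sum_comm, ← sub_eq_add_neg]
      congr 1
      exact Finset.sum_congr rfl fun l _ => Finset.sum_congr rfl fun j _ => by ring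
    have h3 : (x - ∑ f, w f • v f ∈ C) ↔ ∀ i, ∑ j, (A i j : ℝ) * x j +
        ∑ l : F, ((- ∑ j, A i j * l.1 j : ℤ) : ℝ) * w l ≤ 0 :=
      forall_congr' fun i => by rw [h2]
    rw [h3]
    simp only [Sum.forall, Sum.elim_inl, Sum.elim_inr, Bool.forall_bool, if_true,
      Bool.false_eq_true, if_false, Int.cast_zero, zero_mul, Finset.sum_const_zero, zero_add,
      Int.cast_one, one_mul, apply_ite (Int.cast : ℤ → ℝ), ite_mul, Finset.sum_ite_eq,
      Finset.mem_univ, Int.cast_neg, neg_mul, Finset.sum_neg_distrib]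
    constructor
    · rintro ⟨g1, g2, g3⟩
      exact ⟨fun f => by have := g1 f; linarith, g3, by linarith, by linarith⟩
    · rintro ⟨g1, g3, g4, g5⟩
      exact ⟨fun f => by have := g1 f; linarith, by linarith, g3⟩
  have hrec : ∀ i, ∀ x : Fin n → ℝ, (∀ i, ∑ j, (A i j : ℝ) * x j ≤ 0) →
      ∑ j, (c i j : ℝ) * x j ≤ 0 := by
    intro i x hx
    by_contra hpos
    push Not at hpos
    obtain ⟨N, hN⟩ := Archimedean.arch ((a i : ℝ) - ∑ j, (c i j : ℝ) * (f0 j : ℝ) + 1) hpos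
    have hmem : v ⟨f0, hf0⟩ + (N : ℝ) • x ∈ integerHull Q := by
      rw [hP]
      refine add_mem_add (subset_convexHull ℝ _ ⟨_, rfl⟩) fun k => ?_
      have : ∑ j, (A k j : ℝ) * ((N : ℝ) • x) j = N * ∑ j, (A k j : ℝ) * x j := by
        rw [Finset.mul_sum]
        exact Finset.sum_congr rfl fun j _ => by simp only [Pi.smul_apply, smul_eq_mul]; ring
      rw [this]
      exact mul_nonpos_of_nonneg_of_nonpos (Nat.cast_nonneg N) (hx k)
    rw [hPP] at hmem
    have h1 := hmem i
    have h2 : ∑ j, (c i j : ℝ) * (v ⟨f0, hf0⟩ + (N : ℝ) • x) j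
        = ∑ j, (c i j : ℝ) * (f0 j : ℝ) + N • ∑ j, (c i j : ℝ) * x j := by
      rw [nsmul_eq_mul, Finset.mul_sum, ← Finset.sum_add_distrib]
      exact Finset.sum_congr rfl fun j _ => by
        simp only [v, Pi.add_apply, Pi.smul_apply, smul_eq_mul]; ring
    rw [h2] at h1
    linarith
  choose y hy0 hy using fun i => farkas_int A (c i) (hrec i)
  refine ⟨K, c, a, fun i => max (a i : ℝ) (∑ k, y i k * b k), fun i => le_max_left _ _, hPP, ?_⟩
  intro x hx i
  rw [hAb] at hx
  refine le_trans ?_ (le_max_right _ _)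
  calc ∑ j, (c i j : ℝ) * x j = ∑ k, y i k * ∑ j, (A k j : ℝ) * x j := by
        simp only [hy, Finset.sum_mul, Finset.mul_sum]
        rw [Finset.sum_comm]
        simp only [mul_assoc]
    _ ≤ _ := Finset.sum_le_sum fun k _ => mul_le_mul_of_nonneg_left (hx k) (hy0 i k)
end

section
/- Let g_1,…,g_k ∈ ℚⁿ be linearly independent vectors (1 ≤ k ≤ n). Then there exists a lattice basis w_1,…,w_n of ℤⁿ (i.e. integer vectors such that every point of ℤⁿ is a unique integer linear combination of w_1,…,w_n) with w_1,…,w_k ∈ cone(g_1,…,g_k), where cone(g_1,…,g_k) denotes the set of all nonnegative real linear combinations of g_1,…,g_k. -/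
open Set

/-- A basis of a saturated subgroup extends to a basis of the lattice. -/
theorem extend_basis_aux {M : Type*} [AddCommGroup M] [Module.Finite ℤ M]
    (N : Submodule ℤ M) (hN : ∀ (a : ℤ) (x : M), a ≠ 0 → a • x ∈ N → x ∈ N)
    {ι : Type*} (b : Module.Basis ι ℤ N) :
    ∃ (p : ℕ) (B : Module.Basis (ι ⊕ Fin p) ℤ M), ∀ i, B (Sum.inl i) = b i := by
  have : Module.IsTorsionFree ℤ (M ⧸ N) := by
    refine Module.IsTorsionFree.of_smul_eq_zero ?_
    intro a x h
    induction x using Submodule.Quotient.induction_on with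
    | _ x =>
      rw [← Submodule.Quotient.mk_smul, Submodule.Quotient.mk_eq_zero] at h
      by_cases ha : a = 0
      · exact Or.inl ha
      · exact Or.inr ((Submodule.Quotient.mk_eq_zero N).2 (hN a x ha h))
  refine ⟨_, b.sumQuot (Module.finBasis ℤ (M ⧸ N)), fun i => ?_⟩
  simp

/-- The inclusion of the integer lattice in rational space. -/
def castAux (n : ℕ) : (Fin n → ℤ) →ₗ[ℤ] (Fin n → ℚ) where
  toFun x := fun l => (x l : ℚ)
  map_add' x y := by ext; simp
  map_smul' a x := by ext; simp

theorem castAux_apply {n : ℕ} (x : Fin n → ℤ) (l : Fin n) : castAux n x l = (x l : ℚ) := rfl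

/-- The lattice points of a rational subspace. -/
def latAux {n : ℕ} (W : Submodule ℚ (Fin n → ℚ)) : Submodule ℤ (Fin n → ℤ) :=
  (W.restrictScalars ℤ).comap (castAux n)

theorem mem_latAux {n : ℕ} (W : Submodule ℚ (Fin n → ℚ)) (x : Fin n → ℤ) :
    x ∈ latAux W ↔ castAux n x ∈ W := Iff.rfl

theorem latAux_sat {n : ℕ} (W : Submodule ℚ (Fin n → ℚ)) (a : ℤ) (x : Fin n → ℤ) (ha : a ≠ 0)
    (h : a • x ∈ latAux W) : x ∈ latAux W := by
  rw [mem_latAux, map_smul] at h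
  rw [mem_latAux]
  have h2 := W.smul_mem ((a : ℚ)⁻¹) h
  rw [← Int.cast_smul_eq_zsmul ℚ, smul_smul, inv_mul_cancel₀ (by exact_mod_cast ha), one_smul] at h2
  exact h2

theorem clear_denoms_aux {n k : ℕ} (g : Fin k → Fin n → ℚ) :
    ∃ (d : ℤ) (h : Fin k → Fin n → ℤ), d ≠ 0 ∧ ∀ j, castAux n (h j) = (d : ℚ) • g j := by
  obtain ⟨b, hb⟩ := IsLocalization.exist_integer_multiples_of_finite (nonZeroDivisors ℤ)
    (fun p : Fin k × Fin n => g p.1 p.2)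
  choose z hz using hb
  refine ⟨b, fun j l => z (j, l), nonZeroDivisors.coe_ne_zero b, fun j => ?_⟩
  ext l
  have := hz (j, l)
  simpa [castAux_apply] using this

/-- The core: a basis extending a family of lattice vectors inside the cone. -/
theorem core_aux {n k : ℕ} (hk1 : 1 ≤ k) (g : Fin k → Fin n → ℚ) (hg : LinearIndependent ℚ g) :
    ∃ (m p : ℕ) (w : Module.Basis (Fin m ⊕ Fin p) ℤ (Fin n → ℤ)), k ≤ m ∧
      ∀ i : Fin m, ∃ c : Fin k → ℚ, (∀ j, 0 ≤ c j) ∧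
        castAux n (w (Sum.inl i)) = ∑ j, c j • g j := by
  classical
  obtain ⟨d, h, hd, hh⟩ := clear_denoms_aux g
  have hdq : (d : ℚ) ≠ 0 := by exact_mod_cast hd
  have hlin : LinearIndependent ℤ h := by
    have h1 : LinearIndependent ℚ (fun j => (d : ℚ) • g j) :=
      hg.units_smul (fun _ => Units.mk0 (d : ℚ) hdq)
    have h2 : LinearIndependent ℤ (fun j => (d : ℚ) • g j) :=
      h1.restrict_scalars (by intro a b hab; simpa using hab)
    refine LinearIndependent.of_comp (castAux n) ?_
    convert h2 using 1
    ext1 j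
    exact hh j
  set L := latAux (Submodule.span ℚ (Set.range g)) with hL
  have hhL : ∀ j, h j ∈ L := fun j => by
    rw [hL, mem_latAux, hh]
    exact Submodule.smul_mem _ _ (Submodule.subset_span ⟨j, rfl⟩)
  have hrank : k ≤ Module.finrank ℤ L := by
    have : LinearIndependent ℤ (fun j => (⟨h j, hhL j⟩ : L)) :=
      LinearIndependent.of_comp L.subtype hlin
    simpa using this.fintype_card_le_finrank
  set S : Submodule ℤ L := (latAux (Submodule.span ℚ {∑ j, g j})).comap L.subtype with hS
  have hs0 : ∑ j, h j ≠ 0 := by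
    intro h0
    have := linearIndependent_iff'.1 hlin Finset.univ (fun _ => 1) (by simpa using h0) ⟨0, hk1⟩
      (Finset.mem_univ _)
    exact one_ne_zero this
  have hsS : (⟨∑ j, h j, L.sum_mem fun j _ => hhL j⟩ : L) ∈ S := by
    rw [hS, Submodule.mem_comap, mem_latAux]
    simp only [Submodule.subtype_apply, map_sum, hh, ← Finset.smul_sum]
    exact Submodule.smul_mem _ _ (Submodule.mem_span_singleton_self _)
  -- a basis of `S` with an element having positive coordinates
  obtain ⟨r, bS, i0, c0, hc0, hbc⟩ : ∃ (r : ℕ) (bS : Module.Basis (Fin r) ℤ S) (i0 : Fin r)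
      (c0 : ℚ), 0 < c0 ∧ castAux n ((bS i0 : L) : Fin n → ℤ) = c0 • ∑ j, g j := by
    have b := Module.finBasis ℤ S
    have hne : Nonempty (Fin (Module.finrank ℤ S)) := by
      by_contra hemp
      rw [not_nonempty_iff] at hemp
      have : Subsingleton S := b.repr.toEquiv.subsingleton
      have h1 := Subsingleton.elim (⟨_, hsS⟩ : S) 0
      apply hs0
      exact congrArg (fun x : S => ((x : L) : Fin n → ℤ)) h1
    obtain ⟨i0⟩ := hne
    obtain ⟨c, hc⟩ := Submodule.mem_span_singleton.1
      ((mem_latAux _ _).1 (Submodule.mem_comap.1 (b i0).2))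
    rcases lt_trichotomy c 0 with hlt | heq | hgt
    · refine ⟨_, b.map (LinearEquiv.neg ℤ), i0, -c, by linarith, ?_⟩
      rw [neg_smul, hc]
      simp
    · exfalso
      rw [heq, zero_smul] at hc
      apply b.ne_zero i0
      apply Subtype.ext
      apply Subtype.ext
      ext l
      have := congrFun hc l
      rw [castAux_apply] at this
      simpa using this.symm
    · exact ⟨_, b, i0, c, hgt, hc.symm⟩
  obtain ⟨q, bL, hbL⟩ := extend_basis_aux S (fun a x ha hx => latAux_sat (Submodule.span ℚ {∑ j, g j}) a (x : Fin n → ℤ) ha hx) bS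
  set bL' := bL.reindex finSumFinEquiv with hbL'
  obtain ⟨p, B, hB⟩ := extend_basis_aux L (fun a x ha hx => latAux_sat _ a x ha hx) bL'
  set i1 : Fin (r + q) := finSumFinEquiv (Sum.inl i0) with hi1
  have hu : castAux n (B (Sum.inl i1)) = c0 • ∑ j, g j := by
    rw [hB, hbL', Module.Basis.reindex_apply, hi1, Equiv.symm_apply_apply, hbL, hbc]
  have hex : ∀ i : Fin (r + q), ∃ N : ℤ, (i = i1 → N = 0) ∧ ∃ c : Fin k → ℚ, (∀ j, 0 ≤ c j) ∧
      castAux n (B (Sum.inl i) + N • B (Sum.inl i1)) = ∑ j, c j • g j := by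
    intro i
    by_cases hi : i = i1
    · refine ⟨0, fun _ => rfl, fun _ => c0, fun _ => hc0.le, ?_⟩
      rw [hi, zero_smul, add_zero, hu, Finset.smul_sum]
    · have hmem : castAux n (B (Sum.inl i)) ∈ Submodule.span ℚ (Set.range g) := by
        rw [← mem_latAux, hB]
        exact (bL' i).2
      obtain ⟨a, ha⟩ := (Submodule.mem_span_range_iff_exists_fun ℚ).1 hmem
      obtain ⟨N, hN⟩ := exists_nat_ge ((∑ j, |a j|) / c0)
      refine ⟨N, fun h => absurd h hi, fun j => a j + N * c0, fun j => ?_, ?_⟩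
      · rw [div_le_iff₀ hc0] at hN
        have h1 : |a j| ≤ ∑ j, |a j| :=
          Finset.single_le_sum (f := fun j => |a j|) (fun j _ => abs_nonneg _) (Finset.mem_univ j)
        have h2 := neg_abs_le (a j)
        linarith
      · rw [map_add, map_smul, hu, ← ha, ← Int.cast_smul_eq_zsmul ℚ, smul_smul, Finset.smul_sum,
          ← Finset.sum_add_distrib]
        simp [add_smul]
  choose N hN0 hN using hex
  let f : Module.Dual ℤ (Fin n → ℤ) := B.constr ℤ (Sum.elim N (fun _ => 0))
  have hf : f (B (Sum.inl i1)) = 0 := by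
    simp [f, Module.Basis.constr_basis, hN0 i1 rfl]
  refine ⟨r + q, p, B.map (LinearEquiv.transvection hf), ?_, fun i => ?_⟩
  · rw [Module.finrank_eq_card_basis bL'] at hrank
    simpa using hrank
  · obtain ⟨c, hc, hc'⟩ := hN i
    refine ⟨c, hc, ?_⟩
    rw [← hc', Module.Basis.map_apply, LinearEquiv.transvection.apply]
    simp [f, Module.Basis.constr_basis]

/-- Given linearly independent rational vectors `g₁, …, g_k` (with `1 ≤ k ≤ n`), there is
a lattice basis `w₁, …, w_n` of `ℤⁿ` whose first `k` members lie in the cone generated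
by `g₁, …, g_k`. -/
theorem exists_lattice_basis_in_cone
    {n k : ℕ} (hk1 : 1 ≤ k) (hkn : k ≤ n)
    (g : Fin k → Fin n → ℚ) (hg : LinearIndependent ℚ g) :
    ∃ w : Fin n → Fin n → ℤ,
      (∀ v : Fin n → ℤ, ∃! lam : Fin n → ℤ, v = ∑ i, lam i • w i) ∧
      ∀ i : Fin k, ∃ lam : Fin k → ℝ, (∀ j, 0 ≤ lam j) ∧
        (fun l => (w (Fin.castLE hkn i) l : ℝ)) =
          ∑ j, lam j • (fun l => (g j l : ℝ)) := by
  obtain ⟨m, p, w, hkm, hw⟩ := core_aux hk1 g hg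
  have hcard : m + p = n := by
    have := Module.finrank_eq_card_basis w
    simpa using this.symm
  let e : Fin m ⊕ Fin p ≃ Fin n := finSumFinEquiv.trans (finCongr hcard)
  let w' := w.reindex e
  refine ⟨w', fun v => ⟨w'.repr v, (w'.sum_repr v).symm, fun lam hlam => ?_⟩, fun i => ?_⟩
  · ext i
    rw [hlam, w'.repr_sum_self]
  · have hi : w' (Fin.castLE hkn i) = w (Sum.inl (Fin.castLE hkm i)) := by
      have : Fin.castLE hkn i = e (Sum.inl (Fin.castLE hkm i)) := by
        ext; simp [e]
      rw [this]
      simp [w']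
    obtain ⟨c, hc, hc'⟩ := hw (Fin.castLE hkm i)
    refine ⟨fun j => (c j : ℝ), fun j => Rat.cast_nonneg.2 (hc j), ?_⟩
    ext l
    have := congrFun hc' l
    rw [castAux_apply] at this
    rw [hi]
    simp only [Finset.sum_apply, Pi.smul_apply, smul_eq_mul] at this ⊢
    exact_mod_cast this
end

section
/- Let Q ⊆ ℝⁿ be a rational polyhedron and D ⊆ ℤⁿ a finite set. Then the D-split closure SC_D(Q) := ⋂_{d ∈ D} conv({x ∈ Q : d·x ∈ ℤ}) is again a rational polyhedron; in particular, for a single d ∈ ℤⁿ, conv({x ∈ Q : d·x ∈ ℤ}) is a rational polyhedron. -/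
open Set

/-- The `D`-split closure of a set `Q ⊆ ℝⁿ` for a finite set `D` of integer directions. -/
def splitClosureD {n : ℕ} (D : Finset (Fin n → ℤ)) (Q : Set (Fin n → ℝ)) :
    Set (Fin n → ℝ) :=
  ⋂ d ∈ D, convexHull ℝ {x ∈ Q | ∃ z : ℤ, ∑ i, (d i : ℝ) * x i = (z : ℝ)}

set_option linter.unusedSectionVars false

section Helpers

variable {ι : Type*} [Fintype ι] [DecidableEq ι]

/-- coercion of a rational vector -/
def cst (a : ι → ℚ) : ι → ℝ := fun i => (a i : ℝ)

/-- rational functional -/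
noncomputable def dt (a : ι → ℚ) (x : ι → ℝ) : ℝ := ∑ i, (a i : ℝ) * x i

/-- cone generated by finitely many rational vectors -/
def GC (G : Finset (ι → ℚ)) : Set (ι → ℝ) :=
  {x | ∃ l : (ι → ℚ) → ℝ, (∀ r, 0 ≤ l r) ∧ x = ∑ r ∈ G, l r • cst r}

lemma dt_add (a : ι → ℚ) (x y : ι → ℝ) : dt a (x + y) = dt a x + dt a y := by
  simp [dt, mul_add, Finset.sum_add_distrib]

lemma dt_smul (a : ι → ℚ) (t : ℝ) (x : ι → ℝ) : dt a (t • x) = t * dt a x := by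
  simp only [dt, Pi.smul_apply, smul_eq_mul, Finset.mul_sum]
  exact Finset.sum_congr rfl fun i _ => by ring

lemma dt_sub (a : ι → ℚ) (x y : ι → ℝ) : dt a (x - y) = dt a x - dt a y := by
  simp [dt, mul_sub, Finset.sum_sub_distrib]

lemma dt_sum {J : Type*} (a : ι → ℚ) (s : Finset J) (f : J → ι → ℝ) :
    dt a (∑ j ∈ s, f j) = ∑ j ∈ s, dt a (f j) := by
  simp only [dt, Finset.sum_apply, Finset.mul_sum]
  exact Finset.sum_comm

lemma dt_cst (a b : ι → ℚ) : dt a (cst b) = ((∑ i, a i * b i : ℚ) : ℝ) := by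
  simp [dt, cst]

lemma dt_comm (a b : ι → ℚ) : dt a (cst b) = dt b (cst a) := by
  simp [dt, cst, mul_comm]

lemma dt_comb (p q : ℚ) (a b : ι → ℚ) (x : ι → ℝ) :
    dt (p • a - q • b) x = (p : ℝ) * dt a x - (q : ℝ) * dt b x := by
  simp only [dt, Finset.mul_sum, ← Finset.sum_sub_distrib]
  exact Finset.sum_congr rfl fun i _ => by simp; ring

lemma GC_add {G : Finset (ι → ℚ)} {x y : ι → ℝ} (hx : x ∈ GC G) (hy : y ∈ GC G) :
    x + y ∈ GC G := by
  obtain ⟨l, hl, rfl⟩ := hx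
  obtain ⟨m, hm, rfl⟩ := hy
  exact ⟨fun r => l r + m r, fun r => add_nonneg (hl r) (hm r), by
    simp [add_smul, Finset.sum_add_distrib]⟩

lemma GC_zero (G : Finset (ι → ℚ)) : (0 : ι → ℝ) ∈ GC G :=
  ⟨fun _ => 0, fun _ => le_rfl, by simp⟩

lemma GC_mem {G : Finset (ι → ℚ)} {g : ι → ℚ} (hg : g ∈ G) {t : ℝ} (ht : 0 ≤ t) :
    t • cst g ∈ GC G := by
  refine ⟨fun r => if r = g then t else 0, fun r => ?_, ?_⟩
  · dsimp only; split_ifs <;> simp [ht]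
  · simp [ite_smul, hg]

lemma GC_sum {J : Type*} {G : Finset (ι → ℚ)} (s : Finset J) (f : J → ι → ℝ)
    (h : ∀ j ∈ s, f j ∈ GC G) : ∑ j ∈ s, f j ∈ GC G :=
  Finset.sum_induction f (· ∈ GC G) (fun _ _ => GC_add) (GC_zero G) h

lemma GC_mono {G G' : Finset (ι → ℚ)} (h : G ⊆ G') {x : ι → ℝ} (hx : x ∈ GC G) :
    x ∈ GC G' := by
  obtain ⟨l, hl, rfl⟩ := hx
  exact GC_sum _ _ fun g hg => GC_mem (h hg) (hl g)

lemma GC_insert {G : Finset (ι → ℚ)} {r : ι → ℚ} (hr : r ∉ G) (x : ι → ℝ) :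
    x ∈ GC (insert r G) ↔ ∃ t : ℝ, 0 ≤ t ∧ x - t • cst r ∈ GC G := by
  constructor
  · rintro ⟨l, hl, rfl⟩
    refine ⟨l r, hl r, l, hl, ?_⟩
    rw [Finset.sum_insert hr]; simp
  · rintro ⟨t, ht, h⟩
    have h1 := GC_add (GC_mono (Finset.subset_insert r G) h) (GC_mem (Finset.mem_insert_self r G) ht)
    simpa using h1

lemma weyl (G : Finset (ι → ℚ)) :
    ∃ F : Finset (ι → ℚ), ∀ x : ι → ℝ, x ∈ GC G ↔ ∀ a ∈ F, dt a x ≤ 0 := by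
  induction G using Finset.induction_on with
  | empty =>
    refine ⟨Finset.univ.image (fun i => Pi.single i 1) ∪
      Finset.univ.image (fun i => Pi.single i (-1)), fun x => ?_⟩
    have h1 : ∀ (i : ι) (c : ℚ), dt (Pi.single i c) x = c * x i := by
      intro i c
      unfold dt
      rw [Finset.sum_eq_single i]
      · simp
      · intro j _ hj; simp [hj]
      · simp
    constructor
    · rintro ⟨l, hl, rfl⟩ a ha
      simp [dt]
    · intro h
      refine ⟨fun _ => 0, fun _ => le_rfl, ?_⟩
      funext i
      have ha := h (Pi.single i 1) (by simp)
      have hb := h (Pi.single i (-1)) (by simp)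
      rw [h1] at ha hb
      push_cast at ha hb
      simp
      linarith
  | insert r G hr ih =>
    obtain ⟨F, hF⟩ := ih
    set α : (ι → ℚ) → ℚ := fun a => ∑ i, a i * r i with hα
    refine ⟨F.filter (fun a => α a ≤ 0) ∪ Finset.image₂ (fun p q => α p • q - α q • p)
      (F.filter (fun a => 0 < α a)) (F.filter (fun a => α a < 0)), fun x => ?_⟩
    have key : ∀ (a : ι → ℚ) (t : ℝ), dt a (x - t • cst r) = dt a x - t * (α a : ℝ) := by
      intro a t
      rw [dt_sub, dt_smul, dt_cst]
    rw [GC_insert hr]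
    simp only [hF, key]
    constructor
    · rintro ⟨t, ht, h⟩ a ha
      rw [Finset.mem_union] at ha
      rcases ha with ha | ha
      · rw [Finset.mem_filter] at ha
        have h1 := h a ha.1
        have h2 : (α a : ℝ) ≤ 0 := by exact_mod_cast ha.2
        nlinarith
      · rw [Finset.mem_image₂] at ha
        obtain ⟨p, hp, q, hq, rfl⟩ := ha
        rw [Finset.mem_filter] at hp hq
        rw [dt_comb]
        have h1 := h p hp.1
        have h2 := h q hq.1
        have h3 : (0 : ℝ) < α p := by exact_mod_cast hp.2
        have h4 : (α q : ℝ) < 0 := by exact_mod_cast hq.2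
        nlinarith
    · intro h
      let L : Finset ℝ := insert 0 ((F.filter (fun a => 0 < α a)).image fun p => dt p x / α p)
      have hL : L.Nonempty := ⟨0, Finset.mem_insert_self _ _⟩
      refine ⟨L.max' hL, L.le_max' _ (Finset.mem_insert_self _ _), fun a ha => ?_⟩
      rcases lt_trichotomy (α a) 0 with h0 | h0 | h0
      · have h4 : (α a : ℝ) < 0 := by exact_mod_cast h0
        have hm := L.max'_mem hL
        have hax := h a (Finset.mem_union_left _ (Finset.mem_filter.2 ⟨ha, h0.le⟩))
        rcases Finset.mem_insert.1 hm with hm | hm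
        · rw [hm]; linarith
        · obtain ⟨p, hp, hp'⟩ := Finset.mem_image.1 hm
          rw [← hp']
          have h5 := h _ (Finset.mem_union_right _ (Finset.mem_image₂_of_mem hp
            (Finset.mem_filter.2 ⟨ha, h0⟩)))
          rw [dt_comb] at h5
          have h3 : (0 : ℝ) < α p := by exact_mod_cast (Finset.mem_filter.1 hp).2
          have h6 : dt a x - dt p x / α p * α a = (α p * dt a x - α a * dt p x) / α p := by
            field_simp
          rw [h6]
          exact div_nonpos_of_nonpos_of_nonneg h5 h3.le
      · have hax := h a (Finset.mem_union_left _ (Finset.mem_filter.2 ⟨ha, h0.le⟩))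
        rw [h0]; simpa using hax
      · have h3 : (0 : ℝ) < α a := by exact_mod_cast h0
        have h5 : dt a x / α a ≤ L.max' hL := L.le_max' _ (Finset.mem_insert_of_mem
          (Finset.mem_image_of_mem _ (Finset.mem_filter.2 ⟨ha, h0⟩)))
        rw [div_le_iff₀ h3] at h5
        linarith

lemma minkowski (F : Finset (ι → ℚ)) :
    ∃ G : Finset (ι → ℚ), ∀ x : ι → ℝ, x ∈ GC G ↔ ∀ a ∈ F, dt a x ≤ 0 := by
  obtain ⟨B, hB⟩ := weyl F
  obtain ⟨E, hE⟩ := weyl B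
  refine ⟨B, fun x => ⟨?_, fun h => ?_⟩⟩
  · rintro ⟨l, hl, rfl⟩ a ha
    rw [dt_sum]
    refine Finset.sum_nonpos fun b hb => ?_
    rw [dt_smul, dt_comm]
    have h1 := (hB (cst a)).1 (by simpa using GC_mem ha zero_le_one) b hb
    exact mul_nonpos_of_nonneg_of_nonpos (hl b) h1
  · rw [hE]
    intro e he
    have h1 : cst e ∈ GC F := by
      rw [hB]
      intro b hb
      rw [dt_comm]
      exact (hE (cst b)).1 (by simpa using GC_mem hb zero_le_one) e he
    obtain ⟨l, hl, h2⟩ := h1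
    have h3 : ∀ y : ι → ℚ, dt y x = ∑ i, cst y i * x i := fun y => rfl
    rw [h3, h2]
    have h4 : ∑ i, (∑ r ∈ F, l r • cst r) i * x i = ∑ r ∈ F, l r * dt r x := by
      simp only [dt, cst, Finset.sum_apply, Pi.smul_apply, smul_eq_mul, Finset.sum_mul,
        Finset.mul_sum]
      rw [Finset.sum_comm]
      exact Finset.sum_congr rfl fun r _ => Finset.sum_congr rfl fun i _ => by ring
    rw [h4]
    exact Finset.sum_nonpos fun r hr => mul_nonpos_of_nonneg_of_nonpos (hl r) (h r hr)

end Helpers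

section Poly

variable {n : ℕ}

/-- polyhedron given by a finite set of rational inequalities -/
def poly (H : Finset ((Fin n → ℚ) × ℚ)) : Set (Fin n → ℝ) :=
  {x | ∀ h ∈ H, dt h.1 x ≤ (h.2 : ℝ)}

lemma isRat_iff (Q : Set (Fin n → ℝ)) : IsRationalPolyhedron Q ↔ ∃ H, Q = poly H := by
  constructor
  · rintro ⟨m, A, b, rfl⟩
    refine ⟨Finset.univ.image fun i => (A i, b i), ?_⟩
    ext x
    simp [poly, dt]
  · rintro ⟨H, rfl⟩
    refine ⟨H.card, fun i => (H.equivFin.symm i).1.1, fun i => (H.equivFin.symm i).1.2, ?_⟩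
    ext x
    simp only [poly, dt, mem_setOf_eq]
    constructor
    · intro h i
      exact h _ (H.equivFin.symm i).2
    · intro h a ha
      have := h (H.equivFin ⟨a, ha⟩)
      simpa using this

/-- homogenisation -/
def hm (x : Fin n → ℝ) (t : ℝ) : Option (Fin n) → ℝ := fun o => o.elim t x

/-- homogenisation, rational -/
def hq (a : Fin n → ℚ) (b : ℚ) : Option (Fin n) → ℚ := fun o => o.elim b a

lemma dt_opt (a : Option (Fin n) → ℚ) (y : Option (Fin n) → ℝ) :
    dt a y = a none * y none + dt (fun i => a (some i)) (fun i => y (some i)) := by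
  simp [dt, Fintype.sum_option]

lemma polyGen (H : Finset ((Fin n → ℚ) × ℚ)) :
    ∃ G : Finset (Option (Fin n) → ℚ), ∀ y, y ∈ GC G ↔
      0 ≤ y none ∧ ∀ h ∈ H, dt h.1 (fun i => y (some i)) ≤ h.2 * y none := by
  obtain ⟨G, hG⟩ := minkowski (insert (hq 0 (-1)) (H.image fun h => hq h.1 (-h.2)))
  refine ⟨G, fun y => ?_⟩
  rw [hG]
  simp only [Finset.forall_mem_insert, Finset.forall_mem_image, dt_opt]
  have h0 : dt (0 : Fin n → ℚ) (fun i => y (some i)) = 0 := by simp [dt]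
  constructor
  · rintro ⟨h1, h2⟩
    have h1' : (((-1 : ℚ) : ℝ)) * y none + dt (0 : Fin n → ℚ) (fun i => y (some i)) ≤ 0 := h1
    rw [h0] at h1'
    refine ⟨by push_cast at h1'; linarith, fun h hh => ?_⟩
    have h3 : (((-h.2 : ℚ) : ℝ)) * y none + dt h.1 (fun i => y (some i)) ≤ 0 := h2 hh
    push_cast at h3
    linarith
  · rintro ⟨h1, h2⟩
    refine ⟨?_, fun h hh => ?_⟩
    · change (((-1 : ℚ) : ℝ)) * y none + dt (0 : Fin n → ℚ) (fun i => y (some i)) ≤ 0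
      rw [h0]; push_cast; linarith
    · change (((-h.2 : ℚ) : ℝ)) * y none + dt h.1 (fun i => y (some i)) ≤ 0
      have := h2 h hh
      push_cast; linarith

lemma genPoly (G : Finset (Option (Fin n) → ℚ)) :
    IsRationalPolyhedron {x : Fin n → ℝ | hm x 1 ∈ GC G} := by
  obtain ⟨F, hF⟩ := weyl G
  rw [isRat_iff]
  refine ⟨F.image fun a => (fun i => a (some i), - a none), ?_⟩
  ext x
  simp only [poly, mem_setOf_eq, hF, Finset.forall_mem_image, dt_opt]
  have e : (fun i => hm x 1 (some i)) = x := rfl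
  have e2 : hm x 1 none = 1 := rfl
  simp only [e, e2]
  refine forall₂_congr fun a _ => ?_
  push_cast
  constructor <;> intro h <;> linarith

lemma rec_conv (H : Finset ((Fin n → ℚ) × ℚ)) (dq : Fin n → ℚ) (r : Fin n → ℚ)
    (hr : ∀ h ∈ H, dt h.1 (cst r) ≤ 0) (s : ℝ) (hs : 0 ≤ s) (x : Fin n → ℝ)
    (hx : x ∈ convexHull ℝ {x ∈ poly H | ∃ z : ℤ, dt dq x = z}) :
    x + s • cst r ∈ convexHull ℝ {x ∈ poly H | ∃ z : ℤ, dt dq x = z} := by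
  set S := {x ∈ poly H | ∃ z : ℤ, dt dq x = z} with hS
  set q : ℚ := ∑ i, dq i * r i with hq'
  have hN : (0 : ℝ) < q.den := by exact_mod_cast q.den_pos
  have hqn : (q.den : ℝ) * (q : ℝ) = (q.num : ℝ) := by exact_mod_cast Rat.den_mul_eq_num q
  obtain ⟨m, hm⟩ := exists_nat_ge s
  set T : ℝ := (m + 1) * q.den with hT
  have hTpos : 0 < T := by positivity
  have hsT : s ≤ T := by
    have : (1 : ℝ) ≤ q.den := by exact_mod_cast q.den_pos
    nlinarith
  have h1 : ∀ y ∈ S, y + T • cst r ∈ S := by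
    rintro y ⟨hy, z, hz⟩
    refine ⟨fun h hh => ?_, z + (m + 1) * q.num, ?_⟩
    · rw [dt_add, dt_smul]
      have := hy h hh
      have := hr h hh
      nlinarith
    · rw [dt_add, dt_smul, dt_cst, hz, hT]
      push_cast
      rw [← hqn, hq']
      push_cast
      ring
  have h2 : x + T • cst r ∈ convexHull ℝ S := by
    have : S ⊆ {y | y + T • cst r ∈ convexHull ℝ S} := fun y hy => subset_convexHull ℝ S (h1 y hy)
    have hc : Convex ℝ {y | y + T • cst r ∈ convexHull ℝ S} :=
      (convex_convexHull ℝ S).translate_preimage_left (T • cst r)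
    exact convexHull_min this hc hx
  have h3 := (convex_convexHull ℝ S) hx h2 (a := 1 - s / T) (b := s / T)
    (by rw [sub_nonneg, div_le_one hTpos]; exact hsT) (by positivity) (by ring)
  convert h3 using 1
  ext i
  simp
  field_simp
  ring

lemma cone_conv (C : Set (Fin n → ℝ)) (hC : Convex ℝ C) (G : Finset (Option (Fin n) → ℚ))
    (h0 : ∀ g ∈ G, 0 ≤ g none)
    (h1 : ∀ g ∈ G, g none = 0 → ∀ s : ℝ, 0 ≤ s → ∀ x ∈ C, x + s • cst (fun i => g (some i)) ∈ C)
    (h2 : ∀ g ∈ G, 0 < g none → (1 / (g none : ℝ)) • cst (fun i => g (some i)) ∈ C)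
    (x : Fin n → ℝ) (hx : hm x 1 ∈ GC G) : x ∈ C := by
  let K : (Option (Fin n) → ℝ) → Prop := fun y =>
    (y none = 0 ∧ ∀ s : ℝ, 0 ≤ s → ∀ x ∈ C, x + s • (fun i => y (some i)) ∈ C) ∨
    (0 < y none ∧ (1 / y none) • (fun i => y (some i)) ∈ C)
  have hadd : ∀ a b, K a → K b → K (a + b) := by
    have mixed : ∀ a b : Option (Fin n) → ℝ,
        (a none = 0 ∧ ∀ s : ℝ, 0 ≤ s → ∀ x ∈ C, x + s • (fun i => a (some i)) ∈ C) →
        (0 < b none ∧ (1 / b none) • (fun i => b (some i)) ∈ C) → K (a + b) := by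
      rintro a b ⟨ha, ha'⟩ ⟨hb, hb'⟩
      refine Or.inr ⟨by simp [ha, hb], ?_⟩
      have := ha' (1 / b none) (by positivity) _ hb'
      convert this using 1
      ext i
      simp [ha]
      ring
    rintro a b (ha | ha) (hb | hb)
    · refine Or.inl ⟨by simp [ha.1, hb.1], fun s hs x hx => ?_⟩
      have := hb.2 s hs _ (ha.2 s hs x hx)
      convert this using 1
      ext i
      simp
      ring
    · exact mixed a b ha hb
    · rw [add_comm]; exact mixed b a hb ha
    · obtain ⟨ha, ha'⟩ := ha
      obtain ⟨hb, hb'⟩ := hb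
      have hab : 0 < a none + b none := by linarith
      refine Or.inr ⟨hab, ?_⟩
      have := hC ha' hb' (a := a none / (a none + b none)) (b := b none / (a none + b none))
        (by positivity) (by positivity) (by field_simp)
      convert this using 1
      ext i
      simp
      field_simp
  have hzero : K 0 := Or.inl ⟨rfl, fun s hs x hx => by
    convert hx using 1
    ext i
    simp⟩
  obtain ⟨l, hl, hxl⟩ := hx
  have hK : K (hm x 1) := by
    rw [hxl]
    refine Finset.sum_induction _ K hadd hzero fun g hg => ?_
    rcases (hl g).eq_or_lt with h | h
    · rw [← h, zero_smul]; exact hzero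
    · rcases (h0 g hg).eq_or_lt with hgn | hgn
      · refine Or.inl ⟨by simp [cst, ← hgn], fun s hs x hx => ?_⟩
        have := h1 g hg hgn.symm (s * l g) (by positivity) x hx
        convert this using 1
        ext i
        simp [cst]
        ring
      · have hgn' : (0 : ℝ) < g none := by exact_mod_cast hgn
        refine Or.inr ⟨by simp only [cst, Pi.smul_apply, smul_eq_mul]; positivity, ?_⟩
        have := h2 g hg hgn
        convert this using 1
        ext i
        simp [cst]
        field_simp
  rcases hK with hK | hK
  · exact absurd hK.1 one_ne_zero
  · have := hK.2
    have e : (fun i => hm x 1 (some i)) = x := rfl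
    have e2 : hm x 1 none = 1 := rfl
    rw [e, e2] at this
    simpa using this

lemma conv_isRat (H : Finset ((Fin n → ℚ) × ℚ)) (dq : Fin n → ℚ) :
    IsRationalPolyhedron (convexHull ℝ {x ∈ poly H | ∃ z : ℤ, dt dq x = z}) := by
  set S := {x ∈ poly H | ∃ z : ℤ, dt dq x = z} with hS
  obtain ⟨GQ, hGQ⟩ := polyGen H
  have hslice : ∀ z : ℤ, ∃ G : Finset (Option (Fin n) → ℚ), ∀ y, y ∈ GC G ↔
      0 ≤ y none ∧ (∀ h ∈ H, dt h.1 (fun i => y (some i)) ≤ h.2 * y none) ∧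
      dt dq (fun i => y (some i)) = z * y none := by
    intro z
    obtain ⟨G, hG⟩ := polyGen (insert (dq, (z : ℚ)) (insert (-dq, -(z : ℚ)) H))
    refine ⟨G, fun y => ?_⟩
    rw [hG]
    simp only [Finset.forall_mem_insert]
    have hneg : dt (-dq) (fun i => y (some i)) = - dt dq (fun i => y (some i)) := by
      simp [dt]
    rw [hneg]
    push_cast
    constructor
    · rintro ⟨a, b, c, d⟩
      exact ⟨a, d, by linarith⟩
    · rintro ⟨a, b, c⟩
      exact ⟨a, by linarith, by linarith, b⟩
  choose Gs hGs using hslice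
  let D : (Option (Fin n) → ℚ) → ℚ := fun g => ∑ i, dq i * g (some i)
  have hD : ∀ g, dt dq (cst fun i => g (some i)) = D g := fun g => dt_cst _ _
  let c : (Option (Fin n) → ℚ) → ℝ := fun g => if g none = 0 then (D g).den else 1 / g none
  let M : ℤ := ⌈∑ g ∈ GQ, c g * |(D g : ℝ)|⌉
  let G := GQ.filter (fun g => g none = 0) ∪ (Finset.Icc (-M) M).biUnion Gs
  have hgQ : ∀ g ∈ GQ, (0 : ℝ) ≤ g none ∧
      ∀ h ∈ H, dt h.1 (cst fun i => g (some i)) ≤ h.2 * g none := fun g hg =>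
    (hGQ (cst g)).1 (by simpa using GC_mem hg zero_le_one)
  have hgz : ∀ z, ∀ g ∈ Gs z, (0 : ℝ) ≤ g none ∧
      (∀ h ∈ H, dt h.1 (cst fun i => g (some i)) ≤ h.2 * g none) ∧
      dt dq (cst fun i => g (some i)) = z * g none := fun z g hg =>
    (hGs z (cst g)).1 (by simpa using GC_mem hg zero_le_one)
  have hgG : ∀ g ∈ G, (0 : ℝ) ≤ g none ∧
      ∀ h ∈ H, dt h.1 (cst fun i => g (some i)) ≤ h.2 * g none := by
    intro g hg
    rcases Finset.mem_union.1 hg with hg | hg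
    · exact hgQ g (Finset.mem_filter.1 hg).1
    · obtain ⟨z, _, hz⟩ := Finset.mem_biUnion.1 hg
      exact ⟨(hgz z g hz).1, (hgz z g hz).2.1⟩
  have main : convexHull ℝ S = {x : Fin n → ℝ | hm x 1 ∈ GC G} := by
    apply Subset.antisymm
    · refine convexHull_min ?_ ?_
      · rintro x ⟨hxH, z, hz⟩
        have hx : hm x 1 ∈ GC GQ := by
          rw [hGQ]
          refine ⟨zero_le_one, fun h hh => ?_⟩
          have := hxH h hh
          change dt h.1 x ≤ h.2 * 1
          linarith
        obtain ⟨l, hl, hxl⟩ := hx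
        let k : (Option (Fin n) → ℚ) → ℤ := fun g =>
          if g none = 0 then ⌊l g / (D g).den⌋ else 0
        have hk0 : ∀ g, 0 ≤ k g := by
          intro g
          dsimp only [k]
          split_ifs
          · exact Int.floor_nonneg.2 (div_nonneg (hl g) (Nat.cast_nonneg _))
          · exact le_rfl
        let l' : (Option (Fin n) → ℚ) → ℝ := fun g => l g - k g * (D g).den
        have hden : ∀ g, (0 : ℝ) < (D g).den := fun g => by exact_mod_cast (D g).den_pos
        have hl'0 : ∀ g, 0 ≤ l' g := by
          intro g
          dsimp only [l', k]
          split_ifs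
          · have := Int.floor_le (l g / (D g).den)
            rw [le_div_iff₀ (hden g)] at this
            linarith
          · simpa using hl g
        have hsum1 : ∑ g ∈ GQ, l g * (g none : ℝ) = 1 := by
          have := congrFun hxl none
          simp only [Finset.sum_apply, Pi.smul_apply, smul_eq_mul, cst] at this
          exact this.symm
        have hl'c : ∀ g ∈ GQ, l' g ≤ c g := by
          intro g hg
          dsimp only [l', k, c]
          split_ifs with h
          · have := Int.lt_floor_add_one (l g / (D g).den)
            rw [div_lt_iff₀ (hden g)] at this
            linarith
          · have h1 : (0 : ℝ) < g none := lt_of_le_of_ne (hgQ g hg).1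
              (by exact_mod_cast (Ne.symm h))
            rw [le_div_iff₀ h1, ← hsum1]
            have := Finset.single_le_sum (f := fun g => l g * (g none : ℝ))
              (fun g hg => mul_nonneg (hl g) (hgQ g hg).1) hg
            simpa using this
        let y : Option (Fin n) → ℝ := ∑ g ∈ GQ, l' g • cst g
        let w : Option (Fin n) → ℝ := ∑ g ∈ GQ, ((k g : ℝ) * (D g).den) • cst g
        have hyw : hm x 1 = y + w := by
          rw [hxl, ← Finset.sum_add_distrib]
          refine Finset.sum_congr rfl fun g _ => ?_
          rw [← add_smul]
          congr 1
          simp [l']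
        have hw : w ∈ GC G := by
          refine GC_sum _ _ fun g hg => ?_
          by_cases h : g none = 0
          · refine GC_mem (Finset.mem_union_left _ (Finset.mem_filter.2 ⟨hg, h⟩)) ?_
            have : (0 : ℝ) ≤ k g := by exact_mod_cast hk0 g
            have := hden g
            positivity
          · have : k g = 0 := by simp [k, h]
            rw [this]
            simpa using GC_zero G
        have hwn : w none = 0 := by
          simp only [w, Finset.sum_apply, Pi.smul_apply, smul_eq_mul, cst]
          refine Finset.sum_eq_zero fun g _ => ?_
          by_cases h : g none = 0
          · simp [h]
          · simp [k, h]
        have hyn : y none = 1 := by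
          have := congrFun hyw none
          simp only [Pi.add_apply, hwn] at this
          have e2 : hm x 1 none = 1 := rfl
          linarith
        have hyQ : y ∈ GC GQ := ⟨l', hl'0, rfl⟩
        have hdsum : ∀ f : (Option (Fin n) → ℚ) → ℝ,
            dt dq (fun i => (∑ g ∈ GQ, f g • cst g) (some i)) = ∑ g ∈ GQ, f g * D g := by
          intro f
          have : (fun i => (∑ g ∈ GQ, f g • cst g) (some i)) =
              ∑ g ∈ GQ, f g • cst (fun i => g (some i)) := by
            ext i
            simp [cst]
          rw [this, dt_sum]
          exact Finset.sum_congr rfl fun g _ => by rw [dt_smul, hD]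
        have hdy := hdsum l'
        have hdw := hdsum (fun g => (k g : ℝ) * (D g).den)
        have hdw' : ∑ g ∈ GQ, (k g : ℝ) * (D g).den * D g =
            ((∑ g ∈ GQ, k g * (D g).num : ℤ) : ℝ) := by
          push_cast
          refine Finset.sum_congr rfl fun g _ => ?_
          have : ((D g).den : ℝ) * (D g : ℝ) = ((D g).num : ℝ) := by
            exact_mod_cast Rat.den_mul_eq_num (D g)
          rw [mul_assoc, this]
        obtain ⟨z', hz'⟩ : ∃ z' : ℤ, dt dq (fun i => y (some i)) = z' := by
          refine ⟨z - ∑ g ∈ GQ, k g * (D g).num, ?_⟩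
          have e : x = (fun i => y (some i)) + (fun i => w (some i)) := by
            ext i
            exact congrFun hyw (some i)
          rw [e, dt_add] at hz
          push_cast
          push_cast at hdw'
          rw [← hdw', ← hdw, ← hz]
          simp [w]
        have hzM : |(z' : ℝ)| ≤ M := by
          rw [← hz']
          change |dt dq (fun i => (∑ g ∈ GQ, l' g • cst g) (some i))| ≤ M
          rw [hdy]
          refine le_trans (Finset.abs_sum_le_sum_abs _ _) (le_trans ?_ (Int.le_ceil _))
          refine Finset.sum_le_sum fun g hg => ?_
          rw [abs_mul, abs_of_nonneg (hl'0 g)]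
          exact mul_le_mul_of_nonneg_right (hl'c g hg) (abs_nonneg _)
        have hzM' : z' ∈ Finset.Icc (-M) M := by
          rw [Finset.mem_Icc, ← abs_le]
          exact_mod_cast hzM
        have hy : y ∈ GC G := by
          have h1 : y ∈ GC (Gs z') := by
            rw [hGs]
            have := (hGQ y).1 hyQ
            exact ⟨this.1, this.2, by rw [hz', hyn, mul_one]⟩
          refine GC_mono ?_ h1
          exact (Finset.subset_biUnion_of_mem Gs hzM').trans Finset.subset_union_right
        change hm x 1 ∈ GC G
        rw [hyw]
        exact GC_add hy hw
      · obtain ⟨m, A, b, hP⟩ := genPoly G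
        rw [hP]
        intro x hx y hy s t hs ht hst i
        have h1 := hx i
        have h2 := hy i
        have e : ∑ j, (A i j : ℝ) * (s • x + t • y) j =
            s * ∑ j, (A i j : ℝ) * x j + t * ∑ j, (A i j : ℝ) * y j := by
          rw [Finset.mul_sum, Finset.mul_sum, ← Finset.sum_add_distrib]
          refine Finset.sum_congr rfl fun j _ => ?_
          simp
          ring
        rw [e]
        calc _ ≤ s * (b i : ℝ) + t * (b i : ℝ) := by gcongr
          _ = b i := by rw [← add_mul, hst, one_mul]
    · intro x hx
      refine cone_conv _ (convex_convexHull ℝ S) G (fun g hg => by exact_mod_cast (hgG g hg).1)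
        ?_ ?_ x hx
      · intro g hg hgn s hs x hx
        refine rec_conv H dq _ (fun h hh => ?_) s hs x hx
        have := (hgG g hg).2 h hh
        simpa [hgn] using this
      · intro g hg hgn
        have hgn' : (0 : ℝ) < g none := by exact_mod_cast hgn
        apply subset_convexHull ℝ S
        rcases Finset.mem_union.1 hg with hg | hg
        · exact absurd (Finset.mem_filter.1 hg).2 hgn.ne'
        · obtain ⟨z, _, hz⟩ := Finset.mem_biUnion.1 hg
          obtain ⟨_, h2, h3⟩ := hgz z g hz
          refine ⟨fun h hh => ?_, z, ?_⟩
          · rw [dt_smul, one_div, inv_mul_le_iff₀ hgn', mul_comm]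
            exact h2 h hh
          · rw [dt_smul, h3]
            field_simp
  rw [main]
  exact genPoly G

lemma isRat_inter {P Q : Set (Fin n → ℝ)} (hP : IsRationalPolyhedron P)
    (hQ : IsRationalPolyhedron Q) : IsRationalPolyhedron (P ∩ Q) := by
  rw [isRat_iff] at *
  obtain ⟨H, rfl⟩ := hP
  obtain ⟨H', rfl⟩ := hQ
  refine ⟨H ∪ H', ?_⟩
  ext x
  simp only [poly, mem_inter_iff, mem_setOf_eq, Finset.mem_union, or_imp, forall_and]

lemma isRat_univ : IsRationalPolyhedron (univ : Set (Fin n → ℝ)) := by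
  rw [isRat_iff]
  exact ⟨∅, by simp [poly]⟩

end Poly

/-- For a rational polyhedron `Q` and a finite set `D ⊆ ℤⁿ`, the `D`-split closure of `Q`
is again a rational polyhedron; in particular each `conv({x ∈ Q : d·x ∈ ℤ})` is a
rational polyhedron. -/
theorem splitClosureD_isRationalPolyhedron
    {n : ℕ} (Q : Set (Fin n → ℝ)) (hQ : IsRationalPolyhedron Q)
    (D : Finset (Fin n → ℤ)) :
    IsRationalPolyhedron (splitClosureD D Q) ∧
      ∀ d : Fin n → ℤ,
        IsRationalPolyhedron
          (convexHull ℝ {x ∈ Q | ∃ z : ℤ, ∑ i, (d i : ℝ) * x i = (z : ℝ)}) := by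
  have key : ∀ d : Fin n → ℤ,
        IsRationalPolyhedron
          (convexHull ℝ {x ∈ Q | ∃ z : ℤ, ∑ i, (d i : ℝ) * x i = (z : ℝ)}) := by
    intro d
    obtain ⟨H, rfl⟩ := (isRat_iff Q).1 hQ
    have := conv_isRat H (fun i => (d i : ℚ))
    simpa [dt] using this
  refine ⟨?_, key⟩
  unfold splitClosureD
  induction D using Finset.induction_on with
  | empty => simpa using isRat_univ
  | insert d D _ ih =>
    rw [Finset.set_biInter_insert]
    exact isRat_inter (key d) ih
end

section
/- Let Q ⊆ ℝⁿ be a rational polyhedron, D ⊆ ℤⁿ a finite set, d ∈ D, and suppose that for every t ≥ 0 the iterate SC_D^t(Q) is nonempty and the maximum u^t_d := max{d·x : x ∈ SC_D^t(Q)} exists. Then either lim_{t→∞} u^t_d = −∞, or there exist a natural number t_d and an integer γ_d such that u^t_d = γ_d for all t ≥ t_d. -/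
open Set

/-- If `u t` is the maximum of `d·x` over the `t`-th `D`-split closure of a rational
polyhedron `Q` (assumed to exist for all `t`), then either `u t → -∞`, or `u` is
eventually constant with an integer value. -/
theorem eventually_constant_or_tendsto_atBot
    {n : ℕ} (Q : Set (Fin n → ℝ)) (hQ : IsRationalPolyhedron Q)
    (D : Finset (Fin n → ℤ)) (d : Fin n → ℤ) (hd : d ∈ D) (u : ℕ → ℝ)
    (hne : ∀ t : ℕ, ((splitClosureD D)^[t] Q).Nonempty)
    (hu : ∀ t : ℕ,
      IsGreatest ((fun x => ∑ i, (d i : ℝ) * x i) '' (splitClosureD D)^[t] Q) (u t)) :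
    Filter.Tendsto u Filter.atTop Filter.atBot ∨
      ∃ (td : ℕ) (γ : ℤ), ∀ t ≥ td, u t = (γ : ℝ) := by
  have hstep : ∀ t, u (t + 1) ≤ (⌊u t⌋ : ℝ) := by
    intro t
    obtain ⟨x, hx, hxu⟩ := (hu (t + 1)).1
    rw [Function.iterate_succ_apply'] at hx
    have hx2 := Set.mem_iInter₂.1 hx d hd
    have hlin : IsLinearMap ℝ (fun x : Fin n → ℝ => ∑ i, (d i : ℝ) * x i) := by
      constructor
      · intro x y
        simp [mul_add, Finset.sum_add_distrib]
      · intro c x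
        simp only [Pi.smul_apply, smul_eq_mul, Finset.mul_sum]
        exact Finset.sum_congr rfl fun i _ => by ring
    have hconv := convex_halfSpace_le (𝕜 := ℝ) hlin (⌊u t⌋ : ℝ)
    have hsub := convexHull_min (s := {x ∈ (splitClosureD D)^[t] Q |
      ∃ z : ℤ, ∑ i, (d i : ℝ) * x i = (z : ℝ)}) (by
        rintro y ⟨hy, z, hz⟩
        have hle : ∑ i, (d i : ℝ) * y i ≤ u t := (hu t).2 ⟨y, hy, rfl⟩
        rw [hz] at hle
        show ∑ i, (d i : ℝ) * y i ≤ (⌊u t⌋ : ℝ)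
        rw [hz]
        exact_mod_cast Int.le_floor.2 hle) hconv
    have h := hsub hx2
    rw [← hxu]
    exact h
  have hanti : Antitone u :=
    antitone_nat_of_succ_le fun t => (hstep t).trans (Int.floor_le _)
  by_cases hb : BddBelow (Set.range u)
  · right
    obtain ⟨B, hB⟩ := hb
    have hfl : ∀ t, ⌊B⌋ ≤ ⌊u t⌋ := fun t => Int.floor_mono (hB ⟨t, rfl⟩)
    obtain ⟨γ, ⟨t₀, ht₀⟩, hmin⟩ := Int.exists_least_of_bdd (P := fun z => ∃ t, ⌊u t⌋ = z)
      ⟨⌊B⌋, by rintro z ⟨t, rfl⟩; exact hfl t⟩ ⟨_, 0, rfl⟩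
    refine ⟨t₀ + 1, γ, fun t ht => le_antisymm ?_ ?_⟩
    · rw [← ht₀]
      exact (hanti ht).trans (hstep t₀)
    · exact Int.le_floor.1 (hmin _ ⟨t, rfl⟩)
  · left
    rw [Filter.tendsto_atTop_atBot]
    intro b
    obtain ⟨_, ⟨t, rfl⟩, ht⟩ := not_bddBelow_iff.1 hb b
    exact ⟨t, fun s hs => (hanti hs).trans ht.le⟩
end

section
/- Under the setup described in the context, for every i ∈ {1,…,k} one has the inclusion {x ∈ SC_D^{t_D+1}(Q) : d_i·x = γ_{d_i}} ⊆ {x ∈ ℝⁿ : d_{i−1}·x = γ_{d_{i−1}}}. -/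
open Set

/-- The recession cone of a set `Q ⊆ ℝⁿ`. -/
def recCone {n : ℕ} (Q : Set (Fin n → ℝ)) : Set (Fin n → ℝ) :=
  {r | ∀ x ∈ Q, ∀ t : ℝ, 0 ≤ t → x + t • r ∈ Q}

/-- Real linear combination of sums is the halfspace-friendly convexity statement. -/
lemma convex_halfspace_sum {n : ℕ} (a : Fin n → ℝ) (b : ℝ) :
    Convex ℝ {x : Fin n → ℝ | ∑ l, a l * x l ≤ b} := by
  apply convex_halfSpace_le
  constructor
  · intro x y
    simp [mul_add, Finset.sum_add_distrib]
  · intro r x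
    simp only [Pi.smul_apply, smul_eq_mul, Finset.mul_sum]
    exact Finset.sum_congr rfl fun l _ => by ring

lemma IsRationalPolyhedron.convex {n : ℕ} {Q : Set (Fin n → ℝ)}
    (hQ : IsRationalPolyhedron Q) : Convex ℝ Q := by
  obtain ⟨m, A, b, rfl⟩ := hQ
  have : {x : Fin n → ℝ | ∀ i, ∑ j, (A i j : ℝ) * x j ≤ (b i : ℝ)} =
      ⋂ i, {x : Fin n → ℝ | ∑ j, (A i j : ℝ) * x j ≤ (b i : ℝ)} := by
    ext x; simp
  rw [this]
  exact convex_iInter fun i => convex_halfspace_sum _ _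

lemma iterate_subset {n : ℕ} {Q : Set (Fin n → ℝ)} (hQ : Convex ℝ Q)
    (D : Finset (Fin n → ℤ)) (e : Fin n → ℤ) (he : e ∈ D) (t : ℕ) :
    (splitClosureD D)^[t] Q ⊆ Q := by
  induction t with
  | zero => simp
  | succ t ih =>
    rw [Function.iterate_succ_apply']
    intro x hx
    have h := Set.mem_iInter₂.1 hx e he
    exact convexHull_min (fun y hy => ih hy.1) hQ h

/-- Claim 3 of the paper: under the setup (directions `d₀ = c`,
`dᵢ = (2Mᵢ+1)·dᵢ₋₁ + wᵢ`, eventually-constant integral maxima `γ`), for every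
`i ∈ {1, …, k}` one has
`{x ∈ SC_D^{t_D+1}(Q) : dᵢ·x = γ_{dᵢ}} ⊆ {x : dᵢ₋₁·x = γ_{dᵢ₋₁}}`. -/
theorem box_claim
    {n k : ℕ} (hkn : k ≤ n)
    (Q : Set (Fin n → ℝ)) (hQ : IsRationalPolyhedron Q) (hQne : Q.Nonempty)
    (c : Fin n → ℤ) (α : ℝ)
    (hcrec : ∀ r ∈ recCone Q, ∑ i, (c i : ℝ) * r i ≤ 0)
    (hα : {x ∈ Q | α ≤ ∑ i, (c i : ℝ) * x i}.Nonempty)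
    (hFne : {r ∈ recCone Q | ∑ i, (c i : ℝ) * r i = 0}.Nonempty)
    (hk : k = n - Module.finrank ℝ
      (Submodule.span ℝ {r ∈ recCone Q | ∑ i, (c i : ℝ) * r i = 0}))
    (g : Fin k → Fin n → ℝ) (hgind : LinearIndependent ℝ g)
    (hgrec : ∀ j, ∀ r ∈ recCone Q, ∑ i, g j i * r i ≤ 0)
    (hF : {r ∈ recCone Q | ∑ i, (c i : ℝ) * r i = 0} =
          {r ∈ recCone Q | ∀ j, ∑ i, g j i * r i = 0})
    (w : Fin n → Fin n → ℤ)
    (hwbasis : ∀ v : Fin n → ℤ, ∃! lam : Fin n → ℤ, v = ∑ i, lam i • w i)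
    (hwcone : ∀ i : Fin k, ∃ lam : Fin k → ℝ, (∀ j, 0 ≤ lam j) ∧
        (fun l => (w (Fin.castLE hkn i) l : ℝ)) = ∑ j, lam j • g j)
    (μ ν : Fin k → ℝ)
    (hμ : ∀ i, IsLeast ((fun x => ∑ l, (w (Fin.castLE hkn i) l : ℝ) * x l) ''
            {x ∈ Q | α ≤ ∑ i, (c i : ℝ) * x i}) (μ i))
    (hν : ∀ i, IsGreatest ((fun x => ∑ l, (w (Fin.castLE hkn i) l : ℝ) * x l) '' Q) (ν i))
    (M : Fin k → ℤ) (hM : ∀ i, (M i : ℝ) = max 0 (max (⌈-μ i⌉ : ℝ) (⌈ν i⌉ : ℝ)))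
    (d : Fin (k + 1) → Fin n → ℤ)
    (hd0 : d 0 = c)
    (hdi : ∀ i : Fin k, d i.succ = (2 * M i + 1) • d i.castSucc + w (Fin.castLE hkn i))
    (D : Finset (Fin n → ℤ)) (hD : D = Finset.image d Finset.univ)
    (hne : ∀ t : ℕ, ((splitClosureD D)^[t] Q).Nonempty)
    (u : ℕ → (Fin n → ℤ) → ℝ)
    (hu : ∀ t : ℕ, ∀ e ∈ D,
      IsGreatest ((fun x => ∑ i, (e i : ℝ) * x i) '' (splitClosureD D)^[t] Q) (u t e))
    (tD : ℕ) (γ : Fin (k + 1) → ℤ)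
    (hγ : ∀ i : Fin (k + 1), ∀ t ≥ tD, u t (d i) = (γ i : ℝ))
    (hγ0 : α ≤ (γ 0 : ℝ)) :
    ∀ i : Fin k,
      {x ∈ (splitClosureD D)^[tD + 1] Q |
          ∑ l, (d i.succ l : ℝ) * x l = (γ i.succ : ℝ)} ⊆
        {x : Fin n → ℝ | ∑ l, (d i.castSucc l : ℝ) * x l = (γ i.castSucc : ℝ)} := by
  have hdD : ∀ i, d i ∈ D := fun i => by rw [hD]; simp
  have hsub : ∀ t, (splitClosureD D)^[t] Q ⊆ Q :=
    iterate_subset hQ.convex D (d 0) (hdD 0)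
  have hle : ∀ j, ∀ t ≥ tD, ∀ x ∈ (splitClosureD D)^[t] Q,
      ∑ l, (d j l : ℝ) * x l ≤ (γ j : ℝ) := by
    intro j t ht x hx
    rw [← hγ j t ht]
    exact (hu t (d j) (hdD j)).2 ⟨x, hx, rfl⟩
  have hdx : ∀ (i : Fin k) (x : Fin n → ℝ), ∑ l, (d i.succ l : ℝ) * x l =
      (2 * (M i : ℝ) + 1) * ∑ l, (d i.castSucc l : ℝ) * x l +
        ∑ l, (w (Fin.castLE hkn i) l : ℝ) * x l := by
    intro i x
    rw [hdi i, Finset.mul_sum, ← Finset.sum_add_distrib]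
    refine Finset.sum_congr rfl fun l _ => ?_
    simp only [Pi.add_apply, Pi.smul_apply, smul_eq_mul]
    push_cast
    ring
  -- one step, given that the face of `d_{i-1}` lies in `c·x ≥ α`
  have step : ∀ i : Fin k,
      (∀ z ∈ (splitClosureD D)^[tD + 1] Q,
        ∑ l, (d i.castSucc l : ℝ) * z l = (γ i.castSucc : ℝ) →
          ∑ l, (c l : ℝ) * z l = (γ 0 : ℝ)) →
      ∀ x ∈ (splitClosureD D)^[tD + 1] Q,
        ∑ l, (d i.succ l : ℝ) * x l = (γ i.succ : ℝ) →
        ∑ l, (d i.castSucc l : ℝ) * x l = (γ i.castSucc : ℝ) := by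
    intro i hface x hx hxi
    have hM0 : (0 : ℝ) ≤ M i := by rw [hM i]; exact le_max_left _ _
    have hMμ : -(M i : ℝ) ≤ μ i := by
      have h1 : (⌈-μ i⌉ : ℝ) ≤ M i := by
        rw [hM i]; exact (le_max_left _ _).trans (le_max_right _ _)
      have h2 := Int.le_ceil (-μ i)
      linarith
    have hMν : ν i ≤ M i := by
      have h1 : (⌈ν i⌉ : ℝ) ≤ M i := by
        rw [hM i]; exact (le_max_right _ _).trans (le_max_right _ _)
      exact (Int.le_ceil _).trans h1
    obtain ⟨z, hz, hzγ⟩ := (hu (tD + 1) (d i.castSucc) (hdD _)).1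
    rw [hγ _ (tD + 1) (by omega)] at hzγ
    simp only at hzγ
    have hcz := hface z hz hzγ
    have hwz : μ i ≤ ∑ l, (w (Fin.castLE hkn i) l : ℝ) * z l :=
      (hμ i).2 ⟨z, ⟨hsub _ hz, by rw [hcz]; exact hγ0⟩, rfl⟩
    have hlow : (2 * (M i : ℝ) + 1) * γ i.castSucc - M i ≤ γ i.succ := by
      have h1 := hle i.succ (tD + 1) (by omega) z hz
      rw [hdx, hzγ] at h1
      linarith
    have hx' := hx
    rw [Function.iterate_succ_apply'] at hx'
    have hxc := Set.mem_iInter₂.1 hx' (d i.castSucc) (hdD _)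
    have hconv := convex_halfspace_sum
      (fun l => (d i.succ l : ℝ) - (d i.castSucc l : ℝ))
      ((γ i.succ : ℝ) - γ i.castSucc)
    have hmem := convexHull_min (t := {x : Fin n → ℝ |
        ∑ l, ((d i.succ l : ℝ) - (d i.castSucc l : ℝ)) * x l ≤
          (γ i.succ : ℝ) - γ i.castSucc}) (fun y hy => ?_) hconv hxc
    · simp only [Set.mem_setOf_eq, sub_mul, Finset.sum_sub_distrib] at hmem
      have := hle i.castSucc (tD + 1) (by omega) x hx
      linarith
    · obtain ⟨hyS, m, hm⟩ := hy
      have h1 := hle i.castSucc tD le_rfl y hyS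
      have h2 := hle i.succ tD le_rfl y hyS
      have h3 : ∑ l, (w (Fin.castLE hkn i) l : ℝ) * y l ≤ ν i :=
        (hν i).2 ⟨y, hsub _ hyS, rfl⟩
      have h4 := hdx i y
      simp only [Set.mem_setOf_eq, sub_mul, Finset.sum_sub_distrib]
      rw [hm] at h1 h4 ⊢
      have h5 : m ≤ γ i.castSucc := by exact_mod_cast h1
      rcases h5.eq_or_lt with h | h
      · rw [← h]; linarith
      · have h6 : (m : ℝ) + 1 ≤ γ i.castSucc := by exact_mod_cast h
        nlinarith [mul_nonneg hM0 (sub_nonneg.2 h6)]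
  have hall : ∀ j : Fin (k + 1), ∀ z ∈ (splitClosureD D)^[tD + 1] Q,
      ∑ l, (d j l : ℝ) * z l = (γ j : ℝ) → ∑ l, (c l : ℝ) * z l = (γ 0 : ℝ) := by
    intro j
    induction j using Fin.induction with
    | zero => intro z _ h; rwa [hd0] at h
    | succ i ih => exact fun z hz h => ih z hz (step i ih z hz h)
  intro i x hx
  exact step i (hall _) x hx.1 hx.2
end

section
/- Under the setup described in the context, the polyhedron Q contains an integral point x ∈ ℤⁿ with c·x = γ_{d_0}; consequently γ_{d_0} ≤ max{c·y : y ∈ conv(Q ∩ ℤⁿ)}. -/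
open Set

lemma ipc_convex_iter {n : ℕ} (D : Finset (Fin n → ℤ)) (Q : Set (Fin n → ℝ)) (hQ : Convex ℝ Q)
    (t : ℕ) : Convex ℝ ((splitClosureD D)^[t] Q) := by
  cases t with
  | zero => exact hQ
  | succ t =>
    rw [Function.iterate_succ_apply']
    unfold splitClosureD
    exact convex_iInter fun _ => convex_iInter fun _ => convex_convexHull ℝ _

lemma ipc_poly_convex {n : ℕ} (Q : Set (Fin n → ℝ)) (hQ : IsRationalPolyhedron Q) :
    Convex ℝ Q := by
  obtain ⟨m, A, b, rfl⟩ := hQ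
  intro x hx y hy s t hs ht hst i
  have h1 := hx i
  have h2 := hy i
  have : ∑ j, (A i j : ℝ) * (s • x + t • y) j
      = s * ∑ j, (A i j : ℝ) * x j + t * ∑ j, (A i j : ℝ) * y j := by
    rw [Finset.mul_sum, Finset.mul_sum, ← Finset.sum_add_distrib]
    refine Finset.sum_congr rfl fun j _ => ?_
    simp only [Pi.add_apply, Pi.smul_apply, smul_eq_mul]
    ring
  rw [this]
  calc _ ≤ s * (b i : ℝ) + t * (b i : ℝ) := by gcongr
    _ = _ := by rw [← add_mul, hst, one_mul]

lemma ipc_subset {n : ℕ} (D : Finset (Fin n → ℤ)) (P : Set (Fin n → ℝ)) (hP : Convex ℝ P)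
    (hD : D.Nonempty) : splitClosureD D P ⊆ P := by
  obtain ⟨e, he⟩ := hD
  intro x hx
  have := Set.mem_iInter₂.1 hx e he
  exact convexHull_min (fun y hy => hy.1) hP this

lemma ipc_iter_subset {n : ℕ} (D : Finset (Fin n → ℤ)) (Q : Set (Fin n → ℝ)) (hQ : Convex ℝ Q)
    (hD : D.Nonempty) (t : ℕ) : (splitClosureD D)^[t] Q ⊆ Q := by
  induction t with
  | zero => exact subset_rfl
  | succ t ih =>
    rw [Function.iterate_succ_apply']
    exact (ipc_subset D _ (ipc_convex_iter D Q hQ t) hD).trans ih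

lemma ipc_rec_add {n : ℕ} {Q : Set (Fin n → ℝ)} {a b : Fin n → ℝ} (ha : a ∈ recCone Q)
    (hb : b ∈ recCone Q) : a + b ∈ recCone Q := by
  intro x hx t ht
  have := hb _ (ha x hx t ht) t ht
  rwa [add_assoc, ← smul_add] at this

lemma ipc_rec_smul {n : ℕ} {Q : Set (Fin n → ℝ)} {a : Fin n → ℝ} (ha : a ∈ recCone Q)
    {s : ℝ} (hs : 0 ≤ s) : s • a ∈ recCone Q := by
  intro x hx t ht
  have := ha x hx (t * s) (mul_nonneg ht hs)
  rwa [mul_smul] at this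

/-- A span of a convex cone is the set of differences. -/
lemma ipc_span_diff {n : ℕ} (F : Set (Fin n → ℝ)) (h0 : (0 : Fin n → ℝ) ∈ F)
    (hadd : ∀ a ∈ F, ∀ b ∈ F, a + b ∈ F) (hsmul : ∀ a ∈ F, ∀ s : ℝ, 0 ≤ s → s • a ∈ F)
    (v : Fin n → ℝ) (hv : v ∈ Submodule.span ℝ F) : ∃ a ∈ F, ∃ b ∈ F, v = a - b := by
  induction hv using Submodule.span_induction with
  | mem x hx => exact ⟨x, hx, 0, h0, by simp⟩
  | zero => exact ⟨0, h0, 0, h0, by simp⟩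
  | add x y _ _ hx hy =>
    obtain ⟨a, ha, b, hb, rfl⟩ := hx
    obtain ⟨a', ha', b', hb', rfl⟩ := hy
    exact ⟨a + a', hadd _ ha _ ha', b + b', hadd _ hb _ hb', by abel⟩
  | smul s x _ hx =>
    obtain ⟨a, ha, b, hb, rfl⟩ := hx
    rcases le_total 0 s with hs | hs
    · exact ⟨s • a, hsmul _ ha _ hs, s • b, hsmul _ hb _ hs, smul_sub _ _ _⟩
    · refine ⟨(-s) • b, hsmul _ hb _ (by linarith), (-s) • a, hsmul _ ha _ (by linarith), ?_⟩
      rw [smul_sub, neg_smul, neg_smul]; abel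

/-- Moving along the cone to reach an integral point. -/
lemma ipc_round {n k : ℕ} (hkn : k ≤ n) (F : Set (Fin n → ℝ)) (h0 : (0 : Fin n → ℝ) ∈ F)
    (hadd : ∀ a ∈ F, ∀ b ∈ F, a + b ∈ F) (hsmul : ∀ a ∈ F, ∀ s : ℝ, 0 ≤ s → s • a ∈ F)
    (hk : k = n - Module.finrank ℝ (Submodule.span ℝ F))
    (w : Fin n → Fin n → ℤ)
    (hwbasis : ∀ v : Fin n → ℤ, ∃! lam : Fin n → ℤ, v = ∑ i, lam i • w i)
    (hw : ∀ i : Fin k, ∀ r ∈ F, ∑ l, (w (Fin.castLE hkn i) l : ℝ) * r l = 0)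
    (x : Fin n → ℝ)
    (hx : ∀ i : Fin k, ∃ z : ℤ, ∑ l, (w (Fin.castLE hkn i) l : ℝ) * x l = z) :
    ∃ s ∈ F, ∀ i, ∃ z : ℤ, (x + s) i = (z : ℝ) := by
  classical
  have hB : ∀ l : Fin n, ∃ lam : Fin n → ℤ, (Pi.single l 1 : Fin n → ℤ) = ∑ i, lam i • w i :=
    fun l => (hwbasis _).exists
  choose B hB using hB
  let Wz : Matrix (Fin n) (Fin n) ℤ := Matrix.of w
  let Bz : Matrix (Fin n) (Fin n) ℤ := Matrix.of B
  have hBWz : Bz * Wz = 1 := by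
    ext l m
    have := congrFun (hB l) m
    simp only [Finset.sum_apply, Pi.smul_apply, smul_eq_mul] at this
    rw [Matrix.mul_apply]
    simp only [Bz, Wz, Matrix.of_apply]
    rw [← this, Matrix.one_apply, Pi.single_apply]
    simp [eq_comm]
  let W : Matrix (Fin n) (Fin n) ℝ := Wz.map (Int.castRingHom ℝ)
  let C : Matrix (Fin n) (Fin n) ℝ := Bz.map (Int.castRingHom ℝ)
  have hCW : C * W = 1 := by
    simp only [C, W]
    rw [← Matrix.map_mul, hBWz]; simp
  have hWC : W * C = 1 := mul_eq_one_comm.1 hCW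
  have hWv : ∀ (i : Fin n) (v : Fin n → ℝ), W.mulVec v i = ∑ l, (w i l : ℝ) * v l := by
    intro i v; rfl
  -- the kernel
  let T : (Fin n → ℝ) →ₗ[ℝ] (Fin k → ℝ) :=
    (LinearMap.funLeft ℝ ℝ (Fin.castLE hkn)).comp W.mulVecLin
  have hT : Function.Surjective T := by
    refine Function.Surjective.comp (g := LinearMap.funLeft ℝ ℝ (Fin.castLE hkn))
      (f := W.mulVecLin) ?_ ?_
    · exact LinearMap.funLeft_surjective_of_injective ℝ ℝ _ (Fin.castLE_injective hkn)
    · intro y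
      refine ⟨C.mulVec y, ?_⟩
      simp [Matrix.mulVec_mulVec, hWC]
  have hker : Module.finrank ℝ (LinearMap.ker T) = n - k := by
    have h1 := LinearMap.finrank_range_add_finrank_ker T
    rw [LinearMap.range_eq_top.2 hT, finrank_top] at h1
    simp only [Module.finrank_fintype_fun_eq_card, Fintype.card_fin] at h1
    omega
  have hle : Submodule.span ℝ F ≤ LinearMap.ker T := by
    rw [Submodule.span_le]
    intro r hr
    rw [SetLike.mem_coe, LinearMap.mem_ker]
    ext i
    exact hw i r hr
  have hfr : Module.finrank ℝ (Submodule.span ℝ F) = n - k := by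
    have h2 := Submodule.finrank_le (Submodule.span ℝ F)
    simp only [Module.finrank_fintype_fun_eq_card, Fintype.card_fin] at h2
    omega
  have hspan : Submodule.span ℝ F = LinearMap.ker T :=
    Submodule.eq_of_le_of_finrank_eq hle (by rw [hfr, hker])
  -- dual basis vectors
  have hCol : ∀ i j : Fin n, W.mulVec (fun l => C l i) j = if j = i then 1 else 0 := by
    intro i j
    have := congrFun (congrFun hWC j) i
    rw [Matrix.mul_apply, Matrix.one_apply] at this
    exact this
  have hab : ∀ i : Fin n, ∃ a ∈ F, ∃ b ∈ F, k ≤ (i : ℕ) → (fun l => C l i) = a - b := by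
    intro i
    by_cases hi : k ≤ (i : ℕ)
    · have hm : (fun l => C l i) ∈ Submodule.span ℝ F := by
        rw [hspan, LinearMap.mem_ker]
        ext j
        have := hCol i (Fin.castLE hkn j)
        rw [if_neg] at this
        · exact this
        · intro h
          have := congrArg Fin.val h
          simp at this
          omega
      obtain ⟨a, ha, b, hb, h⟩ := ipc_span_diff F h0 hadd hsmul _ hm
      exact ⟨a, ha, b, hb, fun _ => h⟩
    · exact ⟨0, h0, 0, h0, fun h => absurd h hi⟩
  choose a ha b hb hab using hab
  have hsum : ∀ (f : Fin n → Fin n → ℝ), (∀ i, f i ∈ F) → ∑ i, f i ∈ F := by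
    intro f hf
    refine Finset.sum_induction f (· ∈ F) (fun a b ha hb => hadd a ha b hb) h0 (fun i _ => hf i)
  let s0 := ∑ i, b i
  let θ : Fin n → ℝ := fun i =>
    if k ≤ (i : ℕ) then (⌈W.mulVec (x + s0) i⌉ : ℝ) - W.mulVec (x + s0) i else 0
  have hθ0 : ∀ i, 0 ≤ θ i := by
    intro i
    simp only [θ]
    split_ifs
    · linarith [Int.le_ceil (W.mulVec (x + s0) i)]
    · exact le_rfl
  have hθ1 : ∀ i, θ i ≤ 1 := by
    intro i
    simp only [θ]
    split_ifs
    · linarith [Int.ceil_lt_add_one (W.mulVec (x + s0) i)]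
    · norm_num
  let s := ∑ i, (θ i • a i + (1 - θ i) • b i)
  have hs : s ∈ F := hsum _ fun i =>
    hadd _ (hsmul _ (ha i) _ (hθ0 i)) _ (hsmul _ (hb i) _ (by linarith [hθ1 i]))
  have hseq : x + s = (x + s0) + C.mulVec θ := by
    rw [add_assoc]
    congr 1
    have : C.mulVec θ = ∑ i, θ i • (a i - b i) := by
      ext l
      simp only [Matrix.mulVec, dotProduct, Finset.sum_apply]
      refine Finset.sum_congr rfl fun i _ => ?_
      by_cases hi : k ≤ (i : ℕ)
      · rw [← hab i hi]; simp [mul_comm]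
      · simp [θ, hi]
    rw [this]
    simp only [s, s0]
    rw [← Finset.sum_add_distrib]
    refine Finset.sum_congr rfl fun i _ => ?_
    module
  have hWint : ∀ i, ∃ z : ℤ, W.mulVec (x + s) i = z := by
    intro i
    by_cases hi : k ≤ (i : ℕ)
    · refine ⟨⌈W.mulVec (x + s0) i⌉, ?_⟩
      rw [hseq, Matrix.mulVec_add, Matrix.mulVec_mulVec, hWC, Matrix.one_mulVec, Pi.add_apply]
      simp [θ, hi]
    · obtain ⟨z, hz⟩ := hx ⟨i, by omega⟩
      refine ⟨z, ?_⟩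
      have h2 := hw ⟨i, by omega⟩ s hs
      rw [Matrix.mulVec_add, Pi.add_apply, hWv, hWv]
      have hii : Fin.castLE hkn ⟨(i : ℕ), by omega⟩ = i := rfl
      rw [hii] at hz h2
      rw [hz, h2, add_zero]
  choose z hz using hWint
  refine ⟨s, hs, fun l => ⟨∑ i, B l i * z i, ?_⟩⟩
  have : x + s = C.mulVec (W.mulVec (x + s)) := by
    rw [Matrix.mulVec_mulVec, hCW, Matrix.one_mulVec]
  rw [this]
  push_cast
  simp only [Matrix.mulVec, dotProduct] at hz ⊢
  refine Finset.sum_congr rfl fun i _ => ?_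
  rw [hz i]
  rfl

/-- The key linear inequality. -/
lemma ipc_key {n : ℕ} (D : Finset (Fin n → ℤ)) (P0 : Set (Fin n → ℝ))
    (e f v : Fin n → ℤ) (he : e ∈ D) (M : ℤ) (hM0 : 0 ≤ M)
    (hf : f = (2 * M + 1) • e + v) (γe γf : ℤ)
    (hγe : ∀ y ∈ P0, ∑ i, (e i : ℝ) * y i ≤ γe)
    (hγf : ∀ y ∈ P0, ∑ i, (f i : ℝ) * y i ≤ γf)
    (hv : ∀ y ∈ P0, ∑ i, (v i : ℝ) * y i ≤ M)
    (hz : (2 * M + 1) * γe - M ≤ γf)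
    (x : Fin n → ℝ) (hx : x ∈ splitClosureD D P0) :
    ∑ i, (f i : ℝ) * x i - ∑ i, (e i : ℝ) * x i ≤ γf - γe := by
  have hx' := Set.mem_iInter₂.1 hx e he
  have hlin : IsLinearMap ℝ
      (fun y : Fin n → ℝ => ∑ i, (f i : ℝ) * y i - ∑ i, (e i : ℝ) * y i) := by
    refine ⟨fun y z => ?_, fun s y => ?_⟩
    · simp only [Pi.add_apply, mul_add, Finset.sum_add_distrib]; ring
    · simp only [Pi.smul_apply, smul_eq_mul, mul_sub, Finset.mul_sum]
      congr 1 <;> exact Finset.sum_congr rfl fun i _ => by ring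
  have hconv := convex_halfSpace_le hlin ((γf : ℝ) - γe)
  refine convexHull_min ?_ hconv hx'
  rintro y ⟨hy, m, hm⟩
  simp only [Set.mem_setOf_eq]
  have h1 := hγe y hy
  have h2 := hγf y hy
  have h3 := hv y hy
  have h4 : ∑ i, (f i : ℝ) * y i
      = (2 * M + 1) * ∑ i, (e i : ℝ) * y i + ∑ i, (v i : ℝ) * y i := by
    rw [Finset.mul_sum, ← Finset.sum_add_distrib]
    refine Finset.sum_congr rfl fun j _ => ?_
    rw [hf]
    simp only [Pi.add_apply, Pi.smul_apply, smul_eq_mul]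
    push_cast
    ring
  rw [hm] at h1 h4 ⊢
  have hmγ : m ≤ γe := by exact_mod_cast h1
  rcases hmγ.eq_or_lt with h | h
  · subst h; linarith
  · have h5 : (2 * M + 1) * m + M - m ≤ γf - γe := by nlinarith
    have h6 : ((2 * M + 1) * m + M - m : ℝ) ≤ γf - γe := by exact_mod_cast h5
    linarith

/-- Claim 4 of the paper: under the setup, `Q` contains an integral point `x` with
`c·x = γ_{d₀}`; consequently `γ_{d₀} ≤ max {c·y : y ∈ conv(Q ∩ ℤⁿ)}`. -/
theorem integral_point_claim
    {n k : ℕ} (hkn : k ≤ n)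
    (Q : Set (Fin n → ℝ)) (hQ : IsRationalPolyhedron Q) (hQne : Q.Nonempty)
    (c : Fin n → ℤ) (α : ℝ)
    (hcrec : ∀ r ∈ recCone Q, ∑ i, (c i : ℝ) * r i ≤ 0)
    (hα : {x ∈ Q | α ≤ ∑ i, (c i : ℝ) * x i}.Nonempty)
    (hFne : {r ∈ recCone Q | ∑ i, (c i : ℝ) * r i = 0}.Nonempty)
    (hk : k = n - Module.finrank ℝ
      (Submodule.span ℝ {r ∈ recCone Q | ∑ i, (c i : ℝ) * r i = 0}))
    (g : Fin k → Fin n → ℝ) (hgind : LinearIndependent ℝ g)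
    (hgrec : ∀ j, ∀ r ∈ recCone Q, ∑ i, g j i * r i ≤ 0)
    (hF : {r ∈ recCone Q | ∑ i, (c i : ℝ) * r i = 0} =
          {r ∈ recCone Q | ∀ j, ∑ i, g j i * r i = 0})
    (w : Fin n → Fin n → ℤ)
    (hwbasis : ∀ v : Fin n → ℤ, ∃! lam : Fin n → ℤ, v = ∑ i, lam i • w i)
    (hwcone : ∀ i : Fin k, ∃ lam : Fin k → ℝ, (∀ j, 0 ≤ lam j) ∧
        (fun l => (w (Fin.castLE hkn i) l : ℝ)) = ∑ j, lam j • g j)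
    (μ ν : Fin k → ℝ)
    (hμ : ∀ i, IsLeast ((fun x => ∑ l, (w (Fin.castLE hkn i) l : ℝ) * x l) ''
            {x ∈ Q | α ≤ ∑ i, (c i : ℝ) * x i}) (μ i))
    (hν : ∀ i, IsGreatest ((fun x => ∑ l, (w (Fin.castLE hkn i) l : ℝ) * x l) '' Q) (ν i))
    (M : Fin k → ℤ) (hM : ∀ i, (M i : ℝ) = max 0 (max (⌈-μ i⌉ : ℝ) (⌈ν i⌉ : ℝ)))
    (d : Fin (k + 1) → Fin n → ℤ)
    (hd0 : d 0 = c)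
    (hdi : ∀ i : Fin k, d i.succ = (2 * M i + 1) • d i.castSucc + w (Fin.castLE hkn i))
    (D : Finset (Fin n → ℤ)) (hD : D = Finset.image d Finset.univ)
    (hne : ∀ t : ℕ, ((splitClosureD D)^[t] Q).Nonempty)
    (u : ℕ → (Fin n → ℤ) → ℝ)
    (hu : ∀ t : ℕ, ∀ e ∈ D,
      IsGreatest ((fun x => ∑ i, (e i : ℝ) * x i) '' (splitClosureD D)^[t] Q) (u t e))
    (tD : ℕ) (γ : Fin (k + 1) → ℤ)
    (hγ : ∀ i : Fin (k + 1), ∀ t ≥ tD, u t (d i) = (γ i : ℝ))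
    (hγ0 : α ≤ (γ 0 : ℝ)) :
    (∃ x ∈ Q, (∀ i, ∃ z : ℤ, x i = (z : ℝ)) ∧ ∑ i, (c i : ℝ) * x i = (γ 0 : ℝ)) ∧
      ∃ y ∈ integerHull Q, (γ 0 : ℝ) ≤ ∑ i, (c i : ℝ) * y i := by
  have hQc : Convex ℝ Q := ipc_poly_convex Q hQ
  have hdD : ∀ i, d i ∈ D := fun i => by rw [hD]; exact Finset.mem_image_of_mem _ (Finset.mem_univ _)
  have hDne : D.Nonempty := ⟨_, hdD 0⟩
  have hPQ := ipc_iter_subset D Q hQc hDne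
  have hub : ∀ i, ∀ t ≥ tD, ∀ y ∈ (splitClosureD D)^[t] Q, ∑ l, (d i l : ℝ) * y l ≤ γ i := by
    intro i t ht y hy
    rw [← hγ i t ht]
    exact (hu t _ (hdD i)).2 ⟨y, hy, rfl⟩
  have hmax : ∀ i, ∃ y ∈ (splitClosureD D)^[tD + 1] Q, ∑ l, (d i l : ℝ) * y l = γ i := by
    intro i
    obtain ⟨y, hy, hy'⟩ := (hu (tD + 1) _ (hdD i)).1
    exact ⟨y, hy, hy'.trans (hγ i _ (by omega))⟩
  have hM0 : ∀ i, 0 ≤ M i := by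
    intro i
    have : (0 : ℝ) ≤ M i := by rw [hM i]; exact le_max_left _ _
    exact_mod_cast this
  have hMμ : ∀ i, -(M i : ℝ) ≤ μ i := by
    intro i
    have h1 : (⌈-μ i⌉ : ℝ) ≤ M i := by
      rw [hM i]; exact (le_max_left _ _).trans (le_max_right _ _)
    linarith [Int.le_ceil (-μ i)]
  have hMν : ∀ i, ν i ≤ (M i : ℝ) := by
    intro i
    have h1 : (⌈ν i⌉ : ℝ) ≤ M i := by
      rw [hM i]; exact (le_max_right _ _).trans (le_max_right _ _)
    linarith [Int.le_ceil (ν i)]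
  have hdot : ∀ (i : Fin k) (y : Fin n → ℝ), ∑ l, (d i.succ l : ℝ) * y l
      = (2 * M i + 1) * ∑ l, (d i.castSucc l : ℝ) * y l
        + ∑ l, (w (Fin.castLE hkn i) l : ℝ) * y l := by
    intro i y
    rw [Finset.mul_sum, ← Finset.sum_add_distrib]
    refine Finset.sum_congr rfl fun j _ => ?_
    rw [hdi]
    simp only [Pi.add_apply, Pi.smul_apply, smul_eq_mul]
    push_cast
    ring
  -- main induction
  have main : ∀ i : Fin (k + 1), ∀ x ∈ (splitClosureD D)^[tD + 1] Q,
      ∑ l, (d i l : ℝ) * x l = γ i → ∀ j ≤ i, ∑ l, (d j l : ℝ) * x l = γ j := by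
    intro i
    induction i using Fin.induction with
    | zero =>
      intro x _ h j hj
      have : j = 0 := le_antisymm hj (Fin.zero_le j)
      rw [this]; exact h
    | succ i ih =>
      intro x hx h
      obtain ⟨z, hzP, hz⟩ := hmax i.castSucc
      have hz0 := ih z hzP hz 0 (Fin.zero_le _)
      rw [hd0] at hz0
      have hzw : μ i ≤ ∑ l, (w (Fin.castLE hkn i) l : ℝ) * z l :=
        (hμ i).2 ⟨z, ⟨hPQ _ hzP, by rw [hz0]; exact hγ0⟩, rfl⟩
      have hzs := hub i.succ (tD + 1) (by omega) z hzP
      rw [hdot, hz] at hzs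
      have hzineq : (2 * M i + 1) * γ i.castSucc - M i ≤ γ i.succ := by
        have h7 := hMμ i
        have : ((2 * M i + 1) * γ i.castSucc - M i : ℝ) ≤ γ i.succ := by linarith
        exact_mod_cast this
      have hx' : x ∈ splitClosureD D ((splitClosureD D)^[tD] Q) := by
        rwa [Function.iterate_succ_apply'] at hx
      have hkey := ipc_key D _ (d i.castSucc) (d i.succ) (w (Fin.castLE hkn i)) (hdD _) (M i)
        (hM0 i) (hdi i) (γ i.castSucc) (γ i.succ) (hub _ tD le_rfl) (hub _ tD le_rfl)
        (fun y hy => ((hν i).2 ⟨y, hPQ _ hy, rfl⟩).trans (hMν i)) hzineq x hx'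
      have hxc : ∑ l, (d i.castSucc l : ℝ) * x l = γ i.castSucc :=
        le_antisymm (hub _ (tD + 1) (by omega) x hx) (by linarith)
      intro j hj
      rcases hj.eq_or_lt with hj | hj
      · rw [hj]; exact h
      · exact ih x hx hxc j (Fin.le_castSucc_iff.2 hj)
  obtain ⟨x, hxP, hx⟩ := hmax (Fin.last k)
  have hall : ∀ j, ∑ l, (d j l : ℝ) * x l = γ j := fun j => main _ x hxP hx j (Fin.le_last j)
  have hc := hall 0
  rw [hd0] at hc
  have hF0 : (0 : Fin n → ℝ) ∈ {r ∈ recCone Q | ∑ i, (c i : ℝ) * r i = 0} := by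
    refine ⟨fun y hy t _ => by simpa using hy, by simp⟩
  obtain ⟨s, hs, hint⟩ := ipc_round hkn {r ∈ recCone Q | ∑ i, (c i : ℝ) * r i = 0} hF0
    (by
      rintro a ⟨ha, ha'⟩ b ⟨hb, hb'⟩
      refine ⟨ipc_rec_add ha hb, ?_⟩
      simp only [Pi.add_apply, mul_add, Finset.sum_add_distrib]
      rw [ha', hb', add_zero])
    (by
      rintro a ⟨ha, ha'⟩ t ht
      refine ⟨ipc_rec_smul ha ht, ?_⟩
      have : ∑ i, (c i : ℝ) * (t • a) i = t * ∑ i, (c i : ℝ) * a i := by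
        rw [Finset.mul_sum]
        refine Finset.sum_congr rfl fun i _ => ?_
        simp only [Pi.smul_apply, smul_eq_mul]; ring
      rw [this, ha', mul_zero])
    hk w hwbasis
    (by
      intro i r hr
      rw [hF] at hr
      obtain ⟨lam, _, hlam⟩ := hwcone i
      have h1 : ∀ l, (w (Fin.castLE hkn i) l : ℝ) = ∑ j, lam j * g j l := by
        intro l
        have := congrFun hlam l
        simpa [Finset.sum_apply] using this
      simp only [h1, Finset.sum_mul]
      rw [Finset.sum_comm]
      refine Finset.sum_eq_zero fun j _ => ?_
      have := hr.2 j
      calc _ = lam j * ∑ l, g j l * r l := by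
            rw [Finset.mul_sum]
            exact Finset.sum_congr rfl fun l _ => by ring
        _ = 0 := by rw [this, mul_zero])
    x
    (by
      intro i
      refine ⟨γ i.succ - (2 * M i + 1) * γ i.castSucc, ?_⟩
      have := hdot i x
      rw [hall, hall] at this
      push_cast
      linarith)
  have hxs : x + s ∈ Q := by
    have := hs.1 x (hPQ _ hxP) 1 zero_le_one
    rwa [one_smul] at this
  have hcs : ∑ i, (c i : ℝ) * (x + s) i = γ 0 := by
    simp only [Pi.add_apply, mul_add, Finset.sum_add_distrib]
    rw [hc, hs.2, add_zero]
  exact ⟨⟨x + s, hxs, hint, hcs⟩, x + s, subset_convexHull ℝ _ ⟨hxs, hint⟩, hcs.ge⟩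
end
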